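/- arXiv:math/0010259 — 3 statements merged into one kernel-verified Lean document; each statement's English description precedes it below -/
import Mathlib

section
/- (Corollary 4) For every λ ∈ ℂ and every p ≥ 1 with (λ, p) ≠ (1/2, 1), the bilinear map C^λ_p : A × A → A is not bidifferential. -/
open MvPolynomial

/-- The polynomial symbol algebra `A = ℂ[u₁,…,uₙ,ξ₁,…,ξₙ]`: variables `Sum.inl i` are the
`uᵢ` and variables `Sum.inr i` are the `ξᵢ`. -/
abbrev PolA (n : ℕ) := MvPolynomial (Fin n ⊕ Fin n) ℂ

namespace LO

/-- ξ-degree of a monomial exponent. -/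
def xiDeg {n : ℕ} (d : (Fin n ⊕ Fin n) →₀ ℕ) : ℕ :=
  ∑ i : Fin n, d (Sum.inr i)

/-- `c(E)`: the operator multiplying the ξ-degree-`m` component by `c m`. -/
noncomputable def cE {n : ℕ} (c : ℕ → ℂ) (φ : PolA n) : PolA n :=
  ∑ d ∈ φ.support, monomial d (c (xiDeg d) * coeff d φ)

/-- `D = Σᵢ ∂²/∂uᵢ∂ξᵢ`. -/
noncomputable def Dop {n : ℕ} (φ : PolA n) : PolA n :=
  ∑ i : Fin n, pderiv (Sum.inl i) (pderiv (Sum.inr i) φ)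

/-- The scalar `h^λ_d(m)`. -/
noncomputable def hScal (n : ℕ) (lam : ℂ) (d m : ℕ) : ℂ :=
  (d.factorial : ℂ)⁻¹ *
    ∏ j ∈ Finset.range d,
      ((m : ℂ) + (j : ℂ) + lam * ((n : ℂ) + 1)) /
        (2 * (m : ℂ) + (j : ℂ) + (n : ℂ) + (d : ℂ))

/-- The scalar `g^λ_d(m)`. -/
noncomputable def gScal (n : ℕ) (lam : ℂ) (d m : ℕ) : ℂ :=
  (d.factorial : ℂ)⁻¹ *
    ∏ j ∈ Finset.range d,
      (-(m : ℂ) - (j : ℂ) - lam * ((n : ℂ) + 1)) /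
        (2 * (m : ℂ) + (j : ℂ) + (n : ℂ) + 1)

/-- `bh^λ_d = h^λ_d(E) ∘ D^d` (equal to the identity for `d = 0`). -/
noncomputable def bh {n : ℕ} (lam : ℂ) (d : ℕ) (φ : PolA n) : PolA n :=
  cE (hScal n lam d) (Dop^[d] φ)

/-- `bg^λ_d = g^λ_d(E) ∘ D^d` (equal to the identity for `d = 0`). -/
noncomputable def bg {n : ℕ} (lam : ℂ) (d : ℕ) (φ : PolA n) : PolA n :=
  cE (gScal n lam d) (Dop^[d] φ)

/-- `N_k(φ,ψ) = (1/k!) Σ_{α ∈ {1,…,n}^k} ∂^kφ/∂ξ_α · ∂^kψ/∂u_α`. -/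
noncomputable def Nop {n : ℕ} (k : ℕ) (φ ψ : PolA n) : PolA n :=
  (k.factorial : ℂ)⁻¹ •
    ∑ α : Fin k → Fin n,
      ((List.ofFn α).foldr (fun i acc => pderiv (Sum.inr i) acc) φ) *
      ((List.ofFn α).foldr (fun i acc => pderiv (Sum.inl i) acc) ψ)

/-- The coefficient `C^λ_p` of the Lecomte–Ovsienko star product. -/
noncomputable def C (n : ℕ) (lam : ℂ) (p : ℕ) (φ ψ : PolA n) : PolA n :=
  ∑ i ∈ Finset.range (p + 1), ∑ j ∈ Finset.range (p + 1),
    ∑ k ∈ Finset.range (p + 1), ∑ m ∈ Finset.range (p + 1),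
      if i + j + k + m = p then bg lam m (Nop k (bh lam i φ) (bh lam j ψ)) else 0

/-- The Poisson bracket `{φ,ψ}`. -/
noncomputable def pb {n : ℕ} (φ ψ : PolA n) : PolA n :=
  ∑ i : Fin n,
    (pderiv (Sum.inr i) φ * pderiv (Sum.inl i) ψ
      - pderiv (Sum.inl i) φ * pderiv (Sum.inr i) ψ)

/-- `φ ∈ A^m` (ξ-homogeneous of degree `m`; for `m < 0` this forces `φ = 0`). -/
def IsXiHomog {n : ℕ} (m : ℤ) (φ : PolA n) : Prop :=
  ∀ d ∈ φ.support, (xiDeg d : ℤ) = m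

/-- The set of spanning momentum functions of the projective `sl_{n+1}(ℝ)`-action. -/
noncomputable def momSet (n : ℕ) : Set (PolA n) :=
  (Set.range fun i : Fin n => (X (Sum.inr i) : PolA n)) ∪
  (Set.range fun ij : Fin n × Fin n =>
    (X (Sum.inl ij.1) * X (Sum.inr ij.2) : PolA n)) ∪
  (Set.range fun i : Fin n =>
    (X (Sum.inl i) * ∑ k : Fin n, X (Sum.inl k) * X (Sum.inr k) : PolA n))

/-- The span `M` of the momentum functions. -/
noncomputable def momSpan (n : ℕ) : Submodule ℂ (PolA n) := Submodule.span ℂ (momSet n)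

/-- The Weyl algebra `W` of differential operators with polynomial coefficients,
as a subalgebra of `End_ℂ(A)`. -/
noncomputable def Weyl (n : ℕ) : Subalgebra ℂ (Module.End ℂ (PolA n)) :=
  Algebra.adjoin ℂ
    ((Set.range fun i : Fin n =>
        (LinearMap.mulLeft ℂ (X (Sum.inl i)) : Module.End ℂ (PolA n))) ∪
     (Set.range fun i : Fin n =>
        (LinearMap.mulLeft ℂ (X (Sum.inr i)) : Module.End ℂ (PolA n))) ∪
     (Set.range fun v : Fin n ⊕ Fin n =>
        ((pderiv v).toLinearMap : Module.End ℂ (PolA n))))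

/-- A bilinear map `B : A × A → A` is bidifferential if it is a finite sum
`B(φ,ψ) = Σ_α A_α(φ)·B_α(ψ)` with `A_α, B_α` in the Weyl algebra. -/
def Bidiff (n : ℕ) (B : PolA n → PolA n → PolA n) : Prop :=
  ∃ (N : ℕ) (Aop Bop : Fin N → Weyl n),
    ∀ φ ψ : PolA n,
      B φ ψ = ∑ α : Fin N,
        (Aop α : Module.End ℂ (PolA n)) φ * (Bop α : Module.End ℂ (PolA n)) ψ

/-- The scalar by which `T_p = ∏_{i=1}^{⌊p/2⌋}(E'+i)` acts on `A^m`. -/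
noncomputable def TScal (n p m : ℕ) : ℂ :=
  ∏ i ∈ Finset.Icc 1 (p / 2), ((m : ℂ) + (n : ℂ) / 2 + (i : ℂ))

/-- The scalar by which `S_p = ∏_{i=1}^{⌊p/2⌋}(E'−i)` acts on `A^m`. -/
noncomputable def SScal (n p m : ℕ) : ℂ :=
  ∏ i ∈ Finset.Icc 1 (p / 2), ((m : ℂ) + (n : ℂ) / 2 - (i : ℂ))

/-- The operator `T_p`. -/
noncomputable def Tp (n p : ℕ) : PolA n → PolA n := cE (TScal n p)

/-- The operator `S_p`. -/
noncomputable def Sp (n p : ℕ) : PolA n → PolA n := cE (SScal n p)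

/-- The fiberwise Euler operator `E = Σ ξᵢ ∂/∂ξᵢ` as an endomorphism. -/
noncomputable def Elin (n : ℕ) : Module.End ℂ (PolA n) :=
  ∑ i : Fin n,
    (LinearMap.mulLeft ℂ (X (Sum.inr i)) : Module.End ℂ (PolA n)) ∘ₗ
      (pderiv (Sum.inr i)).toLinearMap

/-- `E' = E + n/2` as an endomorphism. -/
noncomputable def E'lin (n : ℕ) : Module.End ℂ (PolA n) :=
  Elin n + ((n : ℂ) / 2) • 1

/-- `D` as an endomorphism. -/
noncomputable def Dlin (n : ℕ) : Module.End ℂ (PolA n) :=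
  ∑ i : Fin n,
    ((pderiv (Sum.inl i)).toLinearMap : Module.End ℂ (PolA n)) ∘ₗ
      (pderiv (Sum.inr i)).toLinearMap

/-- `L^{(m)} = −(1/16)(ξ_m∘D − 2E'∘∂/∂u_m)∘D`. -/
noncomputable def Lop (n : ℕ) (m : Fin n) : Module.End ℂ (PolA n) :=
  (-(1 / 16 : ℂ)) •
    (((LinearMap.mulLeft ℂ (X (Sum.inr m)) : Module.End ℂ (PolA n)) ∘ₗ Dlin n
        - (2 : ℂ) • (E'lin n ∘ₗ (pderiv (Sum.inl m)).toLinearMap)) ∘ₗ Dlin n)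

end LO

/-!
Test a bidifferential `C^λ_p` on `(ξ^(s+p), u^p)`, where `u` and `ξ` are conjugate variables.
Since `D` kills both arguments, the value is `(s+p)⋯(s+1) K(s) ξ^s`, where `K(s)` is a sum which
the Chu–Vandermonde identity evaluates, with `μ = λ(n+1)`, to
`K(s) = ∏_{r<p} (s + n + 1 - μ + r) / (2s + n + 1 + r)`.
On the other hand a differential operator with polynomial coefficients sends `ξ^b` to
`∑ₖ b(b-1)⋯(b-k+1) aₖ ξ^(b-k)`, which forces `K` to be a polynomial in `s`. So the zeros
`-(n + 1 + r)/2` of the denominator are zeros of the numerator. These are spaced by `1/2` and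
those of the numerator by `1`, hence `p = 1`; then the two zeros coincide, which is `λ = 1/2`.
-/

section Pochhammer

open Finset

open scoped Polynomial

theorem descPochhammer_eval_add {R : Type*} [CommRing R] (x y : R) (p : ℕ) :
    (descPochhammer R p).eval (x + y) = ∑ km ∈ antidiagonal p,
      (p.choose km.1 : R) * ((descPochhammer R km.1).eval x * (descPochhammer R km.2).eval y) := by
  have eval_eq_smeval (k : ℕ) (z : R) :
      (descPochhammer R k).eval z = (descPochhammer ℤ k).smeval z := by
    rw [← descPochhammer_map (algebraMap ℤ R), Polynomial.eval_map_algebraMap,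
      Polynomial.aeval_eq_smeval]
  simp only [eval_eq_smeval]
  exact Ring.descPochhammer_smeval_add p (Commute.all x y)

theorem ascPochhammer_eval_eq_descPochhammer_eval {R : Type*} [CommRing R] (x : R) (k : ℕ) :
    (ascPochhammer R k).eval x = (descPochhammer R k).eval (x + k - 1) := by
  rw [descPochhammer_eval_eq_ascPochhammer]
  ring_nf

theorem ascPochhammer_eval_mul_descPochhammer_eval {R : Type*} [CommRing R] (x : R) (m k : ℕ) :
    (ascPochhammer R m).eval x * (descPochhammer R k).eval (x + (m + k : ℕ) - 1) =
      (ascPochhammer R (m + k)).eval x := by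
  rw [← ascPochhammer_mul, Polynomial.eval_mul, Polynomial.eval_comp,
    ascPochhammer_eval_eq_descPochhammer_eval _ k]
  simp [add_assoc]

theorem eq_one_and_eq_of_polynomial_mul_ascPochhammer_eval {K : Type*} [Field K] [CharZero K]
    {p : ℕ} (hp : 1 ≤ p) {c d : K} {P : K[X]}
    (hP : ∀ s : ℕ, P.eval (s : K) * (ascPochhammer K p).eval (2 * (s : K) + c) =
      (ascPochhammer K p).eval (s + d)) :
    p = 1 ∧ 2 * d = c := by
  have comp_eq_comp : P * (ascPochhammer K p).comp (2 * Polynomial.X + Polynomial.C c) =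
      (ascPochhammer K p).comp (Polynomial.X + Polynomial.C d) :=
    Polynomial.eq_of_infinite_eval_eq _ _ <|
      (Set.infinite_range_of_injective Nat.cast_injective).mono <| by
        rintro _ ⟨s, rfl⟩
        simpa using hP s
  have exists_root (r : ℕ) (hr : r < p) : ∃ k < p, 2 * d + 2 * (k : K) = c + r := by
    have hzero := congrArg (Polynomial.eval (-(c + r) / 2)) comp_eq_comp
    have hx : 2 * (-(c + r) / 2) + c = -(r : K) := by ring
    simp only [Polynomial.eval_mul, Polynomial.eval_comp, Polynomial.eval_add,
      Polynomial.eval_ofNat, Polynomial.eval_X, Polynomial.eval_C, hx,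
      ascPochhammer_eval_neg_coe_nat_of_lt hr, mul_zero] at hzero
    obtain ⟨k, hk, hkr⟩ := (ascPochhammer_eval_eq_zero_iff _ _).mp hzero.symm
    exact ⟨k, hk, by linear_combination 2 * hkr⟩
  obtain ⟨k₀, hk₀, h₀⟩ := exists_root 0 hp
  obtain rfl : p = 1 := by
    by_contra hp1
    obtain ⟨k₁, -, h₁⟩ := exists_root 1 (by omega)
    have hodd : ((2 * k₁ : ℕ) : K) = (2 * k₀ + 1 : ℕ) := by
      push_cast at h₀ h₁ ⊢
      linear_combination h₁ - h₀
    have := Nat.cast_injective hodd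
    omega
  obtain rfl : k₀ = 0 := by omega
  exact ⟨rfl, by simpa using h₀⟩

end Pochhammer

section IteratedDerivatives

variable {σ R : Type*} [CommSemiring R]

theorem iterate_pderiv_monomial_single (v : σ) (k b : ℕ) (r : R) :
    (pderiv v)^[k] (monomial (Finsupp.single v b) r) =
      monomial (Finsupp.single v (b - k)) (r * b.descFactorial k) := by
  induction k with
  | zero => simp
  | succ k ih =>
    rw [Function.iterate_succ_apply', ih, pderiv_monomial_single, Nat.sub_sub,
      Nat.descFactorial_succ]
    push_cast
    ring_nf

theorem pderiv_monomial_single_of_ne {v w : σ} (h : w ≠ v) (b : ℕ) (r : R) :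
    pderiv w (monomial (Finsupp.single v b) r) = 0 := by
  rw [pderiv_monomial, Finsupp.single_eq_of_ne h, Nat.cast_zero, mul_zero, monomial_zero]

theorem foldr_pderiv_zero {ι : Type*} (g : ι → σ) (l : List ι) :
    l.foldr (fun i acc => pderiv (g i) acc) (0 : MvPolynomial σ R) = 0 :=
  List.foldr_fixed' (fun _ => map_zero _) l

theorem foldr_pderiv_monomial_single {ι : Type*} {g : ι → σ} (hg : g.Injective) [DecidableEq ι]
    (z : ι) (l : List ι) (b : ℕ) (r : R) :
    l.foldr (fun i acc => pderiv (g i) acc) (monomial (Finsupp.single (g z) b) r) =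
      if ∀ i ∈ l, i = z then
        monomial (Finsupp.single (g z) (b - l.length)) (r * b.descFactorial l.length)
      else 0 := by
  induction l with
  | nil => simp
  | cons i l ih =>
    rw [List.foldr_cons, ih]
    by_cases hi : i = z
    · subst hi
      simp only [List.forall_mem_cons, true_and, List.length_cons]
      split_ifs
      · rw [← iterate_pderiv_monomial_single, ← Function.iterate_succ_apply' (pderiv (g i)),
          iterate_pderiv_monomial_single]
      · exact map_zero _
    · rw [if_neg (c := ∀ j ∈ i :: l, j = z) fun h => hi (h i List.mem_cons_self)]
      split_ifs
      · exact pderiv_monomial_single_of_ne (hg.ne hi) _ _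
      · exact map_zero _

/-- The sequences `b ↦ ∑ₖ aₖ ∂ᵥᵏ(xᵥᵇ)` with finitely many nonzero polynomials `aₖ`, that is, the
possible effects of a differential operator with polynomial coefficients on the powers of `xᵥ`. -/
noncomputable def powDerivSpan (R : Type*) [CommSemiring R] (v : σ) :
    Submodule (MvPolynomial σ R) (ℕ → MvPolynomial σ R) :=
  Submodule.span _ (Set.range fun k b => (pderiv v)^[k] (monomial (Finsupp.single v b) 1))

theorem pderiv_comp_mem_powDerivSpan {v : σ} {f : ℕ → MvPolynomial σ R}
    (hf : f ∈ powDerivSpan R v) (w : σ) : (fun b => pderiv w (f b)) ∈ powDerivSpan R v := by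
  induction hf using Submodule.span_induction with
  | mem _ h =>
    obtain ⟨k, rfl⟩ := h
    by_cases hw : w = v
    · subst hw
      simp only [← Function.iterate_succ_apply' (pderiv w)]
      exact Submodule.subset_span ⟨k + 1, rfl⟩
    · simp only [iterate_pderiv_monomial_single, pderiv_monomial_single_of_ne hw]
      exact zero_mem _
  | zero =>
    simp only [Pi.zero_apply, map_zero]
    exact zero_mem _
  | add f g _ _ hf hg =>
    simp only [Pi.add_apply, map_add]
    exact add_mem hf hg
  | smul a f hf hf' =>
    simp only [Pi.smul_apply, smul_eq_mul, pderiv_mul]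
    exact add_mem (Submodule.smul_mem _ (pderiv w a) hf) (Submodule.smul_mem _ a hf')

theorem coeff_mul_iterate_pderiv_monomial_single {R : Type*} [CommRing R] (a : MvPolynomial σ R)
    (v : σ) (k q s : ℕ) :
    coeff (Finsupp.single v s) (a * (pderiv v)^[k] (monomial (Finsupp.single v (s + q)) 1)) =
      (s + q).descFactorial q * (if q ≤ k then
        coeff (Finsupp.single v (k - q)) a * (descPochhammer R (k - q)).eval (s : R) else 0) := by
  rw [iterate_pderiv_monomial_single, coeff_mul_monomial', one_mul, ← Finsupp.single_tsub]
  simp only [Finsupp.single_le_single]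
  split_ifs with hle hqk hqk
  · have hdesc := Nat.descFactorial_mul_descFactorial (n := s + q) hqk
    rw [Nat.add_sub_cancel] at hdesc
    rw [descPochhammer_eval_eq_descFactorial, ← hdesc]
    by_cases hk : k ≤ s + q
    · rw [show s - (s + q - k) = k - q by omega]
      push_cast
      ring
    · simp [Nat.descFactorial_eq_zero_iff_lt.mpr (show s < k - q by omega)]
  · omega
  · omega
  · simp

theorem exists_polynomial_coeff_of_mem_powDerivSpan {R : Type*} [CommRing R] {v : σ}
    {f : ℕ → MvPolynomial σ R} (hf : f ∈ powDerivSpan R v) (q : ℕ) :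
    ∃ P : Polynomial R, ∀ s : ℕ,
      coeff (Finsupp.single v s) (f (s + q)) = (s + q).descFactorial q * P.eval (s : R) := by
  obtain ⟨a, rfl⟩ := Finsupp.mem_span_range_iff_exists_finsupp.mp hf
  refine ⟨∑ k ∈ a.support, if q ≤ k then
    Polynomial.C (coeff (Finsupp.single v (k - q)) (a k)) * descPochhammer R (k - q) else 0,
    fun s => ?_⟩
  simp only [Finsupp.sum, Finset.sum_apply, Pi.smul_apply, smul_eq_mul, coeff_sum,
    coeff_mul_iterate_pderiv_monomial_single, Polynomial.eval_finsetSum, Finset.mul_sum]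
  refine Finset.sum_congr rfl fun k _ => ?_
  split_ifs <;> simp

end IteratedDerivatives

namespace LO

open Finset

variable {n : ℕ}

section Bidifferential

theorem Weyl.comp_mem_powDerivSpan {T : Module.End ℂ (PolA n)} (hT : T ∈ Weyl n)
    {v : Fin n ⊕ Fin n} {f : ℕ → PolA n} (hf : f ∈ powDerivSpan ℂ v) :
    (fun b => T (f b)) ∈ powDerivSpan ℂ v := by
  unfold Weyl at hT
  induction hT using Algebra.adjoin_induction generalizing f with
  | mem T hT =>
    rcases hT with (⟨i, rfl⟩ | ⟨i, rfl⟩) | ⟨w, rfl⟩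
    · exact Submodule.smul_mem _ (X (Sum.inl i)) hf
    · exact Submodule.smul_mem _ (X (Sum.inr i)) hf
    · exact pderiv_comp_mem_powDerivSpan hf w
  | algebraMap r =>
    simp only [Module.algebraMap_end_apply, MvPolynomial.smul_eq_C_mul]
    exact Submodule.smul_mem _ (MvPolynomial.C r) hf
  | add _ _ _ _ hS hT => exact add_mem (hS hf) (hT hf)
  | mul _ _ _ _ hS hT => exact hS (hT hf)

theorem Bidiff.comp_mem_powDerivSpan {B : PolA n → PolA n → PolA n} (hB : Bidiff n B)
    {v : Fin n ⊕ Fin n} {f : ℕ → PolA n} (hf : f ∈ powDerivSpan ℂ v) (ψ : PolA n) :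
    (fun b => B (f b) ψ) ∈ powDerivSpan ℂ v := by
  obtain ⟨N, S, T, hST⟩ := hB
  have hsum : (fun b => B (f b) ψ) = ∑ α, (T α).1 ψ • fun b => (S α).1 (f b) := by
    funext b
    simp [hST, mul_comm]
  rw [hsum]
  exact sum_mem fun α _ => Submodule.smul_mem _ _ (Weyl.comp_mem_powDerivSpan (S α).2 hf)

end Bidifferential

section Evaluation

theorem cE_monomial (c : ℕ → ℂ) (d : (Fin n ⊕ Fin n) →₀ ℕ) (r : ℂ) :
    cE c (monomial d r) = monomial d (c (xiDeg d) * r) := by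
  classical
  by_cases hr : r = 0
  · simp [cE, hr]
  · simp [cE, support_monomial, hr]

theorem cE_zero (c : ℕ → ℂ) : cE c (0 : PolA n) = 0 := by
  simp [cE]

theorem Dop_iterate_zero (d : ℕ) : Dop^[d] (0 : PolA n) = 0 :=
  Function.iterate_fixed (by simp [Dop]) d

theorem bg_zero_right (lam : ℂ) (d : ℕ) : bg lam d (0 : PolA n) = 0 := by
  rw [bg, Dop_iterate_zero, cE_zero]

theorem bh_zero_left (lam : ℂ) (φ : PolA n) : bh lam 0 φ = φ := by
  simp [bh, cE, hScal]

theorem bh_eq_zero_of_Dop_eq_zero {φ : PolA n} (hφ : Dop φ = 0) (lam : ℂ) {d : ℕ} (hd : d ≠ 0) :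
    bh lam d φ = 0 := by
  obtain ⟨d, rfl⟩ := Nat.exists_eq_succ_of_ne_zero hd
  rw [bh, Function.iterate_succ_apply, hφ, Dop_iterate_zero, cE_zero]

theorem Nop_zero_left (k : ℕ) (ψ : PolA n) : Nop k 0 ψ = 0 := by
  simp [Nop, foldr_pderiv_zero]

theorem Nop_zero_right (k : ℕ) (φ : PolA n) : Nop k φ 0 = 0 := by
  simp [Nop, foldr_pderiv_zero]

theorem C_eq_sum_antidiagonal_of_Dop_eq_zero {φ ψ : PolA n} (hφ : Dop φ = 0) (hψ : Dop ψ = 0)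
    (lam : ℂ) (p : ℕ) :
    C n lam p φ ψ = ∑ km ∈ antidiagonal p, bg lam km.2 (Nop km.1 φ ψ) := by
  have hfilter : {km ∈ range (p + 1) ×ˢ range (p + 1) | km.1 + km.2 = p} = antidiagonal p := by
    ext km
    simp only [mem_filter, mem_product, mem_range,
      HasAntidiagonal.mem_antidiagonal]
    omega
  rw [C, sum_eq_single_of_mem 0 (by simp), sum_eq_single_of_mem 0 (by simp)]
  · simp only [bh_zero_left, zero_add]
    rw [← sum_product', ← sum_filter, hfilter]
  · intro j _ hj
    simp [bh_eq_zero_of_Dop_eq_zero hψ lam hj, Nop_zero_right, bg_zero_right]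
  · intro i _ hi
    simp [bh_eq_zero_of_Dop_eq_zero hφ lam hi, Nop_zero_left, bg_zero_right]

/-- The monomial `r u^a ξ^b` in the conjugate variables `u = u_z` and `ξ = ξ_z`. -/
noncomputable def uXiMonomial (z : Fin n) (a b : ℕ) (r : ℂ) : PolA n :=
  monomial (Finsupp.single (Sum.inl z) a + Finsupp.single (Sum.inr z) b) r

theorem uXiMonomial_zero (z : Fin n) (a b : ℕ) : uXiMonomial z a b 0 = 0 :=
  monomial_zero

theorem cE_uXiMonomial (c : ℕ → ℂ) (z : Fin n) (a b : ℕ) (r : ℂ) :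
    cE c (uXiMonomial z a b r) = uXiMonomial z a b (c b * r) := by
  rw [uXiMonomial, cE_monomial]
  simp [uXiMonomial, xiDeg, Finsupp.single_apply]

theorem Dop_uXiMonomial (z : Fin n) (a b : ℕ) (r : ℂ) :
    Dop (uXiMonomial z a b r) = uXiMonomial z (a - 1) (b - 1) (r * a * b) := by
  have hexp : Finsupp.single (Sum.inl z) a + Finsupp.single (Sum.inr z) b
      - Finsupp.single (Sum.inr z) 1 - Finsupp.single (Sum.inl z) 1 =
      Finsupp.single (Sum.inl z) (a - 1) + Finsupp.single (Sum.inr z) (b - 1) := by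
    ext (i | i) <;> simp [Finsupp.single_apply]
  rw [Dop, sum_eq_single_of_mem z (mem_univ z)]
  · simp [uXiMonomial, pderiv_monomial, hexp, mul_right_comm]
  · intro i _ hi
    simp [uXiMonomial, pderiv_monomial, hi.symm]

theorem Dop_iterate_uXiMonomial (z : Fin n) (a b : ℕ) (r : ℂ) (d : ℕ) :
    Dop^[d] (uXiMonomial z a b r) =
      uXiMonomial z (a - d) (b - d) (r * a.descFactorial d * b.descFactorial d) := by
  induction d with
  | zero => simp
  | succ d ih =>
    rw [Function.iterate_succ_apply', ih, Dop_uXiMonomial, Nat.sub_sub, Nat.sub_sub,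
      Nat.descFactorial_succ, Nat.descFactorial_succ]
    push_cast
    ring_nf

theorem bg_uXiMonomial (lam : ℂ) (d : ℕ) (z : Fin n) (a b : ℕ) (r : ℂ) :
    bg lam d (uXiMonomial z a b r) = uXiMonomial z (a - d) (b - d)
      (gScal n lam d (b - d) * (r * a.descFactorial d * b.descFactorial d)) := by
  rw [bg, Dop_iterate_uXiMonomial, cE_uXiMonomial]

theorem Nop_xi_pow_u_pow (k : ℕ) (z : Fin n) (a b : ℕ) :
    Nop k (uXiMonomial z 0 b 1) (uXiMonomial z a 0 1) =
      uXiMonomial z (a - k) (b - k) (a.choose k * b.descFactorial k) := by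
  simp only [Nop, uXiMonomial, Finsupp.single_zero, zero_add, add_zero,
    foldr_pderiv_monomial_single Sum.inl_injective, foldr_pderiv_monomial_single Sum.inr_injective,
    List.forall_mem_ofFn_iff, List.length_ofFn, one_mul]
  rw [sum_eq_single_of_mem (fun _ => z) (mem_univ _)]
  · simp only [implies_true, if_true, monomial_mul, smul_monomial, smul_eq_mul]
    rw [add_comm, Nat.descFactorial_eq_factorial_mul_choose a]
    have hfact : (k.factorial : ℂ) ≠ 0 := Nat.cast_ne_zero.mpr k.factorial_ne_zero
    congr 1
    push_cast
    field_simp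
  · intro α _ hα
    rw [if_neg fun h => hα (funext h), zero_mul]

theorem C_xi_pow_u_pow (lam : ℂ) (p : ℕ) (z : Fin n) (s : ℕ) :
    C n lam p (uXiMonomial z 0 (s + p) 1) (uXiMonomial z p 0 1) =
      uXiMonomial z 0 s ((s + p).descFactorial p * ∑ km ∈ antidiagonal p,
        (p.choose km.1 : ℂ) * ((km.2).factorial * gScal n lam km.2 s)) := by
  rw [C_eq_sum_antidiagonal_of_Dop_eq_zero (by simp [Dop_uXiMonomial, uXiMonomial_zero])
    (by simp [Dop_uXiMonomial, uXiMonomial_zero]), mul_sum]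
  have uXiMonomial_sum (f : ℕ × ℕ → ℂ) : uXiMonomial z 0 s (∑ km ∈ antidiagonal p, f km) =
      ∑ km ∈ antidiagonal p, uXiMonomial z 0 s (f km) := map_sum _ _ _
  rw [uXiMonomial_sum]
  refine sum_congr rfl fun km hkm => ?_
  obtain ⟨k, m⟩ := km
  obtain rfl : k + m = p := HasAntidiagonal.mem_antidiagonal.mp hkm
  have hdesc : (s + m).descFactorial m * (s + (k + m)).descFactorial k =
      (s + (k + m)).descFactorial (k + m) := by
    simpa [show s + (k + m) - k = s + m by omega] using
      Nat.descFactorial_mul_descFactorial (n := s + (k + m)) (Nat.le_add_right k m)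
  rw [Nop_xi_pow_u_pow, bg_uXiMonomial, ← hdesc, show s + (k + m) - k = s + m by omega,
    Nat.add_sub_cancel_left, Nat.sub_self, Nat.add_sub_cancel, Nat.descFactorial_self]
  push_cast
  ring_nf

end Evaluation

section Coefficient

theorem factorial_mul_gScal_mul_ascPochhammer_eval (n : ℕ) (lam : ℂ) (m s : ℕ) :
    m.factorial * gScal n lam m s * (ascPochhammer ℂ m).eval (2 * (s : ℂ) + (n + 1)) =
      (descPochhammer ℂ m).eval (-(s + lam * (n + 1))) := by
  have hasc (k : ℕ) : (ascPochhammer ℂ k).eval (2 * (s : ℂ) + (n + 1)) =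
      ∏ j ∈ range k, (2 * (s : ℂ) + j + n + 1) := by
    induction k with
    | zero => simp
    | succ k ih =>
      rw [ascPochhammer_succ_eval, prod_range_succ, ih]
      ring
  have hfact : (m.factorial : ℂ) ≠ 0 := Nat.cast_ne_zero.mpr m.factorial_ne_zero
  have hden : ∏ j ∈ range m, (2 * (s : ℂ) + j + n + 1) ≠ 0 :=
    prod_ne_zero_iff.mpr fun j _ => mod_cast (2 * s + j + n).succ_ne_zero
  rw [gScal, mul_inv_cancel_left₀ hfact, prod_div_distrib, hasc, div_mul_cancel₀ _ hden,
    descPochhammer_eval_eq_prod_range]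
  exact prod_congr rfl fun j _ => by ring

theorem sum_gScal_mul_ascPochhammer_eval (n : ℕ) (lam : ℂ) (p s : ℕ) :
    (∑ km ∈ antidiagonal p, (p.choose km.1 : ℂ) * ((km.2).factorial * gScal n lam km.2 s)) *
        (ascPochhammer ℂ p).eval (2 * (s : ℂ) + (n + 1)) =
      (ascPochhammer ℂ p).eval ((s : ℂ) + (n + 1 - lam * (n + 1))) := by
  have hsplit : (s : ℂ) + (n + 1 - lam * (n + 1)) + p - 1 =
      (2 * (s : ℂ) + (n + 1) + p - 1) + -(s + lam * (n + 1)) := by ring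
  rw [ascPochhammer_eval_eq_descPochhammer_eval ((s : ℂ) + _), hsplit,
    descPochhammer_eval_add, sum_mul]
  refine sum_congr rfl fun km hkm => ?_
  obtain ⟨k, m⟩ := km
  obtain rfl : m + k = p := (add_comm m k).trans (HasAntidiagonal.mem_antidiagonal.mp hkm)
  rw [← factorial_mul_gScal_mul_ascPochhammer_eval,
    ← ascPochhammer_eval_mul_descPochhammer_eval]
  ring

theorem exists_polynomial_of_bidiff_C {lam : ℂ} {p : ℕ} (hn : 1 ≤ n) (hC : Bidiff n (C n lam p)) :
    ∃ P : Polynomial ℂ, ∀ s : ℕ,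
      P.eval (s : ℂ) * (ascPochhammer ℂ p).eval (2 * (s : ℂ) + (n + 1)) =
        (ascPochhammer ℂ p).eval ((s : ℂ) + (n + 1 - lam * (n + 1))) := by
  let z : Fin n := ⟨0, hn⟩
  have hpow : (fun b => uXiMonomial z 0 b 1) ∈ powDerivSpan ℂ (Sum.inr z) :=
    Submodule.subset_span ⟨0, by simp [uXiMonomial]⟩
  obtain ⟨P, hP⟩ := exists_polynomial_coeff_of_mem_powDerivSpan
    (hC.comp_mem_powDerivSpan hpow (uXiMonomial z p 0 1)) p
  refine ⟨P, fun s => ?_⟩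
  have hdesc : ((s + p).descFactorial p : ℂ) ≠ 0 := by
    simp [Nat.descFactorial_eq_zero_iff_lt]
  have hPs := hP s
  rw [C_xi_pow_u_pow, uXiMonomial, Finsupp.single_zero, zero_add, coeff_monomial, if_pos rfl] at hPs
  rw [← mul_left_cancel₀ hdesc hPs, sum_gScal_mul_ascPochhammer_eval]

end Coefficient

end LO

/-- Corollary 4: for `p ≥ 1` and `(λ,p) ≠ (1/2,1)`, the bilinear map
`C^λ_p` is not bidifferential. -/
theorem stmt_9 (n : ℕ) (hn : 1 ≤ n) (lam : ℂ) (p : ℕ) (hp : 1 ≤ p)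
    (h : ¬(lam = 1 / 2 ∧ p = 1)) :
    ¬ LO.Bidiff n (LO.C n lam p) := by
  intro hC
  obtain ⟨P, hP⟩ := LO.exists_polynomial_of_bidiff_C hn hC
  obtain ⟨hp1, hlam⟩ := eq_one_and_eq_of_polynomial_mul_ascPochhammer_eval hp hP
  refine h ⟨?_, hp1⟩
  have hn1 : (n : ℂ) + 1 ≠ 0 := Nat.cast_add_one_ne_zero n
  exact mul_right_cancel₀ hn1 (by linear_combination -hlam / 2)
end

section
/- For every λ ∈ ℂ, every p ≥ 0, every momentum function μ ∈ M, and all φ, ψ ∈ A, one has {μ, C^λ_p(φ,ψ)} = C^λ_p({μ,φ}, ψ) + C^λ_p(φ, {μ,ψ}); that is, each coefficient C^λ_p of the Lecomte–Ovsienko star product is infinitesimally equivariant for the Hamiltonian action of sl_{n+1}(ℝ). -/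
open MvPolynomial

/-!
Work with formal operators in `(End A)⟦ℏ⟧`. The Hamiltonian operator `H` of a momentum function
admits a correction `T` such that `H + ℏ T` acts by derivations on the standard-ordered product
`(φ, ψ) ↦ ∑ k, ℏ ^ k N_k(φ, ψ)`: one can take `T = 0` for `ξᵢ` and `uᵢ ξⱼ`, and
`T = -(E + λ (n + 1)) ∂/∂ξᵢ` for the quadratic momentum functions. The series
`bh = ∑ d, ℏ ^ d h_d(E) ∘ D ^ d` and `bg = ∑ d, ℏ ^ d g_d(E) ∘ D ^ d` intertwine the two
operators, `bh H = (H + ℏ T) bh` and `H bg = bg (H + ℏ T)`, because the scalars `h_d` and `g_d`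
satisfy two-term recurrences matching the commutator of `D ^ d` with `H`. Therefore `H` itself is a
derivation of `(φ, ψ) ↦ bg(N(bh φ, bh ψ))`.
-/

namespace LO

open Finset Module
open scoped PowerSeries

section FormalOperators

variable {K V : Type*} [CommRing K] [AddCommGroup V] [Module K V]

/-- The formal operator `H + ℏ T`, where the variable of the power series ring is `ℏ`. -/
noncomputable def perturb (H T : End K V) : (End K V)⟦X⟧ :=
  PowerSeries.C H + PowerSeries.X * PowerSeries.C T

lemma perturb_add (H H' T T' : End K V) :
    perturb (H + H') (T + T') = perturb H T + perturb H' T' := by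
  simp only [perturb, map_add, mul_add]
  abel

section Coefficients

variable (H T : End K V) (F : (End K V)⟦X⟧)

lemma coeff_zero_perturb_mul :
    PowerSeries.coeff 0 (perturb H T * F) = H * PowerSeries.coeff 0 F := by
  simp [perturb, add_mul, mul_assoc]

lemma coeff_zero_mul_perturb :
    PowerSeries.coeff 0 (F * perturb H T) = PowerSeries.coeff 0 F * H := by
  simp [perturb, mul_add]

lemma coeff_succ_perturb_mul (d : ℕ) :
    PowerSeries.coeff (d + 1) (perturb H T * F) =
      H * PowerSeries.coeff (d + 1) F + T * PowerSeries.coeff d F := by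
  simp [perturb, add_mul, mul_assoc, PowerSeries.coeff_succ_X_mul]

lemma coeff_succ_mul_perturb (d : ℕ) :
    PowerSeries.coeff (d + 1) (F * perturb H T) =
      PowerSeries.coeff (d + 1) F * H + PowerSeries.coeff d F * T := by
  rw [perturb, mul_add, map_add, PowerSeries.coeff_mul_C, (PowerSeries.commute_X _).symm.eq,
    ← mul_assoc, PowerSeries.coeff_succ_mul_X, PowerSeries.coeff_mul_C]

end Coefficients

/-- The formal operator `Q(B φ) = ∑ ℏ^(i + k) Q_k(B_i φ)`: the `ℏ`-linear extension of `Q`,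
evaluated at the formal series `B φ`. -/
noncomputable def compSeries (Q : V →ₗ[K] (End K V)⟦X⟧) (B : (End K V)⟦X⟧) :
    V →ₗ[K] (End K V)⟦X⟧ where
  toFun φ := PowerSeries.mk fun p ↦
    ∑ x ∈ antidiagonal p, PowerSeries.coeff x.2 (Q (PowerSeries.coeff x.1 B φ))
  map_add' φ ψ := by
    ext1 p
    simp only [PowerSeries.coeff_mk, map_add, sum_add_distrib]
  map_smul' c φ := by
    ext1 p
    simp only [PowerSeries.coeff_mk, map_smul, LinearMap.map_smul_of_tower, smul_sum,
      RingHom.id_apply]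

lemma coeff_compSeries (Q : V →ₗ[K] (End K V)⟦X⟧) (B : (End K V)⟦X⟧) (p : ℕ) (φ : V) :
    PowerSeries.coeff p (compSeries Q B φ) =
      ∑ x ∈ antidiagonal p, PowerSeries.coeff x.2 (Q (PowerSeries.coeff x.1 B φ)) := by
  simp only [compSeries, LinearMap.coe_mk, AddHom.coe_mk, PowerSeries.coeff_mk]

variable {H T : End K V} {Q : V →ₗ[K] (End K V)⟦X⟧} {B G : (End K V)⟦X⟧}

/-- The formal operator `H + ℏ T` acts by derivations on the formal product `(φ, ψ) ↦ Q φ ψ`. -/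
def ActsByDerivations (H T : End K V) (Q : V →ₗ[K] (End K V)⟦X⟧) : Prop :=
  ∀ φ, perturb H T * Q φ = Q φ * perturb H T + Q (H φ) + PowerSeries.X * Q (T φ)

lemma ActsByDerivations.add {H' T' : End K V} (h : ActsByDerivations H T Q)
    (h' : ActsByDerivations H' T' Q) : ActsByDerivations (H + H') (T + T') Q := fun φ ↦ by
  simp only [perturb_add, add_mul, mul_add, h φ, h' φ, LinearMap.add_apply, map_add]
  abel

lemma ActsByDerivations.smul (h : ActsByDerivations H T Q) (c : K) :
    ActsByDerivations (c • H) (c • T) Q := fun φ ↦ by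
  have hc : perturb (c • H) (c • T) = c • perturb H T := by
    ext (_ | k) <;> simp [perturb]
  simp only [hc, smul_mul_assoc, mul_smul_comm, h φ, smul_add, LinearMap.smul_apply, map_smul]

lemma ActsByDerivations.sum {ι : Type*} {s : Finset ι} {H T : ι → End K V}
    (h : ∀ i ∈ s, ActsByDerivations (H i) (T i) Q) :
    ActsByDerivations (∑ i ∈ s, H i) (∑ i ∈ s, T i) Q := by
  classical
  induction s using Finset.induction_on with
  | empty => simp [ActsByDerivations, perturb]
  | insert i s hi ih =>
    rw [sum_insert hi, sum_insert hi]
    exact (h i (mem_insert_self i s)).add (ih fun j hj ↦ h j (mem_insert_of_mem hj))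

lemma ActsByDerivations.mul_coeff_zero (hQ : ActsByDerivations H T Q) (φ : V) :
    H * PowerSeries.coeff 0 (Q φ) =
      PowerSeries.coeff 0 (Q φ) * H + PowerSeries.coeff 0 (Q (H φ)) := by
  simpa only [map_add, coeff_zero_perturb_mul, coeff_zero_mul_perturb,
    PowerSeries.coeff_zero_X_mul, add_zero] using congrArg (PowerSeries.coeff 0) (hQ φ)

lemma ActsByDerivations.mul_coeff_succ (hQ : ActsByDerivations H T Q) (k : ℕ) (φ : V) :
    H * PowerSeries.coeff (k + 1) (Q φ) + T * PowerSeries.coeff k (Q φ) =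
      PowerSeries.coeff (k + 1) (Q φ) * H + PowerSeries.coeff k (Q φ) * T +
        PowerSeries.coeff (k + 1) (Q (H φ)) + PowerSeries.coeff k (Q (T φ)) := by
  simpa only [map_add, coeff_succ_perturb_mul, coeff_succ_mul_perturb,
    PowerSeries.coeff_succ_X_mul] using congrArg (PowerSeries.coeff (k + 1)) (hQ φ)

lemma coeff_zero_apply_of_intertwine (hB : B * PowerSeries.C H = perturb H T * B) (φ : V) :
    PowerSeries.coeff 0 B (H φ) = H (PowerSeries.coeff 0 B φ) := by
  simpa only [PowerSeries.coeff_mul_C, coeff_zero_perturb_mul, End.mul_apply] using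
    congrArg (fun F : (End K V)⟦X⟧ ↦ PowerSeries.coeff 0 F φ) hB

lemma coeff_succ_apply_of_intertwine (hB : B * PowerSeries.C H = perturb H T * B) (k : ℕ)
    (φ : V) : PowerSeries.coeff (k + 1) B (H φ) =
      H (PowerSeries.coeff (k + 1) B φ) + T (PowerSeries.coeff k B φ) := by
  simpa only [PowerSeries.coeff_mul_C, coeff_succ_perturb_mul, End.mul_apply,
    LinearMap.add_apply] using
    congrArg (fun F : (End K V)⟦X⟧ ↦ PowerSeries.coeff (k + 1) F φ) hB

lemma coeff_succ_compSeries_of_intertwine (hB : B * PowerSeries.C H = perturb H T * B) (p : ℕ)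
    (φ : V) :
    PowerSeries.coeff (p + 1) (compSeries Q B (H φ)) =
      ∑ x ∈ antidiagonal (p + 1), PowerSeries.coeff x.2 (Q (H (PowerSeries.coeff x.1 B φ))) +
        ∑ x ∈ antidiagonal p, PowerSeries.coeff x.2 (Q (T (PowerSeries.coeff x.1 B φ))) := by
  simp only [coeff_compSeries, Nat.sum_antidiagonal_succ, coeff_zero_apply_of_intertwine hB,
    coeff_succ_apply_of_intertwine hB, map_add, sum_add_distrib]
  abel

lemma perturb_mul_compSeries (hQ : ActsByDerivations H T Q)
    (hB : B * PowerSeries.C H = perturb H T * B) (φ : V) :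
    perturb H T * compSeries Q B φ =
      compSeries Q B φ * perturb H T + compSeries Q B (H φ) := by
  ext1 p
  cases p with
  | zero =>
    simp only [map_add, coeff_zero_perturb_mul, coeff_zero_mul_perturb, coeff_compSeries,
      Nat.antidiagonal_zero, sum_singleton, hQ.mul_coeff_zero, coeff_zero_apply_of_intertwine hB]
  | succ p =>
    have hQ_sum := sum_congr rfl fun x (_ : x ∈ antidiagonal p) ↦
      hQ.mul_coeff_succ x.2 (PowerSeries.coeff x.1 B φ)
    simp only [sum_add_distrib] at hQ_sum
    rw [map_add, coeff_succ_perturb_mul, coeff_succ_mul_perturb,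
      coeff_succ_compSeries_of_intertwine hB]
    simp only [coeff_compSeries, Nat.sum_antidiagonal_succ', mul_add, add_mul, mul_sum, sum_mul,
      hQ.mul_coeff_zero]
    rw [add_assoc, hQ_sum]
    abel

/-- Left multiplication by `φ` in the star product obtained from the standard-ordered
quantization `Q` by the substitution `φ ⋆ ψ = G(Q(B φ)(B ψ))`. -/
noncomputable def leftStar (G : (End K V)⟦X⟧) (Q : V →ₗ[K] (End K V)⟦X⟧) (B : (End K V)⟦X⟧) :
    V →ₗ[K] (End K V)⟦X⟧ :=
  LinearMap.mulLeft K G ∘ₗ LinearMap.mulRight K B ∘ₗ compSeries Q B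

lemma leftStar_apply (φ : V) : leftStar G Q B φ = G * (compSeries Q B φ * B) := rfl

/-- The coefficients of the star product `φ ⋆ ψ = G(Q(B φ)(B ψ))`. -/
noncomputable def starCoeff (G : (End K V)⟦X⟧) (Q : V →ₗ[K] (End K V)⟦X⟧) (B : (End K V)⟦X⟧)
    (p : ℕ) : V →ₗ[K] V →ₗ[K] V :=
  (PowerSeries.coeff p).restrictScalars K ∘ₗ leftStar G Q B

lemma starCoeff_apply (p : ℕ) (φ : V) :
    starCoeff G Q B p φ = PowerSeries.coeff p (leftStar G Q B φ) := rfl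

theorem starCoeff_equivariant
    (hG : PowerSeries.C H * G = G * perturb H T)
    (hQ : ActsByDerivations H T Q)
    (hB : B * PowerSeries.C H = perturb H T * B) (p : ℕ) (φ ψ : V) :
    H (starCoeff G Q B p φ ψ) = starCoeff G Q B p (H φ) ψ + starCoeff G Q B p φ (H ψ) := by
  have h : PowerSeries.C H * leftStar G Q B φ =
      leftStar G Q B (H φ) + leftStar G Q B φ * PowerSeries.C H := by
    simp only [leftStar_apply]
    calc PowerSeries.C H * (G * (compSeries Q B φ * B))
        = G * (perturb H T * compSeries Q B φ * B) := by
          rw [← mul_assoc, hG, mul_assoc, mul_assoc]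
      _ = G * (compSeries Q B (H φ) * B) + G * (compSeries Q B φ * (perturb H T * B)) := by
          rw [perturb_mul_compSeries hQ hB, ← mul_add]
          congr 1
          noncomm_ring
      _ = G * (compSeries Q B (H φ) * B) + G * (compSeries Q B φ * B) * PowerSeries.C H := by
          rw [← hB, mul_assoc, mul_assoc]
  simpa only [starCoeff_apply, PowerSeries.coeff_C_mul, PowerSeries.coeff_mul_C, map_add,
    LinearMap.add_apply, End.mul_apply] using
    congrArg (fun F : (End K V)⟦X⟧ ↦ PowerSeries.coeff p F ψ) h

end FormalOperators

section DerivationPairing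

variable {K S ι : Type*} [Field K] [CommRing S] [Algebra K S] [Fintype ι]

/-- The `k`-th bidifferential operator `(k!)⁻¹ ∑_α δ_α a * ε_α b` of the exponential
`exp (ℏ ∑ l, δ l ⊗ ε l)` of two families of derivations, defined through the recursion
`(k + 1) N_{k+1}(a, b) = ∑ l, N_k(δ l a, ε l b)`. -/
noncomputable def derivPairing (δ ε : ι → Derivation K S S) : ℕ → S →ₗ[K] S →ₗ[K] S
  | 0 => LinearMap.mul K S
  | k + 1 => ((k : K) + 1)⁻¹ •
      ∑ l, (derivPairing δ ε k).compl₁₂ (δ l).toLinearMap (ε l).toLinearMap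

variable (δ ε : ι → Derivation K S S)

lemma derivPairing_zero (a b : S) : derivPairing δ ε 0 a b = a * b := rfl

lemma derivPairing_succ (k : ℕ) (a b : S) :
    derivPairing δ ε (k + 1) a b =
      ((k : K) + 1)⁻¹ • ∑ l, derivPairing δ ε k (δ l a) (ε l b) := by
  simp [derivPairing, LinearMap.sum_apply]

lemma sum_derivPairing [CharZero K] (k : ℕ) (a b : S) :
    ∑ l, derivPairing δ ε k (δ l a) (ε l b) = ((k : K) + 1) • derivPairing δ ε (k + 1) a b := by
  rw [derivPairing_succ, smul_inv_smul₀ (Nat.cast_add_one_ne_zero k)]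

lemma derivPairing_swap (k : ℕ) (a b : S) :
    derivPairing δ ε k a b = derivPairing ε δ k b a := by
  induction k generalizing a b with
  | zero => simp only [derivPairing_zero, mul_comm]
  | succ k ih => simp only [derivPairing_succ, ih]

lemma derivPairing_eq_sum_foldr (k : ℕ) (a b : S) :
    derivPairing δ ε k a b = (k.factorial : K)⁻¹ • ∑ α : Fin k → ι,
      (List.ofFn α).foldr (fun i ↦ δ i) a * (List.ofFn α).foldr (fun i ↦ ε i) b := by
  induction k generalizing a b with
  | zero => simp [derivPairing_zero]
  | succ k ih =>
    simp only [derivPairing_succ, ih, ← smul_sum, smul_smul]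
    rw [Nat.factorial_succ, Nat.cast_mul, mul_inv, Nat.cast_add_one,
      ← (Fin.snocEquiv fun _ : Fin (k + 1) ↦ ι).sum_comp, Fintype.sum_prod_type]
    refine congrArg _ (sum_congr rfl fun l _ ↦ sum_congr rfl fun α _ ↦ ?_)
    rw [List.ofFn_succ']
    simp [Fin.snocEquiv]

variable {δ ε}

lemma derivation_derivPairing {θ : Derivation K S S} (hδ : ∀ l a, θ (δ l a) = δ l (θ a))
    (hε : ∀ l a, θ (ε l a) = ε l (θ a)) (k : ℕ) (a b : S) :
    θ (derivPairing δ ε k a b) = derivPairing δ ε k (θ a) b + derivPairing δ ε k a (θ b) := by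
  induction k generalizing a b with
  | zero => simp only [derivPairing_zero, Derivation.leibniz, smul_eq_mul]; ring
  | succ k ih =>
    simp only [derivPairing_succ, Derivation.map_smul, map_sum, ih, hδ, hε, sum_add_distrib,
      smul_add]

lemma derivPairing_succ_mul_right [CharZero K] (hδ : ∀ l m a, δ l (δ m a) = δ m (δ l a))
    {x : S} {c : ι → K} (hx : ∀ l, ε l x = algebraMap K S (c l)) (k : ℕ) (a b : S) :
    derivPairing δ ε (k + 1) a (x * b) =
      x * derivPairing δ ε (k + 1) a b + derivPairing δ ε k (∑ l, c l • δ l a) b := by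
  have leibniz (l : ι) : ε l (x * b) = x * ε l b + c l • b := by
    rw [Derivation.leibniz, hx, smul_eq_mul, smul_eq_mul, mul_comm b, Algebra.smul_def]
  have scaled : ((k : K) + 1) • derivPairing δ ε (k + 1) a (x * b) =
      ∑ l, derivPairing δ ε k (δ l a) (x * ε l b) +
        derivPairing δ ε k (∑ l, c l • δ l a) b := by
    simp only [← sum_derivPairing, leibniz, map_add, map_smul, map_sum, LinearMap.sum_apply,
      LinearMap.smul_apply, sum_add_distrib]
  have first : ∑ l, derivPairing δ ε k (δ l a) (x * ε l b) =
      ((k : K) + 1) • (x * derivPairing δ ε (k + 1) a b) +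
        (k : K) • derivPairing δ ε k (∑ l, c l • δ l a) b := by
    cases k with
    | zero =>
      simp [derivPairing_zero, derivPairing_succ, mul_sum, mul_left_comm x]
    | succ k =>
      have comm (l : ι) : ∑ m, c m • δ m (δ l a) = δ l (∑ m, c m • δ m a) := by
        simp only [map_sum, Derivation.map_smul, hδ l]
      simp only [derivPairing_succ_mul_right hδ hx k, comm, sum_add_distrib, ← mul_sum,
        sum_derivPairing, mul_smul_comm, Nat.cast_add_one]
  apply smul_right_injective S (Nat.cast_add_one_ne_zero (R := K) k)
  simp only [scaled, first, smul_add, add_smul, one_smul]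
  abel

/-- The formal operator `ψ ↦ ∑ k, ℏ ^ k N_k(φ, ψ)` attached to `φ`. -/
noncomputable def pairingSeries (δ ε : ι → Derivation K S S) : S →ₗ[K] (End K S)⟦X⟧ where
  toFun φ := PowerSeries.mk fun k ↦ derivPairing δ ε k φ
  map_add' φ ψ := by
    ext1 k
    simp only [PowerSeries.coeff_mk, map_add]
  map_smul' c φ := by
    ext1 k
    simp only [PowerSeries.coeff_mk, map_smul, LinearMap.map_smul_of_tower, RingHom.id_apply]

lemma coeff_pairingSeries (k : ℕ) (φ : S) :
    PowerSeries.coeff k (pairingSeries δ ε φ) = derivPairing δ ε k φ := by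
  simp only [pairingSeries, LinearMap.coe_mk, AddHom.coe_mk, PowerSeries.coeff_mk]

lemma derivation_mul_pairingSeries {θ : Derivation K S S} (hδ : ∀ l a, θ (δ l a) = δ l (θ a))
    (hε : ∀ l a, θ (ε l a) = ε l (θ a)) (φ : S) :
    PowerSeries.C (θ : End K S) * pairingSeries δ ε φ =
      pairingSeries δ ε φ * PowerSeries.C (θ : End K S) + pairingSeries δ ε (θ φ) := by
  ext k ψ
  simpa only [map_add, PowerSeries.coeff_C_mul, PowerSeries.coeff_mul_C, coeff_pairingSeries,
    LinearMap.add_apply, End.mul_apply, Derivation.coeFn_coe, add_comm] using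
    derivation_derivPairing hδ hε k φ ψ

lemma pairingSeries_mul_mulLeft [CharZero K] (hδ : ∀ l m a, δ l (δ m a) = δ m (δ l a))
    {x : S} {c : ι → K} (hx : ∀ l, ε l x = algebraMap K S (c l)) (φ : S) :
    pairingSeries δ ε φ * PowerSeries.C (LinearMap.mulLeft K x) =
      PowerSeries.C (LinearMap.mulLeft K x) * pairingSeries δ ε φ +
        PowerSeries.X * pairingSeries δ ε (∑ l, c l • δ l φ) := by
  ext (_ | k) ψ
  · simp only [map_add, PowerSeries.coeff_C_mul, PowerSeries.coeff_mul_C, coeff_pairingSeries,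
      End.mul_apply, PowerSeries.coeff_zero_X_mul, LinearMap.mulLeft_apply, derivPairing_zero,
      add_zero, mul_left_comm]
  · simp only [map_add, PowerSeries.coeff_C_mul, PowerSeries.coeff_mul_C, coeff_pairingSeries,
      LinearMap.add_apply, End.mul_apply, PowerSeries.coeff_succ_X_mul, LinearMap.mulLeft_apply,
      derivPairing_succ_mul_right hδ hx]

lemma pairingSeries_mul [CharZero K] (hε : ∀ l m a, ε l (ε m a) = ε m (ε l a))
    {x : S} {c : ι → K} (hx : ∀ l, δ l x = algebraMap K S (c l)) (φ : S) :
    pairingSeries δ ε (x * φ) =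
      PowerSeries.C (LinearMap.mulLeft K x) * pairingSeries δ ε φ +
        PowerSeries.X *
          (pairingSeries δ ε φ * PowerSeries.C (∑ l, c l • (ε l : End K S))) := by
  ext (_ | k) ψ
  · simp only [map_add, PowerSeries.coeff_C_mul, coeff_pairingSeries, End.mul_apply,
      PowerSeries.coeff_zero_X_mul, LinearMap.mulLeft_apply, derivPairing_zero, add_zero, mul_assoc]
  · simp only [map_add, PowerSeries.coeff_C_mul, PowerSeries.coeff_mul_C, coeff_pairingSeries,
      LinearMap.add_apply, End.mul_apply, PowerSeries.coeff_succ_X_mul, LinearMap.mulLeft_apply,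
      LinearMap.sum_apply, LinearMap.smul_apply, Derivation.coeFn_coe,
      derivPairing_swap δ ε, derivPairing_succ_mul_right hε hx]

end DerivationPairing

section Generators

variable {n : ℕ}

/-- Multiplication by `uᵢ`. -/
noncomputable def mulU (i : Fin n) : End ℂ (PolA n) := LinearMap.mulLeft ℂ (X (Sum.inl i))

/-- Multiplication by `ξᵢ`. -/
noncomputable def mulXi (i : Fin n) : End ℂ (PolA n) := LinearMap.mulLeft ℂ (X (Sum.inr i))

/-- The operator `∂/∂uᵢ`. -/
noncomputable def derivU (i : Fin n) : End ℂ (PolA n) := (pderiv (Sum.inl i)).toLinearMap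

/-- The operator `∂/∂ξᵢ`. -/
noncomputable def derivXi (i : Fin n) : End ℂ (PolA n) := (pderiv (Sum.inr i)).toLinearMap

lemma mulU_apply (i : Fin n) (φ : PolA n) : mulU i φ = X (Sum.inl i) * φ := rfl

lemma mulXi_apply (i : Fin n) (φ : PolA n) : mulXi i φ = X (Sum.inr i) * φ := rfl

lemma derivU_apply (i : Fin n) (φ : PolA n) : derivU i φ = pderiv (Sum.inl i) φ := rfl

lemma derivXi_apply (i : Fin n) (φ : PolA n) : derivXi i φ = pderiv (Sum.inr i) φ := rfl

lemma pderiv_comm {σ R : Type*} [CommRing R] (v w : σ) (φ : MvPolynomial σ R) :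
    pderiv v (pderiv w φ) = pderiv w (pderiv v φ) := by
  classical
  have h : ⁅pderiv (R := R) v, pderiv (R := R) w⁆ = 0 := by
    refine MvPolynomial.derivation_ext fun i ↦ ?_
    rw [Derivation.commutator_apply, pderiv_X, pderiv_X, Pi.single_apply, Pi.single_apply]
    split_ifs <;> simp
  simpa [Derivation.commutator_apply, sub_eq_zero] using DFunLike.congr_fun h φ

lemma pderiv_inl_X_inl (i j : Fin n) :
    pderiv (Sum.inl i) (X (Sum.inl j) : PolA n) = if i = j then 1 else 0 := by
  classical
  simp [pderiv_X, Pi.single_apply, eq_comm]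

lemma pderiv_inr_X_inr (i j : Fin n) :
    pderiv (Sum.inr i) (X (Sum.inr j) : PolA n) = if i = j then 1 else 0 := by
  classical
  simp [pderiv_X, Pi.single_apply, eq_comm]

lemma pderiv_inl_X_inr (i j : Fin n) : pderiv (Sum.inl i) (X (Sum.inr j) : PolA n) = 0 :=
  pderiv_X_of_ne Sum.inr_ne_inl

lemma pderiv_inr_X_inl (i j : Fin n) : pderiv (Sum.inr i) (X (Sum.inl j) : PolA n) = 0 :=
  pderiv_X_of_ne Sum.inl_ne_inr

/-- The series `φ ↦ ∑ k, ℏ ^ k N_k(φ, ·)` of the standard-ordered star product. -/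
noncomputable def stdSeries (n : ℕ) : PolA n →ₗ[ℂ] (End ℂ (PolA n))⟦X⟧ :=
  pairingSeries (fun i : Fin n ↦ pderiv (Sum.inr i)) (fun i : Fin n ↦ pderiv (Sum.inl i))

section StdSeries

variable (i : Fin n) (φ : PolA n)

lemma derivU_mul_stdSeries : PowerSeries.C (derivU i) * stdSeries n φ =
    stdSeries n φ * PowerSeries.C (derivU i) + stdSeries n (derivU i φ) :=
  derivation_mul_pairingSeries (fun _ ↦ pderiv_comm _ _) (fun _ ↦ pderiv_comm _ _) φ

lemma derivXi_mul_stdSeries : PowerSeries.C (derivXi i) * stdSeries n φ =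
    stdSeries n φ * PowerSeries.C (derivXi i) + stdSeries n (derivXi i φ) :=
  derivation_mul_pairingSeries (fun _ ↦ pderiv_comm _ _) (fun _ ↦ pderiv_comm _ _) φ

lemma stdSeries_mul_mulU : stdSeries n φ * PowerSeries.C (mulU i) =
    PowerSeries.C (mulU i) * stdSeries n φ + PowerSeries.X * stdSeries n (derivXi i φ) := by
  have h (l : Fin n) : pderiv (Sum.inl l) (X (Sum.inl i) : PolA n) =
      algebraMap ℂ _ (if l = i then 1 else 0) := by rw [pderiv_inl_X_inl]; split_ifs <;> simp
  simpa [stdSeries, mulU, derivXi] using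
    pairingSeries_mul_mulLeft (δ := fun l ↦ pderiv (Sum.inr l)) (fun _ _ ↦ pderiv_comm _ _) h φ

lemma stdSeries_mul_mulXi : stdSeries n φ * PowerSeries.C (mulXi i) =
    PowerSeries.C (mulXi i) * stdSeries n φ := by
  have h (l : Fin n) : pderiv (Sum.inl l) (X (Sum.inr i) : PolA n) = algebraMap ℂ _ 0 := by
    rw [pderiv_inl_X_inr, map_zero]
  simpa [stdSeries, mulXi] using
    pairingSeries_mul_mulLeft (δ := fun l ↦ pderiv (Sum.inr l)) (fun _ _ ↦ pderiv_comm _ _) h φ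

lemma stdSeries_mulU : stdSeries n (mulU i φ) = PowerSeries.C (mulU i) * stdSeries n φ := by
  have h (l : Fin n) : pderiv (Sum.inr l) (X (Sum.inl i) : PolA n) = algebraMap ℂ _ 0 := by
    rw [pderiv_inr_X_inl, map_zero]
  simpa [stdSeries, mulU] using
    pairingSeries_mul (ε := fun l ↦ pderiv (Sum.inl l)) (fun _ _ ↦ pderiv_comm _ _) h φ

lemma stdSeries_mulXi : stdSeries n (mulXi i φ) = PowerSeries.C (mulXi i) * stdSeries n φ +
    PowerSeries.X * (stdSeries n φ * PowerSeries.C (derivU i)) := by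
  have h (l : Fin n) : pderiv (Sum.inr l) (X (Sum.inr i) : PolA n) =
      algebraMap ℂ _ (if l = i then 1 else 0) := by rw [pderiv_inr_X_inr]; split_ifs <;> simp
  simpa [stdSeries, mulXi, derivU] using
    pairingSeries_mul (ε := fun l ↦ pderiv (Sum.inl l)) (fun _ _ ↦ pderiv_comm _ _) h φ

end StdSeries

section EulerFunctions

lemma xiDeg_add_single_inl (d : Fin n ⊕ Fin n →₀ ℕ) (i : Fin n) :
    xiDeg (d + Finsupp.single (Sum.inl i) 1) = xiDeg d := by
  simp [xiDeg]

lemma xiDeg_add_single_inr (d : Fin n ⊕ Fin n →₀ ℕ) (i : Fin n) :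
    xiDeg (d + Finsupp.single (Sum.inr i) 1) = xiDeg d + 1 := by
  classical
  simp [xiDeg, sum_add_distrib, Finsupp.single_apply]

lemma coeff_cE (c : ℕ → ℂ) (φ : PolA n) (d : Fin n ⊕ Fin n →₀ ℕ) :
    coeff d (cE c φ) = c (xiDeg d) * coeff d φ := by
  classical
  simp only [cE, coeff_sum, coeff_monomial]
  rw [sum_ite_eq' φ.support d]
  split_ifs with h
  · rfl
  · rw [notMem_support_iff.mp h, mul_zero]

/-- The operator `c(E)` as an endomorphism. -/
noncomputable def cEnd (c : ℕ → ℂ) : End ℂ (PolA n) where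
  toFun := cE c
  map_add' φ ψ := by
    ext d
    simp only [coeff_cE, coeff_add, mul_add]
  map_smul' a φ := by
    ext d
    simp only [coeff_cE, coeff_smul, smul_eq_mul, RingHom.id_apply, mul_left_comm]

variable (c c' : ℕ → ℂ)

lemma cEnd_apply (φ : PolA n) : cEnd c φ = cE c φ := rfl

lemma cEnd_mul_cEnd : (cEnd c * cEnd c' : End ℂ (PolA n)) = cEnd (c * c') := by
  refine LinearMap.ext fun φ ↦ MvPolynomial.ext _ _ fun d ↦ ?_
  simp only [End.mul_apply, cEnd_apply, coeff_cE, Pi.mul_apply, mul_assoc]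

lemma cEnd_add : (cEnd (c + c') : End ℂ (PolA n)) = cEnd c + cEnd c' := by
  refine LinearMap.ext fun φ ↦ MvPolynomial.ext _ _ fun d ↦ ?_
  simp only [LinearMap.add_apply, cEnd_apply, coeff_add, coeff_cE, Pi.add_apply, add_mul]

lemma sub_cEnd_mul (F G : End ℂ (PolA n)) : F - cEnd c * G = F + cEnd (-c) * G := by
  refine LinearMap.ext fun φ ↦ MvPolynomial.ext _ _ fun d ↦ ?_
  simp only [LinearMap.sub_apply, LinearMap.add_apply, End.mul_apply, cEnd_apply, coeff_sub,
    coeff_add, coeff_cE, Pi.neg_apply, neg_mul]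
  exact sub_eq_add_neg _ _

lemma cEnd_const (a : ℂ) : (cEnd (fun _ ↦ a) : End ℂ (PolA n)) = a • 1 := by
  refine LinearMap.ext fun φ ↦ MvPolynomial.ext _ _ fun d ↦ ?_
  simp only [LinearMap.smul_apply, End.one_apply, cEnd_apply, coeff_smul, coeff_cE, smul_eq_mul]

lemma Elin_eq_cEnd : Elin n = cEnd (fun m ↦ (m : ℂ)) := by
  refine LinearMap.ext fun φ ↦ ?_
  induction φ using MvPolynomial.induction_on' with
  | add φ ψ hφ hψ => rw [map_add, map_add, hφ, hψ]
  | monomial d a =>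
    have hE : Elin n (monomial d a) = monomial d ((xiDeg d : ℂ) * a) := by
      simp only [Elin, LinearMap.sum_apply, LinearMap.comp_apply, LinearMap.mulLeft_apply,
        Derivation.coeFn_coe, X_mul_pderiv_monomial, smul_monomial, nsmul_eq_mul, xiDeg,
        Nat.cast_sum, sum_mul, map_sum]
    rw [hE]
    ext e
    simp only [cEnd_apply, coeff_cE, coeff_monomial, mul_ite, mul_zero]
    split_ifs with h
    · rw [h]
    · rfl

lemma derivU_mul_cEnd (i : Fin n) : derivU i * cEnd c = cEnd c * derivU i := by
  refine LinearMap.ext fun φ ↦ MvPolynomial.ext _ _ fun d ↦ ?_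
  simp only [End.mul_apply, derivU_apply, cEnd_apply, coeff_pderiv, coeff_cE,
    xiDeg_add_single_inl, mul_assoc]

lemma derivXi_mul_cEnd (i : Fin n) :
    derivXi i * cEnd c = cEnd (fun m ↦ c (m + 1)) * derivXi i := by
  refine LinearMap.ext fun φ ↦ MvPolynomial.ext _ _ fun d ↦ ?_
  simp only [End.mul_apply, derivXi_apply, cEnd_apply, coeff_pderiv, coeff_cE,
    xiDeg_add_single_inr, mul_assoc]

lemma cEnd_mul_mulU (i : Fin n) : cEnd c * mulU i = mulU i * cEnd c := by
  classical
  refine LinearMap.ext fun φ ↦ MvPolynomial.ext _ _ fun d ↦ ?_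
  simp only [End.mul_apply, mulU_apply, cEnd_apply, coeff_X_mul', coeff_cE]
  split_ifs with h
  · have hd : d - Finsupp.single (Sum.inl i) 1 + Finsupp.single (Sum.inl i) 1 = d :=
      tsub_add_cancel_of_le (by simpa [Nat.one_le_iff_ne_zero] using h)
    rw [← xiDeg_add_single_inl (d - _) i, hd]
  · rw [mul_zero]

lemma cEnd_mul_mulXi (i : Fin n) :
    cEnd c * mulXi i = mulXi i * cEnd (fun m ↦ c (m + 1)) := by
  classical
  refine LinearMap.ext fun φ ↦ MvPolynomial.ext _ _ fun d ↦ ?_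
  simp only [End.mul_apply, mulXi_apply, cEnd_apply, coeff_X_mul', coeff_cE]
  split_ifs with h
  · have hd : d - Finsupp.single (Sum.inr i) 1 + Finsupp.single (Sum.inr i) 1 = d :=
      tsub_add_cancel_of_le (by simpa [Nat.one_le_iff_ne_zero] using h)
    rw [← xiDeg_add_single_inr (d - _) i, hd]
  · rw [mul_zero]

end EulerFunctions

lemma derivXi_comm (i j : Fin n) : derivXi i * derivXi j = derivXi j * derivXi i :=
  LinearMap.ext fun _ ↦ pderiv_comm _ _ _

lemma derivXi_mul_derivU (i j : Fin n) : derivXi i * derivU j = derivU j * derivXi i :=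
  LinearMap.ext fun _ ↦ pderiv_comm _ _ _

lemma derivU_comm (i j : Fin n) : derivU i * derivU j = derivU j * derivU i :=
  LinearMap.ext fun _ ↦ pderiv_comm _ _ _

lemma derivXi_mul_mulU (i j : Fin n) : derivXi i * mulU j = mulU j * derivXi i := by
  refine LinearMap.ext fun φ ↦ ?_
  simp only [End.mul_apply, derivXi_apply, mulU_apply, Derivation.leibniz, pderiv_inr_X_inl,
    smul_eq_mul, mul_zero, add_zero]

lemma derivU_mul_mulXi (i j : Fin n) : derivU i * mulXi j = mulXi j * derivU i := by
  refine LinearMap.ext fun φ ↦ ?_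
  simp only [End.mul_apply, derivU_apply, mulXi_apply, Derivation.leibniz, pderiv_inl_X_inr,
    smul_eq_mul, mul_zero, add_zero]

lemma derivXi_mul_mulXi (i j : Fin n) :
    derivXi i * mulXi j = mulXi j * derivXi i + if i = j then 1 else 0 := by
  refine LinearMap.ext fun φ ↦ ?_
  simp only [End.mul_apply, derivXi_apply, mulXi_apply, Derivation.leibniz, pderiv_inr_X_inr,
    smul_eq_mul, LinearMap.add_apply, mul_ite, mul_one, mul_zero]
  split_ifs <;> rfl

lemma derivU_mul_mulU (i j : Fin n) :
    derivU i * mulU j = mulU j * derivU i + if i = j then 1 else 0 := by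
  refine LinearMap.ext fun φ ↦ ?_
  simp only [End.mul_apply, derivU_apply, mulU_apply, Derivation.leibniz, pderiv_inl_X_inl,
    smul_eq_mul, LinearMap.add_apply, mul_ite, mul_one, mul_zero]
  split_ifs <;> rfl

lemma Dlin_eq_sum : Dlin n = ∑ l, derivU l * derivXi l := rfl

lemma Dlin_mul_derivU (i : Fin n) : Dlin n * derivU i = derivU i * Dlin n := by
  simp only [Dlin_eq_sum, sum_mul, mul_sum, mul_assoc, derivXi_mul_derivU]
  simp only [← mul_assoc, derivU_comm i]

lemma Dlin_mul_derivXi (i : Fin n) : Dlin n * derivXi i = derivXi i * Dlin n := by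
  simp only [Dlin_eq_sum, sum_mul, mul_sum, mul_assoc, derivXi_comm _ i]
  simp only [← mul_assoc, derivXi_mul_derivU]

lemma Dlin_mul_mulU (i : Fin n) : Dlin n * mulU i = mulU i * Dlin n + derivXi i := by
  simp only [Dlin_eq_sum, sum_mul, mul_sum, mul_assoc, derivXi_mul_mulU]
  simp only [← mul_assoc, derivU_mul_mulU, add_mul, ite_mul, one_mul, zero_mul, sum_add_distrib,
    sum_ite_eq', mem_univ, if_true]

lemma Dlin_mul_mulXi (i : Fin n) : Dlin n * mulXi i = mulXi i * Dlin n + derivU i := by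
  simp only [Dlin_eq_sum, sum_mul, mul_sum, mul_assoc, derivXi_mul_mulXi, mul_add, mul_ite,
    mul_one, mul_zero, sum_add_distrib, sum_ite_eq', mem_univ, if_true]
  simp only [← mul_assoc, derivU_mul_mulXi]

lemma Dlin_mul_cEnd (c : ℕ → ℂ) : Dlin n * cEnd c = cEnd (fun m ↦ c (m + 1)) * Dlin n := by
  simp only [Dlin_eq_sum, sum_mul, mul_sum, mul_assoc, derivXi_mul_cEnd]
  simp only [← mul_assoc, derivU_mul_cEnd]

lemma Dlin_pow_mul_cEnd (c : ℕ → ℂ) (d : ℕ) :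
    Dlin n ^ d * cEnd c = cEnd (fun m ↦ c (m + d)) * Dlin n ^ d := by
  induction d generalizing c with
  | zero => simp only [pow_zero, one_mul, mul_one, add_zero]
  | succ d ih =>
    rw [pow_succ, mul_assoc, Dlin_mul_cEnd, ← mul_assoc, ih, mul_assoc]
    simp only [add_assoc]

/-- The Hamiltonian operator of the momentum function `uᵢ ξⱼ`. -/
noncomputable def linearField (i j : Fin n) : End ℂ (PolA n) :=
  mulU i * derivU j - mulXi j * derivXi i

/-- The Hamiltonian operator of the momentum function `uᵢ ∑ u_l ξ_l`. -/
noncomputable def quadField (i : Fin n) : End ℂ (PolA n) :=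
  ∑ l, (mulU i * linearField l l - mulU l * (mulXi l * derivXi i))

/-- The operator `T = -(E + λ (n + 1)) ∂/∂ξᵢ` for which `quadField i + ℏ T` acts by derivations
on the standard-ordered star product. -/
noncomputable def quadCorrection (lam : ℂ) (i : Fin n) : End ℂ (PolA n) :=
  cEnd (fun m ↦ -((m : ℂ) + lam * ((n : ℂ) + 1))) * derivXi i

lemma derivXi_mul_linearField (i l : Fin n) : derivXi i * linearField l l =
    mulU l * derivU l * derivXi i - mulXi l * derivXi l * derivXi i -
      if i = l then derivXi l else 0 := by
  simp only [linearField, mul_sub, ← mul_assoc, derivXi_mul_mulU, derivXi_mul_mulXi, add_mul,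
    ite_mul, one_mul, zero_mul, sub_sub]
  simp only [mul_assoc, derivXi_mul_derivU, derivXi_comm i l]

lemma commute_Dlin_linearField (i j : Fin n) : Commute (Dlin n) (linearField i j) := by
  simp only [Commute, SemiconjBy, linearField, mul_sub, sub_mul, ← mul_assoc, Dlin_mul_mulU,
    Dlin_mul_mulXi, add_mul]
  simp only [mul_assoc, Dlin_mul_derivU, Dlin_mul_derivXi, derivXi_mul_derivU]
  abel

lemma commute_cEnd_linearField (c : ℕ → ℂ) (i j : Fin n) :
    Commute (cEnd c) (linearField i j) := by
  simp only [Commute, SemiconjBy, linearField, mul_sub, sub_mul, mul_assoc, derivU_mul_cEnd,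
    derivXi_mul_cEnd]
  simp only [← mul_assoc, cEnd_mul_mulU, cEnd_mul_mulXi]

lemma commute_cEnd_quadField (c : ℕ → ℂ) (i : Fin n) : Commute (cEnd c) (quadField i) := by
  refine Commute.sum_right _ _ _ fun l _ ↦ .sub_right ?_ ?_
  · exact .mul_right (cEnd_mul_mulU c i) (commute_cEnd_linearField c l l)
  · refine .mul_right (cEnd_mul_mulU c l) ?_
    rw [Commute, SemiconjBy, ← mul_assoc, cEnd_mul_mulXi, mul_assoc, mul_assoc, derivXi_mul_cEnd]

lemma Elin_mul_derivXi (i : Fin n) :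
    Elin n * derivXi i = ∑ l, mulXi l * derivXi l * derivXi i := by
  rw [← sum_mul]
  rfl

lemma Dlin_mul_mulU_mul_linearField (i l : Fin n) : Dlin n * (mulU i * linearField l l) =
    mulU i * linearField l l * Dlin n + derivXi i * linearField l l := by
  rw [← mul_assoc, Dlin_mul_mulU, add_mul, mul_assoc, (commute_Dlin_linearField l l).eq, mul_assoc]

lemma Dlin_mul_mulU_mul_mulXi_mul_derivXi (i l : Fin n) :
    Dlin n * (mulU l * (mulXi l * derivXi i)) = mulU l * (mulXi l * derivXi i) * Dlin n +
      (mulU l * derivU l * derivXi i + mulXi l * derivXi l * derivXi i + derivXi i) := by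
  rw [← mul_assoc, Dlin_mul_mulU, add_mul, ← mul_assoc (derivXi l), derivXi_mul_mulXi, if_pos rfl,
    mul_assoc (mulU l), ← mul_assoc (Dlin n), Dlin_mul_mulXi]
  simp only [add_mul, mul_add, mul_assoc, one_mul, Dlin_mul_derivXi, add_assoc]

lemma Dlin_mul_quadField (i : Fin n) : Dlin n * quadField i =
    quadField i * Dlin n - cEnd (fun m ↦ 2 * (m : ℂ) + n + 1) * derivXi i := by
  have summand (l : Fin n) :
      Dlin n * (mulU i * linearField l l - mulU l * (mulXi l * derivXi i)) =
        (mulU i * linearField l l - mulU l * (mulXi l * derivXi i)) * Dlin n -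
          ((mulXi l * derivXi l * derivXi i + mulXi l * derivXi l * derivXi i) + derivXi i +
            if i = l then derivXi l else 0) := by
    rw [mul_sub, Dlin_mul_mulU_mul_linearField, Dlin_mul_mulU_mul_mulXi_mul_derivXi, sub_mul,
      derivXi_mul_linearField]
    abel
  have euler : cEnd (fun m ↦ 2 * (m : ℂ) + n + 1) * derivXi i =
      Elin n * derivXi i + Elin n * derivXi i + n • derivXi i + derivXi i := by
    have split : (fun m : ℕ ↦ 2 * (m : ℂ) + n + 1) =
        (fun m : ℕ ↦ (m : ℂ)) + (fun m : ℕ ↦ (m : ℂ)) + fun _ ↦ ((n : ℂ) + 1) := by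
      ext m
      simp only [Pi.add_apply]
      ring
    rw [split, cEnd_add, cEnd_add, cEnd_const, ← Elin_eq_cEnd]
    simp only [add_mul, smul_mul_assoc, one_mul, add_smul, one_smul, Nat.cast_smul_eq_nsmul,
      add_assoc]
  rw [euler, Elin_mul_derivXi, quadField, mul_sum, sum_mul, sum_congr rfl fun l _ ↦ summand l]
  simp only [sum_sub_distrib, sum_add_distrib, sum_const, card_univ, Fintype.card_fin,
    sum_ite_eq, mem_univ, if_true]

lemma Dlin_pow_succ_mul_quadField (i : Fin n) (d : ℕ) : Dlin n ^ (d + 1) * quadField i =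
    quadField i * Dlin n ^ (d + 1) -
      cEnd (fun m ↦ ((d : ℂ) + 1) * (2 * m + n + (d + 1))) * (derivXi i * Dlin n ^ d) := by
  induction d with
  | zero =>
    simp only [zero_add, pow_one, pow_zero, Dlin_mul_quadField, Nat.cast_zero, one_mul, mul_one,
      add_assoc]
  | succ d ih =>
    rw [pow_succ', mul_assoc, ih, mul_sub, ← mul_assoc, Dlin_mul_quadField, sub_mul, mul_assoc,
      ← mul_assoc (Dlin n), Dlin_mul_cEnd, mul_assoc, mul_assoc, ← mul_assoc (Dlin n),
      Dlin_mul_derivXi, mul_assoc, ← pow_succ', ← pow_succ', sub_sub, ← add_mul, ← cEnd_add]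
    congr! 3
    ext m
    simp only [Pi.add_apply]
    push_cast
    ring

lemma mul_X_mul {R : Type*} [Ring R] (r F : R⟦X⟧) :
    r * (PowerSeries.X * F) = PowerSeries.X * (r * F) := by
  rw [← mul_assoc, (PowerSeries.commute_X _).eq, mul_assoc]

section NormalOrdering

variable (i : Fin n) (φ : PolA n) (F : (End ℂ (PolA n))⟦X⟧)

lemma stdSeries_mul_mulU_mul : stdSeries n φ * (PowerSeries.C (mulU i) * F) =
    PowerSeries.C (mulU i) * (stdSeries n φ * F) +
      PowerSeries.X * (stdSeries n (derivXi i φ) * F) := by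
  rw [← mul_assoc, stdSeries_mul_mulU, add_mul, mul_assoc, mul_assoc]

lemma stdSeries_mul_mulXi_mul : stdSeries n φ * (PowerSeries.C (mulXi i) * F) =
    PowerSeries.C (mulXi i) * (stdSeries n φ * F) := by
  rw [← mul_assoc, stdSeries_mul_mulXi, mul_assoc]

lemma derivXi_mul_stdSeries_mul : PowerSeries.C (derivXi i) * (stdSeries n φ * F) =
    stdSeries n φ * (PowerSeries.C (derivXi i) * F) + stdSeries n (derivXi i φ) * F := by
  rw [← mul_assoc, derivXi_mul_stdSeries, add_mul, mul_assoc]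

end NormalOrdering

lemma actsByDerivations_derivU (i : Fin n) :
    ActsByDerivations (derivU i) 0 (stdSeries n) := fun φ ↦ by
  simp [perturb, derivU_mul_stdSeries]

lemma actsByDerivations_derivXi (i : Fin n) :
    ActsByDerivations 0 (derivXi i) (stdSeries n) := fun φ ↦ by
  simp only [perturb, map_zero, zero_add, add_zero, LinearMap.zero_apply, mul_assoc,
    derivXi_mul_stdSeries, mul_X_mul (stdSeries n φ), mul_add]

lemma actsByDerivations_linearField (i j : Fin n) :
    ActsByDerivations (linearField i j) 0 (stdSeries n) := fun φ ↦ by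
  simp only [perturb, linearField, map_sub, map_mul, map_zero, mul_zero, add_zero, sub_mul,
    mul_sub, mul_assoc, LinearMap.sub_apply, End.mul_apply, LinearMap.zero_apply,
    derivU_mul_stdSeries, derivXi_mul_stdSeries, stdSeries_mul_mulU_mul,
    stdSeries_mul_mulXi_mul, stdSeries_mulU, stdSeries_mulXi, mul_add]
  abel

lemma actsByDerivations_quadField_summand (i l : Fin n) :
    ActsByDerivations (mulU l * (mulXi l * derivXi i) - mulU i * linearField l l)
      (mulXi l * derivXi l * derivXi i) (stdSeries n) := fun φ ↦ by
  have hX (r : End ℂ (PolA n)) F := mul_X_mul (PowerSeries.C r) F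
  have hQ φ F := mul_X_mul (stdSeries n φ) F
  simp only [perturb, linearField, map_sub, map_mul, add_mul, sub_mul, mul_add, mul_sub, mul_assoc,
    LinearMap.sub_apply, End.mul_apply, derivU_mul_stdSeries, derivXi_mul_stdSeries,
    derivXi_mul_stdSeries_mul, stdSeries_mul_mulU_mul, stdSeries_mul_mulXi_mul, stdSeries_mulU,
    stdSeries_mulXi, hX, hQ]
  abel

lemma quadCorrection_eq_neg_one_smul (lam : ℂ) (i : Fin n) : quadCorrection lam i =
    (-1 : ℂ) • (∑ l, mulXi l * derivXi l * derivXi i + (lam * ((n : ℂ) + 1)) • derivXi i) := by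
  have split : (fun m : ℕ ↦ -((m : ℂ) + lam * ((n : ℂ) + 1))) =
      (fun _ ↦ -1) * ((fun m : ℕ ↦ (m : ℂ)) + fun _ ↦ lam * ((n : ℂ) + 1)) :=
    funext fun _ ↦ (neg_one_mul _).symm
  rw [quadCorrection, split, ← cEnd_mul_cEnd, cEnd_add, cEnd_const, cEnd_const, ← Elin_eq_cEnd,
    smul_one_mul, smul_mul_assoc, add_mul, Elin_mul_derivXi, smul_one_mul]

lemma actsByDerivations_quadField (lam : ℂ) (i : Fin n) :
    ActsByDerivations (quadField i) (quadCorrection lam i) (stdSeries n) := by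
  have h := ((ActsByDerivations.sum fun l (_ : l ∈ univ) ↦
    actsByDerivations_quadField_summand i l).add
      ((actsByDerivations_derivXi i).smul (lam * ((n : ℂ) + 1)))).smul (-1)
  have hH : quadField i =
      (-1 : ℂ) • ∑ l, (mulU l * (mulXi l * derivXi i) - mulU i * linearField l l) :=
    LinearMap.ext fun φ ↦ by simp [quadField, LinearMap.sum_apply]
  rwa [← quadCorrection_eq_neg_one_smul, smul_zero, add_zero, ← hH] at h

section EulerSeries

/-- The formal operator `∑ d, ℏ ^ d c_d(E) ∘ D ^ d`. -/
noncomputable def eulerSeries (n : ℕ) (c : ℕ → ℕ → ℂ) : (End ℂ (PolA n))⟦X⟧ :=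
  PowerSeries.mk fun d ↦ cEnd (c d) * Dlin n ^ d

variable {c : ℕ → ℕ → ℂ}

lemma coeff_eulerSeries (d : ℕ) :
    PowerSeries.coeff d (eulerSeries n c) = cEnd (c d) * Dlin n ^ d :=
  PowerSeries.coeff_mk _ _

lemma eulerSeries_mul_C {H : End ℂ (PolA n)} (hE : ∀ c, Commute (cEnd c) H)
    (hD : Commute (Dlin n) H) :
    eulerSeries n c * PowerSeries.C H = perturb H 0 * eulerSeries n c := by
  ext1 d
  simpa [perturb, coeff_eulerSeries] using ((hE (c d)).mul_left (hD.pow_left d)).eq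

lemma C_mul_eulerSeries {H : End ℂ (PolA n)} (hE : ∀ c, Commute (cEnd c) H)
    (hD : Commute (Dlin n) H) :
    PowerSeries.C H * eulerSeries n c = eulerSeries n c * perturb H 0 := by
  simpa [perturb] using (eulerSeries_mul_C (c := c) hE hD).symm

lemma cEnd_mul_Dlin_pow_succ_mul_quadField (b : ℕ → ℂ) (i : Fin n) (d : ℕ) :
    cEnd b * Dlin n ^ (d + 1) * quadField i =
      quadField i * (cEnd b * Dlin n ^ (d + 1)) -
        cEnd (fun m ↦ b m * (((d : ℂ) + 1) * (2 * m + n + (d + 1)))) *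
          (derivXi i * Dlin n ^ d) := by
  rw [mul_assoc, Dlin_pow_succ_mul_quadField, mul_sub, ← mul_assoc,
    (commute_cEnd_quadField b i).eq, mul_assoc, ← mul_assoc (cEnd b), cEnd_mul_cEnd]
  rfl

variable {lam : ℂ}

lemma eulerSeries_mul_C_quadField (i : Fin n)
    (hc : ∀ d m : ℕ, c (d + 1) m * (((d : ℂ) + 1) * (2 * m + n + (d + 1))) =
      (m + lam * ((n : ℂ) + 1)) * c d (m + 1)) :
    eulerSeries n c * PowerSeries.C (quadField i) =
      perturb (quadField i) (quadCorrection lam i) * eulerSeries n c := by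
  ext1 d
  rw [PowerSeries.coeff_mul_C]
  cases d with
  | zero =>
    simp only [coeff_zero_perturb_mul, coeff_eulerSeries, pow_zero, mul_one,
      (commute_cEnd_quadField (c 0) i).eq]
  | succ d =>
    have correction : quadCorrection lam i * (cEnd (c d) * Dlin n ^ d) =
        cEnd (fun m ↦ -(m + lam * ((n : ℂ) + 1)) * c d (m + 1)) * (derivXi i * Dlin n ^ d) := by
      rw [quadCorrection, mul_assoc, ← mul_assoc (derivXi i), derivXi_mul_cEnd, mul_assoc,
        ← mul_assoc, cEnd_mul_cEnd]
      rfl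
    simp only [coeff_succ_perturb_mul, coeff_eulerSeries, correction,
      cEnd_mul_Dlin_pow_succ_mul_quadField, hc, sub_cEnd_mul, neg_mul]
    rfl

lemma C_quadField_mul_eulerSeries (i : Fin n)
    (hc : ∀ d m : ℕ, c (d + 1) m * (((d : ℂ) + 1) * (2 * m + n + (d + 1))) =
      -(c d m * ((m + d : ℕ) + lam * ((n : ℂ) + 1)))) :
    PowerSeries.C (quadField i) * eulerSeries n c =
      eulerSeries n c * perturb (quadField i) (quadCorrection lam i) := by
  ext1 d
  rw [PowerSeries.coeff_C_mul]
  cases d with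
  | zero =>
    simp only [coeff_zero_mul_perturb, coeff_eulerSeries, pow_zero, mul_one,
      (commute_cEnd_quadField (c 0) i).eq]
  | succ d =>
    have correction : cEnd (c d) * Dlin n ^ d * quadCorrection lam i =
        cEnd (fun m ↦ -(c d m * ((m + d : ℕ) + lam * ((n : ℂ) + 1)))) *
          (derivXi i * Dlin n ^ d) := by
      have hD : Commute (Dlin n ^ d) (derivXi i) := .pow_left (Dlin_mul_derivXi i) d
      rw [quadCorrection, ← mul_assoc, mul_assoc (cEnd (c d)), Dlin_pow_mul_cEnd,
        ← mul_assoc, cEnd_mul_cEnd, mul_assoc, hD.eq]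
      simp only [← mul_neg]
      rfl
    simp only [coeff_succ_mul_perturb, coeff_eulerSeries, correction,
      cEnd_mul_Dlin_pow_succ_mul_quadField, hc, sub_add_cancel]

end EulerSeries

section Scalars

lemma inv_mul_mul_div_mul {K : Type*} [Field K] {f e x y P : K} (he : e ≠ 0) (hy : y ≠ 0) :
    ((e * f)⁻¹ * (P * (x / y))) * (e * y) = x * (f⁻¹ * P) := by
  rw [mul_inv]
  field_simp

lemma two_mul_add_add_succ_ne_zero (n m d : ℕ) : 2 * (m : ℂ) + n + (d + 1) ≠ 0 := by
  exact_mod_cast (2 * m + n + d).succ_ne_zero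

variable (n : ℕ) (lam : ℂ) (d m : ℕ)

lemma hScal_succ_mul : hScal n lam (d + 1) m * (((d : ℂ) + 1) * (2 * m + n + (d + 1))) =
    (m + lam * ((n : ℂ) + 1)) * hScal n lam d (m + 1) := by
  have shift (j : ℕ) :
      ((m : ℂ) + ((j + 1 : ℕ) : ℂ) + lam * (n + 1)) / (2 * m + (j + 1 : ℕ) + n + (d + 1 : ℕ)) =
        ((m + 1 : ℕ) + j + lam * (n + 1)) / (2 * (m + 1 : ℕ) + j + n + d) := by
    push_cast
    congr 1 <;> ring
  have last : 2 * (m : ℂ) + (0 : ℕ) + n + (d + 1 : ℕ) = 2 * m + n + (d + 1) := by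
    push_cast
    ring
  rw [hScal, hScal, prod_range_succ', prod_congr rfl fun j _ ↦ shift j, Nat.factorial_succ, last,
    Nat.cast_mul, Nat.cast_add_one, Nat.cast_zero, add_zero,
    inv_mul_mul_div_mul (Nat.cast_add_one_ne_zero d) (two_mul_add_add_succ_ne_zero n m d)]

lemma gScal_succ_mul : gScal n lam (d + 1) m * (((d : ℂ) + 1) * (2 * m + n + (d + 1))) =
    -(gScal n lam d m * ((m + d : ℕ) + lam * ((n : ℂ) + 1))) := by
  have last : 2 * (m : ℂ) + d + n + 1 = 2 * m + n + (d + 1) := by ring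
  rw [gScal, gScal, prod_range_succ, Nat.factorial_succ, last, Nat.cast_mul, Nat.cast_add_one,
    inv_mul_mul_div_mul (Nat.cast_add_one_ne_zero d) (two_mul_add_add_succ_ne_zero n m d)]
  push_cast
  ring

end Scalars

section StarProduct

lemma sum_range_ite_eq_sum_antidiagonal {M : Type*} [AddCommMonoid M]
    (f : ℕ → ℕ → ℕ → ℕ → M) (p : ℕ) :
    (∑ i ∈ range (p + 1), ∑ j ∈ range (p + 1), ∑ k ∈ range (p + 1), ∑ m ∈ range (p + 1),
        if i + j + k + m = p then f i j k m else 0) =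
      ∑ x ∈ antidiagonal p, ∑ y ∈ antidiagonal x.2, ∑ z ∈ antidiagonal y.1,
        f z.1 y.2 z.2 x.1 := by
  simp only [← sum_filter, sum_sigma']
  refine sum_nbij'
    (fun w ↦ ⟨(w.2.2.2, w.1 + w.2.1 + w.2.2.1), (w.1 + w.2.2.1, w.2.1), (w.1, w.2.2.1)⟩)
    (fun s ↦ ⟨s.2.2.1, s.2.1.2, s.2.2.2, s.1.1⟩) ?_ ?_ ?_ ?_ ?_
  all_goals
    simp only [mem_sigma, mem_range, mem_filter, HasAntidiagonal.mem_antidiagonal]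
    grind

lemma starCoeff_eq_sum {K V : Type*} [CommRing K] [AddCommGroup V] [Module K V]
    (G : (End K V)⟦X⟧) (Q : V →ₗ[K] (End K V)⟦X⟧) (B : (End K V)⟦X⟧) (p : ℕ) (φ ψ : V) :
    starCoeff G Q B p φ ψ =
      ∑ x ∈ antidiagonal p, ∑ y ∈ antidiagonal x.2, ∑ z ∈ antidiagonal y.1,
        PowerSeries.coeff x.1 G (PowerSeries.coeff z.2 (Q (PowerSeries.coeff z.1 B φ))
          (PowerSeries.coeff y.2 B ψ)) := by
  simp only [starCoeff_apply, leftStar_apply, PowerSeries.coeff_mul, coeff_compSeries,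
    LinearMap.sum_apply, End.mul_apply, map_sum]

lemma Dop_iterate (d : ℕ) (φ : PolA n) : Dop^[d] φ = (Dlin n ^ d) φ := by
  have h : (Dop : PolA n → PolA n) = Dlin n := by
    ext1 φ
    simp [Dop, Dlin, LinearMap.sum_apply]
  rw [h, End.pow_apply]

lemma Nop_eq_coeff_stdSeries (k : ℕ) (φ ψ : PolA n) :
    Nop k φ ψ = PowerSeries.coeff k (stdSeries n φ) ψ := by
  rw [stdSeries, coeff_pairingSeries, derivPairing_eq_sum_foldr]
  rfl

lemma C_eq_starCoeff (lam : ℂ) (p : ℕ) (φ ψ : PolA n) : C n lam p φ ψ =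
    starCoeff (eulerSeries n (gScal n lam)) (stdSeries n) (eulerSeries n (hScal n lam)) p φ ψ := by
  simp only [C, bg, bh, sum_range_ite_eq_sum_antidiagonal, starCoeff_eq_sum, coeff_eulerSeries,
    End.mul_apply, cEnd_apply, Dop_iterate, Nop_eq_coeff_stdSeries]

theorem C_equivariant_of_commute {H : End ℂ (PolA n)} (hE : ∀ c, Commute (cEnd c) H)
    (hD : Commute (Dlin n) H) (hQ : ActsByDerivations H 0 (stdSeries n)) (lam : ℂ) (p : ℕ)
    (φ ψ : PolA n) :
    H (C n lam p φ ψ) = C n lam p (H φ) ψ + C n lam p φ (H ψ) := by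
  simpa only [C_eq_starCoeff] using
    starCoeff_equivariant (C_mul_eulerSeries hE hD) hQ (eulerSeries_mul_C hE hD) p φ ψ

theorem C_equivariant_quadField (lam : ℂ) (i : Fin n) (p : ℕ) (φ ψ : PolA n) :
    quadField i (C n lam p φ ψ) =
      C n lam p (quadField i φ) ψ + C n lam p φ (quadField i ψ) := by
  simpa only [C_eq_starCoeff] using
    starCoeff_equivariant (C_quadField_mul_eulerSeries i (gScal_succ_mul n lam))
      (actsByDerivations_quadField lam i)
      (eulerSeries_mul_C_quadField i (hScal_succ_mul n lam)) p φ ψ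

end StarProduct

section Hamiltonian

/-- The linear map `μ ↦ {μ, ·}` sending a function to its Hamiltonian operator. -/
noncomputable def hamiltonian (n : ℕ) : PolA n →ₗ[ℂ] End ℂ (PolA n) :=
  ∑ l, ((LinearMap.mul ℂ (PolA n)).compl₁₂ (derivXi l) (derivU l) -
    (LinearMap.mul ℂ (PolA n)).compl₁₂ (derivU l) (derivXi l))

lemma hamiltonian_apply (μ φ : PolA n) : hamiltonian n μ φ = pb μ φ := by
  simp [hamiltonian, pb, derivU, derivXi, LinearMap.sum_apply]

lemma hamiltonian_mul (μ ν φ : PolA n) :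
    hamiltonian n (μ * ν) φ = μ * hamiltonian n ν φ + ν * hamiltonian n μ φ := by
  simp only [hamiltonian_apply, pb, Derivation.leibniz, smul_eq_mul, mul_sum, ← sum_add_distrib]
  exact sum_congr rfl fun l _ ↦ by ring

lemma hamiltonian_u (i : Fin n) (φ : PolA n) :
    hamiltonian n (X (Sum.inl i)) φ = -derivXi i φ := by
  simp only [hamiltonian_apply, pb, pderiv_inr_X_inl, pderiv_inl_X_inl, zero_mul, zero_sub,
    ite_mul, one_mul, sum_neg_distrib, sum_ite_eq', mem_univ, if_true, derivXi_apply]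

lemma hamiltonian_xi (i : Fin n) : hamiltonian n (X (Sum.inr i)) = derivU i :=
  LinearMap.ext fun φ ↦ by
    simp only [hamiltonian_apply, pb, pderiv_inl_X_inr, pderiv_inr_X_inr, zero_mul, sub_zero,
      ite_mul, one_mul, sum_ite_eq', mem_univ, if_true, derivU_apply]

lemma hamiltonian_u_mul_xi (i j : Fin n) :
    hamiltonian n (X (Sum.inl i) * X (Sum.inr j)) = linearField i j :=
  LinearMap.ext fun φ ↦ by
    simp only [hamiltonian_mul, hamiltonian_u, hamiltonian_xi, linearField, LinearMap.sub_apply,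
      End.mul_apply, mulU_apply, mulXi_apply, mul_neg, ← sub_eq_add_neg]

lemma hamiltonian_u_mul_sum (i : Fin n) :
    hamiltonian n (X (Sum.inl i) * ∑ k, X (Sum.inl k) * X (Sum.inr k)) = quadField i :=
  LinearMap.ext fun φ ↦ by
    simp only [hamiltonian_mul, hamiltonian_u, map_sum, hamiltonian_u_mul_xi, quadField,
      LinearMap.sum_apply, LinearMap.sub_apply, End.mul_apply, mulU_apply, mulXi_apply, mul_sum,
      mul_neg, mul_assoc, ← sub_eq_add_neg, sum_sub_distrib]

end Hamiltonian

end Generators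

end LO

/-- each `C^λ_p` is infinitesimally equivariant for the Hamiltonian
`sl_{n+1}(ℝ)`-action: `{μ, C^λ_p(φ,ψ)} = C^λ_p({μ,φ},ψ) + C^λ_p(φ,{μ,ψ})` for all
momentum functions `μ ∈ M`. -/
theorem stmt_10 (n : ℕ) (hn : 1 ≤ n) (lam : ℂ) (p : ℕ) (μ : PolA n)
    (hμ : μ ∈ LO.momSpan n) (φ ψ : PolA n) :
    LO.pb μ (LO.C n lam p φ ψ) =
      LO.C n lam p (LO.pb μ φ) ψ + LO.C n lam p φ (LO.pb μ ψ) := by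
  simp only [← LO.hamiltonian_apply]
  induction hμ using Submodule.span_induction with
  | mem μ hμ =>
    obtain (⟨i, rfl⟩ | ⟨⟨i, j⟩, rfl⟩) | ⟨i, rfl⟩ := hμ
    · rw [LO.hamiltonian_xi]
      exact LO.C_equivariant_of_commute (fun c ↦ (LO.derivU_mul_cEnd c i).symm)
        (LO.Dlin_mul_derivU i) (LO.actsByDerivations_derivU i) lam p φ ψ
    · rw [LO.hamiltonian_u_mul_xi]
      exact LO.C_equivariant_of_commute (fun c ↦ LO.commute_cEnd_linearField c i j)
        (LO.commute_Dlin_linearField i j) (LO.actsByDerivations_linearField i j) lam p φ ψ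
    · rw [LO.hamiltonian_u_mul_sum]
      exact LO.C_equivariant_quadField lam i p φ ψ
  | zero => simp [LO.C_eq_starCoeff]
  | add μ ν _ _ hμ hν =>
    simp only [LO.C_eq_starCoeff, map_add, LinearMap.add_apply] at hμ hν ⊢
    rw [hμ, hν, add_add_add_comm]
  | smul a μ _ hμ =>
    simp only [LO.C_eq_starCoeff, map_smul, LinearMap.smul_apply] at hμ ⊢
    rw [hμ, smul_add]
end

section
/- (Proposition 3) Let R be the unital ℂ-subalgebra of A generated by the momentum functions M. Then for every λ ∈ ℂ, every p ≥ 0, and all φ, ψ ∈ R, one has C^λ_p(φ,ψ) ∈ R; that is, ⋆_λ restricts to a graded star product on the momentum algebra R. -/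
open MvPolynomial

/-!
Polynomials in homogeneous coordinates `x_0, …, x_n` and momenta `p_0, …, p_n` restrict to `A` by
`x_0 = 1` and `r := Σ_a x_a p_a = 0`; the restriction `Θ` maps the polynomials of bidegree `(m, m)`
onto the `m`-fold products of momentum functions. By the Fischer decomposition every polynomial of
bidegree `(m, m)` is a sum of products `r^k h` with `h` harmonic, so it suffices to quantize
harmonic polynomials, and there the scalars `h^λ_d` add up to
`Σ_d ħ^d bh^λ_d (Θ h) = T_{λ(n+1)+m} h`, where `T_x P := Θ((1 - ħ ∂/∂p_0)^(x-1) P)`.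

The span `U` of all `ħ^k T_{λ(n+1)+m} P` with `P` of bidegree `(m, m)` is closed under the standard
ordered star product: the symbols `T_{λ(n+1)+1} p_b` and the functions `Θ x_a` act on it by
associative left multiplication, and they produce the `T_{λ(n+1)+m} P` from `1`. Since
`T_{x+1} (r P)` is a multiple of `ħ T_x P`, every element of `U` is a combination of `ħ`-multiples
of quantizations of elements of `R`. Hence `U` is the `ħ`-span of the quantization of `R`.
-/

namespace LecomteOvsienko

open LO hiding C
open Finset

section Scalars

lemma eval_ascPochhammer_eq_prod_range {R : Type*} [CommSemiring R] (x : R) (d : ℕ) :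
    (ascPochhammer R d).eval x = ∏ j ∈ range d, (x + j) := by
  induction d with
  | zero => simp
  | succ d ih => rw [ascPochhammer_succ_eval, ih, prod_range_succ]

lemma hScal_eq_div_ascFactorial (n : ℕ) (lam : ℂ) (d m : ℕ) :
    hScal n lam d m = (ascPochhammer ℂ d).eval (m + lam * (n + 1)) /
      (d.factorial * (2 * m + n + d).ascFactorial d) := by
  rw [hScal, prod_div_distrib, eval_ascPochhammer_eq_prod_range, Nat.ascFactorial_eq_prod_range,
    div_mul_eq_div_div_swap, inv_mul_eq_div]
  push_cast
  simp only [add_right_comm]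

lemma gScal_eq_div_ascFactorial (n : ℕ) (lam : ℂ) (d m : ℕ) :
    gScal n lam d m = (-1) ^ d * (ascPochhammer ℂ d).eval (m + lam * (n + 1)) /
      (d.factorial * (2 * m + n + 1).ascFactorial d) := by
  have hneg (j : ℕ) : -(m : ℂ) - j - lam * (n + 1) = -1 * (m + lam * (n + 1) + j) := by ring
  rw [gScal, prod_div_distrib, eval_ascPochhammer_eq_prod_range, Nat.ascFactorial_eq_prod_range,
    div_mul_eq_div_div_swap, inv_mul_eq_div]
  simp only [hneg, prod_mul_distrib, prod_const, card_range]
  push_cast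
  simp only [add_right_comm]

lemma eval_ascPochhammer_add {R : Type*} [CommSemiring R] (x : R) (k l : ℕ) :
    (ascPochhammer R (k + l)).eval x =
      (ascPochhammer R k).eval x * (ascPochhammer R l).eval (x + k) := by
  simp [← ascPochhammer_mul]

lemma ascFactorial_add_add (n s : ℕ) {i m q : ℕ} (him : i + m = q + 1) :
    (2 * s + n + 1).ascFactorial (m + q + i) = (2 * s + n + 1).ascFactorial m *
      (2 * s + n + 1 + m).ascFactorial q * (2 * (s + m) + n + i).ascFactorial i := by
  rw [← Nat.ascFactorial_mul_ascFactorial, ← Nat.ascFactorial_mul_ascFactorial]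
  congr 2
  lia

lemma gScal_mul_hScal (n : ℕ) (lam : ℂ) (s : ℕ) {i m q : ℕ} (him : i + m = q + 1) :
    gScal n lam m s * hScal n lam i (s + m) =
      (ascPochhammer ℂ (q + 1)).eval (s + lam * (n + 1)) /
          ((q + 1).factorial * (2 * s + n + 1).ascFactorial (m + q + i)) *
        ((-1) ^ m * (q + 1).choose m * (ascPochhammer ℂ q).eval (2 * s + n + 1 + m : ℂ)) := by
  have hnum : (ascPochhammer ℂ (q + 1)).eval (s + lam * (n + 1)) =
      (ascPochhammer ℂ m).eval (s + lam * (n + 1)) *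
        (ascPochhammer ℂ i).eval ((s + m : ℕ) + lam * (n + 1)) := by
    rw [← him, add_comm i, eval_ascPochhammer_add]
    push_cast
    rw [add_right_comm]
  have hchoose : (q + 1).choose m * (i.factorial * m.factorial) = (q + 1).factorial := by
    rw [← him, ← mul_assoc, Nat.add_choose_mul_factorial_mul_factorial]
  have hmid : (ascPochhammer ℂ q).eval (2 * s + n + 1 + m : ℂ) =
      (2 * s + n + 1 + m).ascFactorial q := by
    rw [← ascPochhammer_nat_eq_natCast_ascFactorial]
    push_cast
    rfl
  have hpos (a k : ℕ) : ((a + 1).ascFactorial k : ℂ) ≠ 0 := by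
    exact_mod_cast (Nat.ascFactorial_pos a k).ne'
  have hm := hpos (2 * s + n) m
  have hq := hpos (2 * s + n + m) q
  have hi : ((2 * (s + m) + n + i).ascFactorial i : ℂ) ≠ 0 := by
    cases i with
    | zero => simp
    | succ i => exact hpos _ _
  rw [gScal_eq_div_ascFactorial, hScal_eq_div_ascFactorial, hnum, ascFactorial_add_add n s him,
    hmid, ← hchoose]
  have hbinom : ((q + 1).choose m : ℂ) ≠ 0 := by
    exact_mod_cast (Nat.choose_pos (by lia)).ne'
  have hifac : (i.factorial : ℂ) ≠ 0 := by exact_mod_cast i.factorial_ne_zero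
  have hmfac : (m.factorial : ℂ) ≠ 0 := by exact_mod_cast m.factorial_ne_zero
  rw [add_right_comm (2 * s + n)] at hq
  push_cast
  field_simp

/-- The alternating sum is a `(q + 1)`-st finite difference of a polynomial of degree `q`. -/
lemma sum_gScal_mul_hScal (n : ℕ) (lam : ℂ) (s q : ℕ) :
    ∑ x ∈ antidiagonal (q + 1), gScal n lam x.1 s * hScal n lam x.2 (s + x.1) = 0 := by
  have hfwd := congrFun (Polynomial.fwdDiff_iter_eq_zero_of_degree_lt
    (P := ascPochhammer ℂ q) (n := q + 1) (by simp)) (2 * s + n + 1 : ℂ)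
  rw [fwdDiff_iter_eq_sum_shift, Pi.zero_apply] at hfwd
  rw [Nat.sum_antidiagonal_eq_sum_range_succ fun m i ↦ gScal n lam m s * hScal n lam i (s + m)]
  refine (sum_congr rfl fun m hm ↦ ?_).trans ((mul_sum _ _ _).symm.trans (mul_eq_zero_of_right
    ((ascPochhammer ℂ (q + 1)).eval (s + lam * (n + 1)) /
      ((q + 1).factorial * (2 * s + n + 1).ascFactorial (2 * q + 1)) * (-1) ^ (q + 1)) hfwd))
  have hmq : m ≤ q + 1 := Nat.lt_succ_iff.mp (mem_range.mp hm)
  have hsign : (-1 : ℂ) ^ m = (-1) ^ (q + 1) * (-1) ^ (q + 1 - m) := by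
    rw [← pow_add]
    exact neg_one_pow_congr (by grind)
  rw [gScal_mul_hScal n lam s (Nat.sub_add_cancel hmq), hsign,
    show m + q + (q + 1 - m) = 2 * q + 1 by lia]
  simp only [zsmul_eq_mul, nsmul_eq_mul, mul_one]
  push_cast
  ring

lemma multichoose_eq_prod (r : ℂ) (j : ℕ) :
    Ring.multichoose r j = (j.factorial : ℂ)⁻¹ * ∏ i ∈ range j, (r + i) := by
  have h := Ring.factorial_nsmul_multichoose_eq_ascPochhammer r j
  rw [Polynomial.ascPochhammer_smeval_eq_eval, eval_ascPochhammer_eq_prod_range, nsmul_eq_mul] at h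
  rw [← h, inv_mul_cancel_left₀ (by exact_mod_cast j.factorial_ne_zero)]

lemma succ_mul_multichoose_succ (r : ℂ) (j : ℕ) :
    (j + 1) * Ring.multichoose r (j + 1) = r * Ring.multichoose (r + 1) j := by
  have hj : (j + 1 : ℂ) ≠ 0 := by exact_mod_cast j.succ_ne_zero
  simp only [multichoose_eq_prod, prod_range_succ', Nat.factorial_succ, add_assoc, add_comm (1 : ℂ)]
  push_cast
  field_simp
  ring

lemma multichoose_neg_succ (x : ℂ) (j : ℕ) :
    Ring.multichoose (-x) (j + 1) =
      Ring.multichoose (1 - x) (j + 1) - Ring.multichoose (1 - x) j := by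
  have h := Ring.multichoose_succ_succ (-x) j
  rw [neg_add_eq_sub] at h
  rw [h, add_sub_cancel_right]

lemma hScal_mul_prod (n : ℕ) (lam : ℂ) (k p : ℕ) :
    hScal n lam p k * ∏ j ∈ range p, (-(2 * (k + p : ℕ) + n - 1 - j) : ℂ) =
      Ring.multichoose (1 - (lam * (n + 1) + (k + p : ℕ))) p := by
  have hden : ∀ j ∈ range p, (2 * k + j + n + p : ℂ) ≠ 0 := fun j hj ↦ by
    have := mem_range.mp hj
    exact_mod_cast (by lia : 2 * k + j + n + p ≠ 0)
  rw [hScal, multichoose_eq_prod, mul_assoc, ← prod_range_reflect (fun j ↦ (-(_ - (j : ℂ)))),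
    ← prod_mul_distrib, ← prod_range_reflect (fun j ↦ (1 - _ + (j : ℂ)))]
  congr 1
  refine prod_congr rfl fun j hj ↦ ?_
  have hcast : ((p - 1 - j : ℕ) : ℂ) = p - 1 - j := by
    have := mem_range.mp hj
    rw [Nat.sub_sub, Nat.cast_sub (by lia)]
    push_cast
    ring
  rw [hcast, div_mul_eq_mul_div, div_eq_iff (hden j hj)]
  push_cast
  ring

end Scalars

section Derivations

lemma pderiv_comm {σ R : Type*} [CommRing R] (a b : σ) (φ : MvPolynomial σ R) :
    pderiv a (pderiv b φ) = pderiv b (pderiv a φ) := by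
  classical
  have hbracket : ⁅pderiv (R := R) a, pderiv (R := R) b⁆ = 0 := by
    refine MvPolynomial.derivation_ext fun i ↦ ?_
    simp [Derivation.commutator_apply, pderiv_X, Pi.single_apply, apply_ite]
  have happly := Derivation.congr_fun hbracket φ
  rwa [Derivation.commutator_apply, Derivation.zero_apply, sub_eq_zero] at happly

lemma derivation_algHom_apply {σ R A : Type*} [CommSemiring R] [CommSemiring A] [Algebra R A]
    (f : MvPolynomial σ R →ₐ[R] A) (d : Derivation R A A)
    (δ : Derivation R (MvPolynomial σ R) (MvPolynomial σ R))
    (h : ∀ i, d (f (X i)) = f (δ (X i))) (P : MvPolynomial σ R) : d (f P) = f (δ P) := by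
  induction P using MvPolynomial.induction_on with
  | C r => simp [← algebraMap_eq]
  | add P Q hP hQ => simp only [map_add, hP, hQ]
  | mul_X P i hP => simp only [map_mul, Derivation.leibniz, map_add, smul_eq_mul, hP, h]

lemma derivation_sum_apply {ι R A M : Type*} [CommSemiring R] [CommSemiring A] [Algebra R A]
    [AddCommMonoid M] [Module A M] [Module R M] (s : Finset ι) (d : ι → Derivation R A M) (a : A) :
    (∑ i ∈ s, d i) a = ∑ i ∈ s, d i a :=
  (congrFun (map_sum Derivation.coeFnAddMonoidHom d s) a).trans (sum_apply a s _)

variable {R A : Type*} [CommSemiring R] [CommSemiring A] [Algebra R A] {G : Set A}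
  {δ : Derivation R A A}

lemma derivation_mem_span_pow (hδ : ∀ g ∈ G, δ g ∈ Submodule.span R G) {m : ℕ} {a : A}
    (ha : a ∈ Submodule.span R G ^ m) : δ a ∈ Submodule.span R G ^ m := by
  have hspan : Submodule.span R G ≤ (Submodule.span R G).comap δ.toLinearMap :=
    Submodule.span_le.mpr hδ
  induction ha using Submodule.pow_induction_on_left' with
  | algebraMap r => rw [Derivation.map_algebraMap]; exact zero_mem _
  | add a b m _ _ ha hb => rw [map_add]; exact add_mem ha hb
  | mem_mul s hs m a ha ih =>
    rw [Derivation.leibniz, smul_eq_mul, smul_eq_mul, pow_succ', mul_comm a]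
    exact add_mem (Submodule.mul_mem_mul hs ih) (Submodule.mul_mem_mul (hspan hs) ha)

lemma derivation_eq_nsmul_of_mem_span_pow (hδ : ∀ g ∈ G, δ g = g) {m : ℕ} {a : A}
    (ha : a ∈ Submodule.span R G ^ m) : δ a = m • a := by
  have hspan : Set.EqOn δ.toLinearMap LinearMap.id (Submodule.span R G) :=
    LinearMap.eqOn_span hδ
  induction ha using Submodule.pow_induction_on_left' with
  | algebraMap r => rw [Derivation.map_algebraMap, zero_smul]
  | add a b m _ _ ha hb => rw [map_add, ha, hb, smul_add]
  | mem_mul s hs m a _ ih =>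
    have hs' : δ s = s := hspan hs
    rw [Derivation.leibniz, hs', ih, smul_eq_mul, smul_eq_mul, mul_smul_comm, mul_comm a,
      succ_nsmul]

lemma adjoin_toSubmodule_eq_iSup_span_pow (G : Set A) :
    Subalgebra.toSubmodule (Algebra.adjoin R G) = ⨆ m, Submodule.span R G ^ m := by
  refine le_antisymm ?_ (iSup_le fun m ↦ ?_)
  · rw [Algebra.adjoin_eq_span, Submodule.span_le]
    have hclosure (a : A) (ha : a ∈ Submonoid.closure G) : ∃ m, a ∈ Submodule.span R G ^ m := by
      induction ha using Submonoid.closure_induction with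
      | mem g hg => exact ⟨1, by rw [pow_one]; exact Submodule.subset_span hg⟩
      | one => exact ⟨0, by rw [pow_zero]; exact Submodule.one_le.mp le_rfl⟩
      | mul a b _ _ ha hb =>
        obtain ⟨k, hk⟩ := ha
        obtain ⟨l, hl⟩ := hb
        exact ⟨k + l, by rw [pow_add]; exact Submodule.mul_mem_mul hk hl⟩
    intro a ha
    obtain ⟨m, hm⟩ := hclosure a ha
    exact Submodule.mem_iSup_of_mem m hm
  · rw [Submodule.span_pow, Submodule.span_le]
    exact Submonoid.pow_subset (S := (Algebra.adjoin R G).toSubmonoid) Algebra.subset_adjoin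

end Derivations

section CoefficientwiseDerivation

variable {R A : Type*} [CommSemiring R] [CommRing A] [Algebra R A]

/-- The coefficientwise extension of a derivation to formal power series. -/
noncomputable def coeffDerivation (d : Derivation R A A) :
    Derivation R (PowerSeries A) (PowerSeries A) :=
  .mk'
    { toFun F := .mk fun p ↦ d (PowerSeries.coeff p F)
      map_add' F G := by ext1 p; simp only [map_add, PowerSeries.coeff_mk]
      map_smul' a F := by
        ext1 p
        simp only [PowerSeries.coeff_smul, Derivation.map_smul, PowerSeries.coeff_mk,
          RingHom.id_apply] }
    fun F G ↦ by
      ext1 p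
      simp only [LinearMap.coe_mk, AddHom.coe_mk, PowerSeries.coeff_mk, map_add, smul_eq_mul,
        PowerSeries.coeff_mul, map_sum, Derivation.leibniz, sum_add_distrib]
      rw [← Nat.sum_antidiagonal_swap (f := fun x ↦ PowerSeries.coeff x.2 G * _)]
      rfl

lemma coeff_coeffDerivation (d : Derivation R A A) (F : PowerSeries A) (p : ℕ) :
    PowerSeries.coeff p (coeffDerivation d F) = d (PowerSeries.coeff p F) :=
  PowerSeries.coeff_mk p fun p ↦ d (PowerSeries.coeff p F)

lemma coeffDerivation_C (d : Derivation R A A) (a : A) :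
    coeffDerivation d (PowerSeries.C a) = PowerSeries.C (d a) := by
  ext1 p
  simp only [coeff_coeffDerivation, PowerSeries.coeff_C, apply_ite d, map_zero]

lemma coeffDerivation_X (d : Derivation R A A) :
    coeffDerivation d (PowerSeries.X : PowerSeries A) = 0 := by
  ext1 p
  simp only [coeff_coeffDerivation, PowerSeries.coeff_X, apply_ite d, map_zero,
    Derivation.map_one_eq_zero, ite_self]

lemma coeffDerivation_X_mul (d : Derivation R A A) (F : PowerSeries A) :
    coeffDerivation d (PowerSeries.X * F) = PowerSeries.X * coeffDerivation d F := by
  rw [Derivation.leibniz, coeffDerivation_X, smul_zero, add_zero, smul_eq_mul]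

lemma coeffDerivation_comm {d e : Derivation R A A} (h : ∀ a, d (e a) = e (d a))
    (F : PowerSeries A) :
    coeffDerivation d (coeffDerivation e F) = coeffDerivation e (coeffDerivation d F) := by
  ext1 p
  simp only [coeff_coeffDerivation, h]

end CoefficientwiseDerivation

section Contraction

variable {R A ι : Type*} [Field R] [CommRing A] [Algebra R A] [Fintype ι]

/-- The bidifferential operators `(1/k!) Σ_α (d_{α_1}⋯d_{α_k} φ) (e_{α_1}⋯e_{α_k} ψ)` attached to
two families of derivations. -/
noncomputable def contraction (d e : ι → Derivation R A A) : ℕ → A →ₗ[R] A →ₗ[R] A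
  | 0 => LinearMap.mul R A
  | k + 1 => ((k + 1 : ℕ) : R)⁻¹ •
      ∑ i, (contraction d e k).compl₁₂ (d i).toLinearMap (e i).toLinearMap

variable {d e : ι → Derivation R A A}

lemma contraction_zero_apply (φ ψ : A) : contraction d e 0 φ ψ = φ * ψ := rfl

lemma contraction_succ_apply (k : ℕ) (φ ψ : A) :
    contraction d e (k + 1) φ ψ =
      ((k + 1 : ℕ) : R)⁻¹ • ∑ i, contraction d e k (d i φ) (e i ψ) := by
  simp only [contraction, LinearMap.smul_apply, LinearMap.sum_apply, LinearMap.compl₁₂_apply,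
    Derivation.coeFn_coe]

lemma contraction_succ_one (k : ℕ) (ψ : A) : contraction d e (k + 1) 1 ψ = 0 := by
  simp only [contraction_succ_apply, Derivation.map_one_eq_zero, map_zero, LinearMap.zero_apply,
    sum_const_zero, smul_zero]

lemma contraction_mul_of_forall_eq_zero {a : A} (ha : ∀ i, d i a = 0) (k : ℕ) (φ ψ : A) :
    contraction d e k (a * φ) ψ = a * contraction d e k φ ψ := by
  induction k generalizing φ ψ with
  | zero => exact mul_assoc a φ ψ
  | succ k ih =>
    have hd (i : ι) : d i (a * φ) = a * d i φ := by
      rw [Derivation.leibniz, ha, smul_zero, add_zero, smul_eq_mul]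
    simp only [contraction_succ_apply, hd, ih, mul_smul_comm, mul_sum]

lemma map_contraction {D : Derivation R A A} (hd : ∀ i φ, D (d i φ) = d i (D φ))
    (he : ∀ i φ, D (e i φ) = e i (D φ)) (k : ℕ) (φ ψ : A) :
    D (contraction d e k φ ψ) = contraction d e k (D φ) ψ + contraction d e k φ (D ψ) := by
  induction k generalizing φ ψ with
  | zero =>
    rw [contraction_zero_apply, contraction_zero_apply, contraction_zero_apply, Derivation.leibniz,
      smul_eq_mul, smul_eq_mul]
    ring
  | succ k ih =>
    simp only [contraction_succ_apply, Derivation.map_smul, map_sum, ih, hd, he, sum_add_distrib,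
      smul_add]

variable [CharZero R]

lemma sum_contraction_eq_smul (k : ℕ) (φ ψ : A) :
    ∑ i, contraction d e k (d i φ) (e i ψ) = ((k + 1 : ℕ) : R) • contraction d e (k + 1) φ ψ := by
  rw [contraction_succ_apply, smul_inv_smul₀ (Nat.cast_ne_zero.mpr k.succ_ne_zero)]

lemma contraction_succ_mul_of_eq_ite [DecidableEq ι] {a : A} {j : ι}
    (ha : ∀ i, d i a = if i = j then 1 else 0) (he : ∀ i ψ, e i (e j ψ) = e j (e i ψ)) (k : ℕ)
    (φ ψ : A) :
    contraction d e (k + 1) (a * φ) ψ =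
      a * contraction d e (k + 1) φ ψ + contraction d e k φ (e j ψ) := by
  have hsum (k : ℕ) (φ ψ : A) : ∑ i, contraction d e k (d i (a * φ)) (e i ψ) =
      ∑ i, contraction d e k (a * d i φ) (e i ψ) + contraction d e k φ (e j ψ) := by
    have hterm (i : ι) : contraction d e k (d i (a * φ)) (e i ψ) =
        contraction d e k (a * d i φ) (e i ψ) +
          if i = j then contraction d e k φ (e i ψ) else 0 := by
      rw [Derivation.leibniz, ha]
      split_ifs <;> simp
    simp only [hterm, sum_add_distrib, sum_ite_eq', mem_univ, if_true]
  induction k generalizing φ ψ with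
  | zero =>
    rw [contraction_succ_apply, contraction_succ_apply, hsum]
    simp [contraction_zero_apply, mul_assoc, mul_sum]
  | succ k ih =>
    have hne : ((k + 1 + 1 : ℕ) : R) ≠ 0 := Nat.cast_ne_zero.mpr (k + 1).succ_ne_zero
    rw [contraction_succ_apply, inv_smul_eq_iff₀ hne, smul_add, ← mul_smul_comm,
      ← sum_contraction_eq_smul, hsum]
    simp only [ih, ← he, sum_add_distrib, ← mul_sum]
    rw [sum_contraction_eq_smul k φ]
    push_cast
    module

end Contraction

section ExpStar

variable {R A ι : Type*} [Field R] [CommRing A] [Algebra R A] [Fintype ι]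

/-- The product `F ⋆ G = μ(exp(ħ Σ_i d_i ⊗ e_i)(F ⊗ G))` on formal power series in `ħ`, where `μ` is
the commutative multiplication. -/
noncomputable def expStar (d e : ι → Derivation R A A) :
    PowerSeries A →ₗ[R] PowerSeries A →ₗ[R] PowerSeries A :=
  .mk₂ R
    (fun F G ↦ .mk fun p ↦ ∑ x ∈ antidiagonal p, PowerSeries.coeff x.2
      (contraction (fun i ↦ coeffDerivation (d i)) (fun i ↦ coeffDerivation (e i)) x.1 F G))
    (fun F F' G ↦ by
      ext1; simp only [map_add, LinearMap.add_apply, sum_add_distrib, PowerSeries.coeff_mk])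
    (fun a F G ↦ by
      ext1
      simp only [map_smul, LinearMap.smul_apply, smul_sum, PowerSeries.coeff_mk,
        PowerSeries.coeff_smul])
    (fun F G G' ↦ by ext1; simp only [map_add, sum_add_distrib, PowerSeries.coeff_mk])
    (fun a F G ↦ by
      ext1; simp only [map_smul, smul_sum, PowerSeries.coeff_mk, PowerSeries.coeff_smul])

variable {d e : ι → Derivation R A A}

lemma coeff_expStar (F G : PowerSeries A) (p : ℕ) :
    PowerSeries.coeff p (expStar d e F G) = ∑ x ∈ antidiagonal p, PowerSeries.coeff x.2
      (contraction (fun i ↦ coeffDerivation (d i)) (fun i ↦ coeffDerivation (e i)) x.1 F G) := by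
  simp only [expStar, LinearMap.mk₂_apply, PowerSeries.coeff_mk]

lemma coeff_contraction_coeffDerivation (k q : ℕ) (F G : PowerSeries A) :
    PowerSeries.coeff q
      (contraction (fun i ↦ coeffDerivation (d i)) (fun i ↦ coeffDerivation (e i)) k F G) =
    ∑ y ∈ antidiagonal q,
      contraction d e k (PowerSeries.coeff y.1 F) (PowerSeries.coeff y.2 G) := by
  induction k generalizing F G with
  | zero => simp only [contraction_zero_apply, PowerSeries.coeff_mul]
  | succ k ih =>
    simp only [contraction_succ_apply, PowerSeries.coeff_smul, map_sum, ih, coeff_coeffDerivation,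
      ← smul_sum]
    rw [sum_comm]

lemma one_expStar (G : PowerSeries A) : expStar d e 1 G = G := by
  ext1 p
  rw [coeff_expStar]
  cases p with
  | zero => simp only [Nat.antidiagonal_zero, sum_singleton, contraction_zero_apply, one_mul]
  | succ p => simp only [Nat.sum_antidiagonal_succ, contraction_zero_apply, one_mul,
      contraction_succ_one, map_zero, sum_const_zero, add_zero]

lemma X_mul_expStar (F G : PowerSeries A) :
    expStar d e (PowerSeries.X * F) G = PowerSeries.X * expStar d e F G := by
  ext1 p
  rw [coeff_expStar]
  simp only [contraction_mul_of_forall_eq_zero fun i ↦ coeffDerivation_X (d i)]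
  cases p with
  | zero => simp only [Nat.antidiagonal_zero, sum_singleton, PowerSeries.coeff_zero_X_mul]
  | succ p => simp only [Nat.sum_antidiagonal_succ', PowerSeries.coeff_zero_X_mul,
      PowerSeries.coeff_succ_X_mul, zero_add, coeff_expStar]

lemma C_mul_expStar {a : A} (ha : ∀ i, d i a = 0) (F G : PowerSeries A) :
    expStar d e (PowerSeries.C a * F) G = PowerSeries.C a * expStar d e F G := by
  have hC (i : ι) : coeffDerivation (d i) (PowerSeries.C a) = 0 := by
    rw [coeffDerivation_C, ha, map_zero]
  ext1 p
  simp only [coeff_expStar, contraction_mul_of_forall_eq_zero hC, PowerSeries.coeff_C_mul, mul_sum]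

lemma coeffDerivation_expStar {D : Derivation R A A} (hd : ∀ i φ, D (d i φ) = d i (D φ))
    (he : ∀ i φ, D (e i φ) = e i (D φ)) (F G : PowerSeries A) :
    coeffDerivation D (expStar d e F G) =
      expStar d e (coeffDerivation D F) G + expStar d e F (coeffDerivation D G) := by
  ext1 p
  simp only [map_add, coeff_coeffDerivation, coeff_expStar, map_sum, ← sum_add_distrib]
  simp only [← coeff_coeffDerivation, ← map_add,
    map_contraction (fun i ↦ coeffDerivation_comm (hd i)) (fun i ↦ coeffDerivation_comm (he i))]

lemma C_mul_expStar_of_eq_ite [CharZero R] [DecidableEq ι] {a : A} {j : ι}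
    (ha : ∀ i, d i a = if i = j then 1 else 0) (he : ∀ i ψ, e i (e j ψ) = e j (e i ψ))
    (F G : PowerSeries A) :
    expStar d e (PowerSeries.C a * F) G = PowerSeries.C a * expStar d e F G +
      PowerSeries.X * expStar d e F (coeffDerivation (e j) G) := by
  have hC (i : ι) : coeffDerivation (d i) (PowerSeries.C a) = if i = j then 1 else 0 := by
    rw [coeffDerivation_C, ha, apply_ite PowerSeries.C, map_one, map_zero]
  ext1 p
  rw [map_add, PowerSeries.coeff_C_mul, coeff_expStar, coeff_expStar]
  cases p with
  | zero => simp only [Nat.antidiagonal_zero, sum_singleton, contraction_zero_apply, mul_assoc,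
      PowerSeries.coeff_zero_X_mul, add_zero, PowerSeries.coeff_C_mul]
  | succ p =>
    simp only [Nat.sum_antidiagonal_succ, contraction_zero_apply, mul_assoc,
      PowerSeries.coeff_C_mul, PowerSeries.coeff_succ_X_mul, coeff_expStar, map_add,
      contraction_succ_mul_of_eq_ite hC fun i ↦ coeffDerivation_comm (he i), sum_add_distrib,
      mul_add, mul_sum, add_assoc]

end ExpStar

variable {n : ℕ}

local notation "ħ" => (PowerSeries.X : PowerSeries (PolA _))
local notation "u[" i "]" => (X (Sum.inl i) : PolA _)
local notation "ξ[" i "]" => (X (Sum.inr i) : PolA _)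
local notation "∂u[" i "]" => (pderiv (Sum.inl i) : Derivation ℂ (PolA _) (PolA _))
local notation "∂ξ[" i "]" => (pderiv (Sum.inr i) : Derivation ℂ (PolA _) (PolA _))
local notation:70 F:70 "⋆" G:71 => expStar (fun i ↦ ∂ξ[i]) (fun i ↦ ∂u[i]) F G

section EulerFunctions

lemma coeff_cE (c : ℕ → ℂ) (φ : PolA n) (d : (Fin n ⊕ Fin n) →₀ ℕ) :
    coeff d (cE c φ) = c (xiDeg d) * coeff d φ := by
  classical
  simp only [cE, coeff_sum, coeff_monomial, sum_ite_eq']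
  split_ifs with hd
  · rfl
  · rw [notMem_support_iff.mp hd, mul_zero]

lemma cE_smul (c : ℕ → ℂ) (a : ℂ) (φ : PolA n) : cE c (a • φ) = a • cE c φ := by
  ext d
  simp only [coeff_cE, coeff_smul, smul_eq_mul, mul_left_comm]

lemma cE_add (c : ℕ → ℂ) (φ ψ : PolA n) : cE c (φ + ψ) = cE c φ + cE c ψ := by
  ext d
  simp only [coeff_cE, coeff_add, mul_add]

lemma cE_cE (b c : ℕ → ℂ) (φ : PolA n) : cE b (cE c φ) = cE (fun m ↦ b m * c m) φ := by
  ext d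
  simp only [coeff_cE, mul_assoc]

lemma sum_cE {ι : Type*} (s : Finset ι) (c : ι → ℕ → ℂ) (φ : PolA n) :
    ∑ i ∈ s, cE (c i) φ = cE (fun m ↦ ∑ i ∈ s, c i m) φ := by
  ext d
  simp only [coeff_sum, coeff_cE, sum_mul]

lemma cE_one (φ : PolA n) : cE (fun _ ↦ 1) φ = φ := by
  ext d
  rw [coeff_cE, one_mul]

lemma cE_zero (φ : PolA n) : cE (fun _ ↦ 0) φ = 0 := by
  ext d
  rw [coeff_cE, zero_mul, coeff_zero]

lemma xiDeg_add (d e : (Fin n ⊕ Fin n) →₀ ℕ) : xiDeg (d + e) = xiDeg d + xiDeg e := by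
  simp only [xiDeg, Finsupp.add_apply, sum_add_distrib]

lemma Dlin_apply (φ : PolA n) :
    Dlin n φ = ∑ i, pderiv (Sum.inl i) (pderiv (Sum.inr i) φ) := by
  simp [Dlin]

lemma Dop_iterate (d : ℕ) (φ : PolA n) : Dop^[d] φ = (Dlin n ^ d) φ := by
  have hD : (Dop : PolA n → PolA n) = Dlin n := funext fun φ ↦ (Dlin_apply φ).symm
  rw [hD, Module.End.pow_apply]

lemma xiDeg_single_inl (i : Fin n) : xiDeg (Finsupp.single (Sum.inl i) 1) = 0 := by
  simp [xiDeg]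

lemma xiDeg_single_inr (i : Fin n) : xiDeg (Finsupp.single (Sum.inr i) 1) = 1 := by
  simp [xiDeg, Finsupp.single_apply]

lemma Dlin_cE (c : ℕ → ℂ) (φ : PolA n) :
    Dlin n (cE c φ) = cE (fun m ↦ c (m + 1)) (Dlin n φ) := by
  ext d
  simp only [Dlin_apply, coeff_sum, coeff_cE, coeff_pderiv, mul_sum, xiDeg_add, xiDeg_single_inl,
    xiDeg_single_inr]
  refine sum_congr rfl fun i _ ↦ ?_
  ring

lemma Dlin_pow_cE (c : ℕ → ℂ) (d : ℕ) (φ : PolA n) :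
    (Dlin n ^ d) (cE c φ) = cE (fun m ↦ c (m + d)) ((Dlin n ^ d) φ) := by
  induction d with
  | zero => simp
  | succ d ih =>
    rw [pow_succ', Module.End.mul_apply, ih, Dlin_cE, Module.End.mul_apply]
    simp only [add_assoc, add_comm 1]

lemma Elin_eq_cE (φ : PolA n) : Elin n φ = cE (fun m ↦ (m : ℂ)) φ := by
  induction φ using MvPolynomial.induction_on' with
  | add φ ψ hφ hψ => rw [map_add, cE_add, hφ, hψ]
  | monomial d r =>
    ext e
    simp only [Elin, LinearMap.comp_apply, LinearMap.sum_apply, LinearMap.mulLeft_apply,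
      Derivation.coeFn_coe, X_mul_pderiv_monomial]
    rw [coeff_cE, ← sum_smul, coeff_smul, coeff_monomial]
    split_ifs with h
    · subst h; simp [xiDeg]
    · simp

lemma cE_smul_of_Elin_eq_smul {a y z : ℂ} {φ : PolA n} (hφ : Elin n φ = z • φ) {c : ℕ → ℂ}
    (hc : ∀ k : ℕ, (k : ℂ) = z → c k * a = y) : cE c (a • φ) = y • φ := by
  ext d
  rw [coeff_cE, coeff_smul, coeff_smul, smul_eq_mul, smul_eq_mul, ← mul_assoc]
  have hd := congrArg (coeff d) hφ
  rw [Elin_eq_cE, coeff_cE, coeff_smul, smul_eq_mul] at hd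
  rcases eq_or_ne (coeff d φ) 0 with h0 | h0
  · rw [h0, mul_zero, mul_zero]
  · rw [hc _ (mul_right_cancel₀ h0 hd)]

lemma bg_bh (lam : ℂ) (m i : ℕ) (φ : PolA n) :
    bg lam m (bh lam i φ) =
      cE (fun s ↦ gScal n lam m s * hScal n lam i (s + m)) ((Dlin n ^ (m + i)) φ) := by
  rw [bg, bh, Dop_iterate, Dop_iterate, Dlin_pow_cE, cE_cE, pow_add, Module.End.mul_apply]

lemma sum_bg_bh_eq_zero (lam : ℂ) (φ : PolA n) (q : ℕ) :
    ∑ x ∈ antidiagonal (q + 1), bg lam x.1 (bh lam x.2 φ) = 0 := by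
  have hterm (x : ℕ × ℕ) (hx : x ∈ antidiagonal (q + 1)) : bg lam x.1 (bh lam x.2 φ) =
      cE (fun s ↦ gScal n lam x.1 s * hScal n lam x.2 (s + x.1)) ((Dlin n ^ (q + 1)) φ) := by
    rw [bg_bh, mem_antidiagonal.mp hx]
  rw [sum_congr rfl hterm, sum_cE]
  simp only [sum_gScal_mul_hScal, cE_zero]

lemma bh_zero (lam : ℂ) (φ : PolA n) : bh lam 0 φ = φ := by
  have hone : hScal n lam 0 = fun _ ↦ 1 := funext fun _ ↦ by simp [hScal]
  rw [bh, hone, cE_one, Function.iterate_zero, id]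

lemma bg_zero (lam : ℂ) (φ : PolA n) : bg lam 0 φ = φ := by
  have hone : gScal n lam 0 = fun _ ↦ 1 := funext fun _ ↦ by simp [gScal]
  rw [bg, hone, cE_one, Function.iterate_zero, id]

lemma bh_add (lam : ℂ) (p : ℕ) (φ ψ : PolA n) : bh lam p (φ + ψ) = bh lam p φ + bh lam p ψ := by
  simp only [bh, Dop_iterate, map_add, cE_add]

lemma bh_smul (lam a : ℂ) (p : ℕ) (φ : PolA n) : bh lam p (a • φ) = a • bh lam p φ := by
  simp only [bh, Dop_iterate, map_smul, cE_smul]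

lemma bg_add (lam : ℂ) (p : ℕ) (φ ψ : PolA n) : bg lam p (φ + ψ) = bg lam p φ + bg lam p ψ := by
  simp only [bg, Dop_iterate, map_add, cE_add]

lemma bg_smul (lam a : ℂ) (p : ℕ) (φ : PolA n) : bg lam p (a • φ) = a • bg lam p φ := by
  simp only [bg, Dop_iterate, map_smul, cE_smul]

end EulerFunctions

section Quantization

/-- The Lecomte–Ovsienko quantization `Σ_p ħ^p bh^λ_p` in the standard ordering, with values in
formal power series in `ħ`. -/
noncomputable def quantize (lam : ℂ) : PolA n →ₗ[ℂ] PowerSeries (PolA n) where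
  toFun φ := .mk fun p ↦ bh lam p φ
  map_add' φ ψ := by
    ext1 p
    simp only [bh_add, PowerSeries.coeff_mk, map_add]
  map_smul' a φ := by
    ext1 p
    simp only [bh_smul, PowerSeries.coeff_mk, PowerSeries.coeff_smul, RingHom.id_apply]

/-- The inverse `Σ_p ħ^p bg^λ_p` of the quantization, extended `ħ`-linearly. -/
noncomputable def dequantize (lam : ℂ) : PowerSeries (PolA n) →ₗ[ℂ] PowerSeries (PolA n) where
  toFun F := .mk fun p ↦ ∑ x ∈ antidiagonal p, bg lam x.1 (PowerSeries.coeff x.2 F)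
  map_add' F G := by
    ext1 p
    simp only [bg_add, PowerSeries.coeff_mk, map_add, sum_add_distrib]
  map_smul' a F := by
    ext1 p
    simp only [bg_smul, PowerSeries.coeff_mk, PowerSeries.coeff_smul, smul_sum, RingHom.id_apply]

lemma coeff_quantize (lam : ℂ) (φ : PolA n) (p : ℕ) :
    PowerSeries.coeff p (quantize lam φ) = bh lam p φ := by
  simp only [quantize, LinearMap.coe_mk, AddHom.coe_mk, PowerSeries.coeff_mk]

lemma coeff_dequantize (lam : ℂ) (F : PowerSeries (PolA n)) (p : ℕ) :
    PowerSeries.coeff p (dequantize lam F) =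
      ∑ x ∈ antidiagonal p, bg lam x.1 (PowerSeries.coeff x.2 F) := by
  simp only [dequantize, LinearMap.coe_mk, AddHom.coe_mk, PowerSeries.coeff_mk]

lemma dequantize_X_mul (lam : ℂ) (F : PowerSeries (PolA n)) :
    dequantize lam (ħ * F) = ħ * dequantize lam F := by
  have hbg_zero (m : ℕ) : bg lam m (0 : PolA n) = 0 := by
    simpa using bg_smul lam 0 m (0 : PolA n)
  ext1 p
  cases p with
  | zero => simp [coeff_dequantize, hbg_zero]
  | succ p =>
    simp [coeff_dequantize, Nat.sum_antidiagonal_succ', PowerSeries.coeff_succ_X_mul, hbg_zero]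

lemma dequantize_quantize (lam : ℂ) (φ : PolA n) :
    dequantize lam (quantize lam φ) = PowerSeries.C φ := by
  ext1 p
  simp only [coeff_dequantize, coeff_quantize]
  cases p with
  | zero => simp [bg_zero, bh_zero]
  | succ q => simp [sum_bg_bh_eq_zero]

lemma dequantize_X_pow_mul_quantize (lam : ℂ) (k : ℕ) (φ : PolA n) :
    dequantize lam (ħ ^ k * quantize lam φ) = ħ ^ k * PowerSeries.C φ := by
  induction k with
  | zero => simp only [pow_zero, one_mul, dequantize_quantize]
  | succ k ih => rw [pow_succ', mul_assoc, dequantize_X_mul, ih, mul_assoc]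

end Quantization

/-- Polynomials in homogeneous coordinates `x_a = X (Sum.inl a)` on the projective space and in
their conjugate momenta `p_a = X (Sum.inr a)`; the index `none` belongs to the coordinate `x_0`
that is set equal to `1` on the affine chart `ℝⁿ`. -/
abbrev HomPoly (n : ℕ) := MvPolynomial (Option (Fin n) ⊕ Option (Fin n)) ℂ

local notation "x[" a "]" => (X (Sum.inl a) : HomPoly _)
local notation "p[" a "]" => (X (Sum.inr a) : HomPoly _)
local notation "∂x[" a "]" => (pderiv (Sum.inl a) : Derivation ℂ (HomPoly _) (HomPoly _))
local notation "∂p[" a "]" => (pderiv (Sum.inr a) : Derivation ℂ (HomPoly _) (HomPoly _))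

/-- Restriction to the affine chart `x_0 = 1` and to the hypersurface `Σ_a x_a p_a = 0`. -/
noncomputable def dehomogenize : HomPoly n →ₐ[ℂ] PolA n :=
  aeval (Sum.elim (fun a ↦ a.elim 1 fun i ↦ u[i])
    fun a ↦ a.elim (-∑ k, u[k] * ξ[k]) fun i ↦ ξ[i])

local notation "Θ" => dehomogenize

section HomogeneousCoordinates

@[simp] lemma dehomogenize_x_none : Θ x[none] = (1 : PolA n) := by simp [dehomogenize]

@[simp] lemma dehomogenize_x_some (i : Fin n) : Θ x[some i] = u[i] := by simp [dehomogenize]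

@[simp] lemma dehomogenize_p_none : Θ p[none] = -∑ k : Fin n, u[k] * ξ[k] := by
  simp [dehomogenize]

@[simp] lemma dehomogenize_p_some (i : Fin n) : Θ p[some i] = ξ[i] := by simp [dehomogenize]

lemma pderiv_xi_dehomogenize (i : Fin n) (P : HomPoly n) :
    ∂ξ[i] (Θ P) = Θ (∂p[some i] P - x[some i] * ∂p[none] P) := by
  classical
  have h := derivation_algHom_apply Θ ∂ξ[i] (∂p[some i] - x[some i] • ∂p[none]) (fun v ↦ ?_) P
  · rwa [Derivation.sub_apply, Derivation.smul_apply, smul_eq_mul] at h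
  · rw [Derivation.sub_apply, Derivation.smul_apply, smul_eq_mul]
    rcases v with (_ | j) | (_ | j) <;> simp [pderiv_X, Pi.single_apply]

lemma pderiv_u_dehomogenize (i : Fin n) (P : HomPoly n) :
    ∂u[i] (Θ P) = Θ (∂x[some i] P - p[some i] * ∂p[none] P) := by
  classical
  have h := derivation_algHom_apply Θ ∂u[i] (∂x[some i] - p[some i] • ∂p[none]) (fun v ↦ ?_) P
  · rwa [Derivation.sub_apply, Derivation.smul_apply, smul_eq_mul] at h
  · rw [Derivation.sub_apply, Derivation.smul_apply, smul_eq_mul]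
    rcases v with (_ | j) | (_ | j) <;> simp [pderiv_X, Pi.single_apply]

/-- The Euler derivation `Σ_a x_a ∂/∂x_a`. -/
noncomputable def eulerX : Derivation ℂ (HomPoly n) (HomPoly n) := ∑ a, x[a] • ∂x[a]

/-- The Euler derivation `Σ_a p_a ∂/∂p_a`. -/
noncomputable def eulerP : Derivation ℂ (HomPoly n) (HomPoly n) := ∑ a, p[a] • ∂p[a]

/-- The second-order operator `Σ_a ∂²/∂x_a∂p_a`, the homogeneous counterpart of `D`. -/
noncomputable def laplacian : Module.End ℂ (HomPoly n) :=
  ∑ a, ∂x[a].toLinearMap ∘ₗ ∂p[a].toLinearMap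

lemma eulerX_apply (P : HomPoly n) : eulerX P = ∑ a, x[a] * ∂x[a] P := by
  simp only [eulerX, derivation_sum_apply, Derivation.smul_apply, smul_eq_mul]

lemma eulerP_apply (P : HomPoly n) : eulerP P = ∑ a, p[a] * ∂p[a] P := by
  simp only [eulerP, derivation_sum_apply, Derivation.smul_apply, smul_eq_mul]

lemma laplacian_apply (P : HomPoly n) : laplacian P = ∑ a, ∂x[a] (∂p[a] P) := by
  simp [laplacian]

lemma Elin_dehomogenize (P : HomPoly n) : Elin n (Θ P) = Θ (eulerP P) := by
  simp only [Elin, LinearMap.sum_apply, LinearMap.comp_apply, LinearMap.mulLeft_apply,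
    Derivation.coeFn_coe, pderiv_xi_dehomogenize, eulerP_apply, Fintype.sum_option, map_sum,
    map_sub, map_add, map_mul, dehomogenize_p_some, dehomogenize_p_none, dehomogenize_x_some,
    sum_sub_distrib, ← mul_assoc, ← sum_mul]
  simp only [mul_comm ξ[_]]
  ring

lemma Dlin_dehomogenize (P : HomPoly n) :
    Dlin n (Θ P) = Θ (laplacian P - n • ∂p[none] P - eulerX (∂p[none] P) -
      eulerP (∂p[none] P)) := by
  have hterm (i : Fin n) : ∂u[i] (∂ξ[i] (Θ P)) =
      Θ (∂x[some i] (∂p[some i] P)) - Θ (∂p[none] P) -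
        Θ (x[some i] * ∂x[some i] (∂p[none] P)) - Θ (p[some i] * ∂p[some i] (∂p[none] P)) +
        u[i] * ξ[i] * Θ (∂p[none] (∂p[none] P)) := by
    rw [pderiv_xi_dehomogenize, pderiv_u_dehomogenize]
    simp only [map_sub, map_mul, Derivation.leibniz, smul_eq_mul, map_add, pderiv_X_self,
      pderiv_X_of_ne, ne_eq, reduceCtorEq, not_false_eq_true, map_one, map_zero,
      dehomogenize_x_some, dehomogenize_p_some, pderiv_comm (Sum.inr none) (Sum.inr (some i))]
    ring
  simp only [Dlin_apply, hterm, laplacian_apply, eulerX_apply, eulerP_apply, Fintype.sum_option,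
    sum_add_distrib, sum_sub_distrib, sum_const, card_univ, Fintype.card_fin, map_sub, map_add,
    map_mul, map_sum, map_nsmul, dehomogenize_x_none, dehomogenize_p_none, ← sum_mul]
  ring

end HomogeneousCoordinates

section Bidegree

/-- The elements `x_a p_b`, which dehomogenize to the momentum functions. -/
def bilinearMonomials (n : ℕ) : Set (HomPoly n) :=
  Set.range fun ab : Option (Fin n) × Option (Fin n) ↦ x[ab.1] * p[ab.2]

/-- The polynomials homogeneous of degree `m` in the `x_a` and of degree `m` in the `p_a`,
described as the `m`-th power of the span of the `x_a p_b`. -/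
noncomputable def bidegree (n m : ℕ) : Submodule ℂ (HomPoly n) :=
  Submodule.span ℂ (bilinearMonomials n) ^ m

lemma bidegree_zero : bidegree n 0 = 1 := pow_zero _

lemma x_mul_p_mul_mem_bidegree (a b : Option (Fin n)) {m : ℕ} {P : HomPoly n}
    (hP : P ∈ bidegree n m) : x[a] * p[b] * P ∈ bidegree n (m + 1) := by
  rw [bidegree, pow_succ']
  exact Submodule.mul_mem_mul (Submodule.subset_span ⟨(a, b), rfl⟩) hP

lemma bidegree_succ_le {m : ℕ} {N : Submodule ℂ (HomPoly n)}
    (hN : ∀ a b, ∀ P ∈ bidegree n m, x[a] * p[b] * P ∈ N) : bidegree n (m + 1) ≤ N := by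
  rw [bidegree, pow_succ', Submodule.mul_le]
  intro s hs P hP
  induction hs using Submodule.span_induction with
  | mem s hs =>
    obtain ⟨⟨a, b⟩, rfl⟩ := hs
    exact hN a b P hP
  | zero => rw [zero_mul]; exact zero_mem _
  | add s t _ _ hs ht => rw [add_mul]; exact add_mem hs ht
  | smul z s _ hs => rw [smul_mul_assoc]; exact Submodule.smul_mem _ z hs

lemma pderiv_x_x (a b : Option (Fin n)) : ∂x[a] x[b] = if a = b then 1 else 0 := by
  classical simp [pderiv_X, Pi.single_apply, eq_comm]

lemma pderiv_p_p (a b : Option (Fin n)) : ∂p[a] p[b] = if a = b then 1 else 0 := by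
  classical simp [pderiv_X, Pi.single_apply, eq_comm]

lemma x_mul_pderiv_x_mem_bidegree (a b : Option (Fin n)) {m : ℕ} {P : HomPoly n}
    (hP : P ∈ bidegree n m) : x[a] * ∂x[b] P ∈ bidegree n m := by
  refine derivation_mem_span_pow (δ := x[a] • ∂x[b]) ?_ hP
  rintro _ ⟨⟨c, d⟩, rfl⟩
  simp only [Derivation.smul_apply, Derivation.leibniz, smul_eq_mul, pderiv_x_x, mul_ite, mul_zero,
    mul_one, pderiv_X_of_ne, ne_eq, reduceCtorEq, not_false_eq_true, zero_add]
  split_ifs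
  · exact Submodule.subset_span ⟨(a, d), mul_comm _ _⟩
  · exact zero_mem _

lemma p_mul_pderiv_p_mem_bidegree (a b : Option (Fin n)) {m : ℕ} {P : HomPoly n}
    (hP : P ∈ bidegree n m) : p[a] * ∂p[b] P ∈ bidegree n m := by
  refine derivation_mem_span_pow (δ := p[a] • ∂p[b]) ?_ hP
  rintro _ ⟨⟨c, d⟩, rfl⟩
  simp only [Derivation.smul_apply, Derivation.leibniz, smul_eq_mul, pderiv_p_p, mul_ite, mul_zero,
    mul_one, pderiv_X_of_ne, ne_eq, reduceCtorEq, not_false_eq_true, add_zero]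
  split_ifs
  · exact Submodule.subset_span ⟨(c, a), rfl⟩
  · exact zero_mem _

lemma eulerX_eq_nsmul {m : ℕ} {P : HomPoly n} (hP : P ∈ bidegree n m) : eulerX P = m • P := by
  have hx (a : Option (Fin n)) : eulerX x[a] = x[a] := by
    simp only [eulerX_apply, pderiv_x_x, mul_ite, mul_one, mul_zero, sum_ite_eq', mem_univ, if_true]
  have hp (a : Option (Fin n)) : eulerX p[a] = 0 := by
    simp only [eulerX_apply, pderiv_X_of_ne, ne_eq, reduceCtorEq, not_false_eq_true, mul_zero,
      sum_const_zero]
  refine derivation_eq_nsmul_of_mem_span_pow ?_ hP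
  rintro _ ⟨⟨a, b⟩, rfl⟩
  rw [Derivation.leibniz, hx, hp, smul_zero, zero_add, smul_eq_mul, mul_comm]

lemma eulerP_eq_nsmul {m : ℕ} {P : HomPoly n} (hP : P ∈ bidegree n m) : eulerP P = m • P := by
  have hp (a : Option (Fin n)) : eulerP p[a] = p[a] := by
    simp only [eulerP_apply, pderiv_p_p, mul_ite, mul_one, mul_zero, sum_ite_eq', mem_univ, if_true]
  have hx (a : Option (Fin n)) : eulerP x[a] = 0 := by
    simp only [eulerP_apply, pderiv_X_of_ne, ne_eq, reduceCtorEq, not_false_eq_true, mul_zero,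
      sum_const_zero]
  refine derivation_eq_nsmul_of_mem_span_pow ?_ hP
  rintro _ ⟨⟨a, b⟩, rfl⟩
  simp only [Derivation.leibniz, hx, hp, smul_eq_mul, mul_zero, add_zero]

lemma pderiv_eq_zero_of_mem_bidegree_zero {P : HomPoly n} (hP : P ∈ bidegree n 0)
    (v : Option (Fin n) ⊕ Option (Fin n)) : pderiv v P = 0 := by
  obtain ⟨z, rfl⟩ := Submodule.mem_one.mp (bidegree_zero (n := n) ▸ hP)
  exact Derivation.map_algebraMap _ z

lemma laplacian_eq_zero_of_mem_bidegree_zero {P : HomPoly n} (hP : P ∈ bidegree n 0) :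
    laplacian P = 0 := by
  simp [laplacian_apply, pderiv_eq_zero_of_mem_bidegree_zero hP]

lemma laplacian_x_mul_p_mul (a b : Option (Fin n)) (P : HomPoly n) :
    laplacian (x[a] * p[b] * P) = x[a] * p[b] * laplacian P + x[a] * ∂x[b] P + p[b] * ∂p[a] P +
      if a = b then P else 0 := by
  have hterm (c : Option (Fin n)) : ∂x[c] (∂p[c] (x[a] * p[b] * P)) =
      x[a] * p[b] * ∂x[c] (∂p[c] P) + (if c = b then x[a] * ∂x[c] P else 0) +
        (if c = a then p[b] * ∂p[c] P else 0) + if c = a then if c = b then P else 0 else 0 := by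
    simp only [Derivation.leibniz, smul_eq_mul, map_add, pderiv_x_x, pderiv_p_p, pderiv_X_of_ne,
      ne_eq, reduceCtorEq, not_false_eq_true, mul_zero, zero_add, add_zero]
    split_ifs <;> simp <;> ring
  simp only [laplacian_apply, hterm, sum_add_distrib, mul_sum, sum_ite_eq', mem_univ, if_true]

lemma laplacian_mem_bidegree {m : ℕ} {P : HomPoly n} (hP : P ∈ bidegree n (m + 1)) :
    laplacian P ∈ bidegree n m := by
  suffices h : bidegree n (m + 1) ≤ (bidegree n m).comap laplacian from h hP
  clear hP P
  induction m with
  | zero =>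
    refine bidegree_succ_le fun a b P hP ↦ ?_
    rw [Submodule.mem_comap, laplacian_x_mul_p_mul, laplacian_eq_zero_of_mem_bidegree_zero hP,
      pderiv_eq_zero_of_mem_bidegree_zero hP, pderiv_eq_zero_of_mem_bidegree_zero hP]
    split_ifs
    · simpa only [mul_zero, zero_add] using hP
    · simp only [mul_zero, add_zero, zero_mem]
  | succ m ih =>
    refine bidegree_succ_le fun a b P hP ↦ ?_
    rw [Submodule.mem_comap, laplacian_x_mul_p_mul]
    refine add_mem (add_mem (add_mem (x_mul_p_mul_mem_bidegree a b (ih hP))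
      (x_mul_pderiv_x_mem_bidegree a b hP)) (p_mul_pderiv_p_mem_bidegree b a hP)) ?_
    split_ifs
    exacts [hP, zero_mem _]

/-- The quadratic form `Σ_a x_a p_a`, whose zero set contains the image of the affine chart. -/
noncomputable def quadric (n : ℕ) : HomPoly n := ∑ a, x[a] * p[a]

lemma dehomogenize_quadric : Θ (quadric n) = 0 := by
  simp [quadric, Fintype.sum_option]

lemma quadric_mul_mem_bidegree {m : ℕ} {P : HomPoly n} (hP : P ∈ bidegree n m) :
    quadric n * P ∈ bidegree n (m + 1) := by
  rw [quadric, sum_mul]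
  exact sum_mem fun a _ ↦ x_mul_p_mul_mem_bidegree a a hP

lemma laplacian_quadric_mul (P : HomPoly n) :
    laplacian (quadric n * P) =
      quadric n * laplacian P + eulerX P + eulerP P + (n + 1) • P := by
  simp only [quadric, sum_mul, map_sum, laplacian_x_mul_p_mul, sum_add_distrib, eulerX_apply,
    eulerP_apply, if_true, sum_const, card_univ, Fintype.card_option, Fintype.card_fin]

lemma dehomogenize_bilinearMonomials_subset :
    Θ '' bilinearMonomials n ⊆ momSpan n := by
  have hxi (i : Fin n) : ξ[i] ∈ momSpan n := Submodule.subset_span (.inl (.inl ⟨i, rfl⟩))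
  have hu_xi (i j : Fin n) : u[i] * ξ[j] ∈ momSpan n :=
    Submodule.subset_span (.inl (.inr ⟨(i, j), rfl⟩))
  have hu_sum (i : Fin n) : u[i] * ∑ k, u[k] * ξ[k] ∈ momSpan n :=
    Submodule.subset_span (.inr ⟨i, rfl⟩)
  rintro _ ⟨_, ⟨⟨_ | i, _ | j⟩, rfl⟩, rfl⟩ <;>
    simp only [SetLike.mem_coe, map_mul, dehomogenize_x_none, dehomogenize_x_some,
      dehomogenize_p_none, dehomogenize_p_some, one_mul, mul_neg]
  · exact neg_mem (sum_mem fun k _ ↦ hu_xi k k)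
  · exact hxi j
  · exact neg_mem (hu_sum i)
  · exact hu_xi i j

lemma momSet_subset_map_dehomogenize :
    momSet n ⊆ (Submodule.span ℂ (bilinearMonomials n)).map dehomogenize.toLinearMap := by
  have hmem (a b : Option (Fin n)) : Θ (x[a] * p[b]) ∈
      (Submodule.span ℂ (bilinearMonomials n)).map dehomogenize.toLinearMap :=
    Submodule.mem_map_of_mem (Submodule.subset_span ⟨(a, b), rfl⟩)
  rintro _ ((⟨i, rfl⟩ | ⟨⟨i, j⟩, rfl⟩) | ⟨i, rfl⟩)
  · simpa using hmem none (some i)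
  · simpa using hmem (some i) (some j)
  · simpa using hmem (some i) none

lemma map_dehomogenize_bidegree (n m : ℕ) :
    (bidegree n m).map dehomogenize.toLinearMap = momSpan n ^ m := by
  rw [bidegree, Submodule.map_pow]
  congr 1
  refine le_antisymm ?_ (Submodule.span_le.mpr momSet_subset_map_dehomogenize)
  rw [Submodule.map_span]
  exact Submodule.span_le.mpr dehomogenize_bilinearMonomials_subset

end Bidegree

section FischerDecomposition

/-- The bihomogeneous polynomials of bidegree `(m, m)` killed by the Laplacian. -/
noncomputable def harmonic (n m : ℕ) : Submodule ℂ (HomPoly n) :=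
  bidegree n m ⊓ LinearMap.ker laplacian

/-- The products of a power of the quadric by a harmonic polynomial, of bidegree `(m, m)`. -/
def quadricPowMulHarmonic (n m : ℕ) : Set (HomPoly n) :=
  {P | ∃ k l, k + l = m ∧ ∃ h ∈ harmonic n l, quadric n ^ k * h = P}

lemma quadric_pow_mul_mem_bidegree {l : ℕ} {P : HomPoly n} (hP : P ∈ bidegree n l) (k : ℕ) :
    quadric n ^ k * P ∈ bidegree n (k + l) := by
  induction k with
  | zero => rwa [pow_zero, one_mul, zero_add]
  | succ k ih =>
    rw [pow_succ', mul_assoc, Nat.succ_add]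
    exact quadric_mul_mem_bidegree ih

lemma laplacian_quadric_pow_mul {l : ℕ} {h : HomPoly n} (hh : h ∈ harmonic n l) (k : ℕ) :
    laplacian (quadric n ^ (k + 1) * h) =
      ((k + 1) * (k + 2 * l + n + 1)) • (quadric n ^ k * h) := by
  have hstep (k : ℕ) : laplacian (quadric n ^ (k + 1) * h) =
      quadric n * laplacian (quadric n ^ k * h) +
        (2 * (k + l) + n + 1) • (quadric n ^ k * h) := by
    have hmem := quadric_pow_mul_mem_bidegree hh.1 k
    rw [pow_succ', mul_assoc, laplacian_quadric_mul, eulerX_eq_nsmul hmem, eulerP_eq_nsmul hmem]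
    module
  induction k with
  | zero =>
    rw [hstep, pow_zero, one_mul, LinearMap.mem_ker.mp hh.2]
    simp
  | succ k ih =>
    rw [hstep, ih, mul_smul_comm, ← mul_assoc, ← pow_succ', ← add_smul]
    congr 1
    ring

lemma span_quadricPowMulHarmonic_le (n m : ℕ) :
    Submodule.span ℂ (quadricPowMulHarmonic n m) ≤ bidegree n m := by
  rw [Submodule.span_le]
  rintro _ ⟨k, l, rfl, h, hh, rfl⟩
  exact quadric_pow_mul_mem_bidegree hh.1 k

lemma quadric_mul_mem_span_quadricPowMulHarmonic {m : ℕ} {P : HomPoly n}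
    (hP : P ∈ Submodule.span ℂ (quadricPowMulHarmonic n m)) :
    quadric n * P ∈ Submodule.span ℂ (quadricPowMulHarmonic n (m + 1)) := by
  suffices hle : Submodule.span ℂ (quadricPowMulHarmonic n m) ≤
      (Submodule.span ℂ (quadricPowMulHarmonic n (m + 1))).comap
        (LinearMap.mulLeft ℂ (quadric n)) from hle hP
  rw [Submodule.span_le]
  rintro _ ⟨k, l, rfl, h, hh, rfl⟩
  exact Submodule.subset_span ⟨k + 1, l, by ring, h, hh, by rw [pow_succ', mul_assoc]; rfl⟩

lemma exists_laplacian_quadric_mul_eq {m : ℕ} {P : HomPoly n}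
    (hP : P ∈ Submodule.span ℂ (quadricPowMulHarmonic n m)) :
    ∃ Q ∈ Submodule.span ℂ (quadricPowMulHarmonic n m), laplacian (quadric n * Q) = P := by
  suffices hle : Submodule.span ℂ (quadricPowMulHarmonic n m) ≤
      (Submodule.span ℂ (quadricPowMulHarmonic n m)).map
        (laplacian ∘ₗ LinearMap.mulLeft ℂ (quadric n)) from hle hP
  rw [Submodule.span_le]
  rintro _ ⟨k, l, rfl, h, hh, rfl⟩
  have hne : (((k + 1) * (k + 2 * l + n + 1) : ℕ) : ℂ) ≠ 0 :=
    Nat.cast_ne_zero.mpr (by positivity)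
  refine ⟨(((k + 1) * (k + 2 * l + n + 1) : ℕ) : ℂ)⁻¹ • (quadric n ^ k * h),
    Submodule.smul_mem _ _ (Submodule.subset_span ⟨k, l, rfl, h, hh, rfl⟩), ?_⟩
  rw [map_smul, LinearMap.comp_apply, LinearMap.mulLeft_apply, ← mul_assoc, ← pow_succ',
    laplacian_quadric_pow_mul hh, ← Nat.cast_smul_eq_nsmul ℂ, inv_smul_smul₀ hne]

lemma bidegree_le_span_quadricPowMulHarmonic (n m : ℕ) :
    bidegree n m ≤ Submodule.span ℂ (quadricPowMulHarmonic n m) := by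
  have hharmonic {m : ℕ} {h : HomPoly n} (hh : h ∈ harmonic n m) :
      h ∈ Submodule.span ℂ (quadricPowMulHarmonic n m) :=
    Submodule.subset_span ⟨0, m, zero_add m, h, hh, by rw [pow_zero, one_mul]⟩
  induction m with
  | zero => exact fun P hP ↦ hharmonic ⟨hP, laplacian_eq_zero_of_mem_bidegree_zero hP⟩
  | succ m ih =>
    intro P hP
    obtain ⟨Q, hQ, hlap⟩ := exists_laplacian_quadric_mul_eq (ih (laplacian_mem_bidegree hP))
    have hQ' := quadric_mul_mem_span_quadricPowMulHarmonic hQ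
    rw [← sub_add_cancel P (quadric n * Q)]
    refine add_mem (hharmonic ⟨sub_mem hP (span_quadricPowMulHarmonic_le n _ hQ'), ?_⟩) hQ'
    rw [SetLike.mem_coe, LinearMap.mem_ker, map_sub, hlap, sub_self]

end FischerDecomposition

section TwistedRestriction

/-- The twisted restriction `P ↦ Θ((1 - ħ ∂/∂p_0)^(x - 1) P)` to the affine chart. -/
noncomputable def twist (x : ℂ) : HomPoly n →ₗ[ℂ] PowerSeries (PolA n) where
  toFun P := .mk fun j ↦ Ring.multichoose (1 - x) j • Θ ((∂p[none])^[j] P)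
  map_add' P Q := by
    ext1 j
    simp only [iterate_map_add, map_add, smul_add, PowerSeries.coeff_mk]
  map_smul' a P := by
    ext1 j
    have hsmul : (∂p[none])^[j] (a • P) = a • (∂p[none])^[j] P :=
      Function.Commute.iterate_left (g := (a • ·)) (fun P ↦ Derivation.map_smul _ a P) j P
    simp only [hsmul, map_smul, smul_comm a, PowerSeries.coeff_mk, PowerSeries.coeff_smul,
      RingHom.id_apply]

lemma coeff_twist (x : ℂ) (P : HomPoly n) (j : ℕ) :
    PowerSeries.coeff j (twist x P) = Ring.multichoose (1 - x) j • Θ ((∂p[none])^[j] P) := by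
  simp only [twist, LinearMap.coe_mk, AddHom.coe_mk, PowerSeries.coeff_mk]

lemma twist_add_one (x : ℂ) (P : HomPoly n) :
    twist (x + 1) P = twist x P - ħ * twist x (∂p[none] P) := by
  ext1 j
  cases j with
  | zero => simp only [map_sub, coeff_twist, Ring.multichoose_zero_right,
      PowerSeries.coeff_zero_X_mul, sub_zero]
  | succ j =>
    rw [map_sub, PowerSeries.coeff_succ_X_mul, coeff_twist, coeff_twist, coeff_twist,
      sub_add_cancel_right, multichoose_neg_succ, sub_smul, Function.iterate_succ_apply]

lemma pderiv_iterate_mul_of_pderiv_eq_zero {Q : HomPoly n} (hQ : ∂p[none] Q = 0) (P : HomPoly n)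
    (j : ℕ) : (∂p[none])^[j] (Q * P) = Q * (∂p[none])^[j] P := by
  induction j generalizing P with
  | zero => rfl
  | succ j ih =>
    rw [Function.iterate_succ_apply, Derivation.leibniz, hQ, smul_zero, add_zero, smul_eq_mul, ih,
      Function.iterate_succ_apply]

lemma twist_mul_of_pderiv_eq_zero (x : ℂ) {Q : HomPoly n} (hQ : ∂p[none] Q = 0)
    (P : HomPoly n) : twist x (Q * P) = PowerSeries.C (Θ Q) * twist x P := by
  ext1 j
  rw [PowerSeries.coeff_C_mul, coeff_twist, coeff_twist, pderiv_iterate_mul_of_pderiv_eq_zero hQ,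
    map_mul, mul_smul_comm]

lemma twist_x_mul (x : ℂ) (a : Option (Fin n)) (P : HomPoly n) :
    twist x (x[a] * P) = PowerSeries.C (Θ x[a]) * twist x P :=
  twist_mul_of_pderiv_eq_zero x (pderiv_X_of_ne Sum.inl_ne_inr) P

lemma twist_p_some_mul (x : ℂ) (i : Fin n) (P : HomPoly n) :
    twist x (p[some i] * P) = PowerSeries.C ξ[i] * twist x P := by
  rw [twist_mul_of_pderiv_eq_zero x (pderiv_X_of_ne (by simp)) P, dehomogenize_p_some]

lemma pderiv_iterate_p_none_mul (P : HomPoly n) (j : ℕ) :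
    (∂p[none])^[j + 1] (p[none] * P) =
      p[none] * (∂p[none])^[j + 1] P + (j + 1) • (∂p[none])^[j] P := by
  induction j with
  | zero => simp [Derivation.leibniz, add_comm]
  | succ j ih =>
    rw [Function.iterate_succ_apply', ih, map_add, map_nsmul, Derivation.leibniz, pderiv_X_self,
      smul_eq_mul, smul_eq_mul, mul_one, ← Function.iterate_succ_apply' ∂p[none] (j + 1),
      ← Function.iterate_succ_apply' ∂p[none] j, add_assoc, ← succ_nsmul']

lemma twist_p_none_mul (x : ℂ) (P : HomPoly n) :
    twist (x + 1) (p[none] * P) =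
      PowerSeries.C (Θ p[none]) * twist (x + 1) P - x • (ħ * twist x P) := by
  ext1 j
  rw [map_sub, PowerSeries.coeff_C_mul, PowerSeries.coeff_smul]
  cases j with
  | zero => simp [coeff_twist]
  | succ j =>
    have hbinom : Ring.multichoose (-x) (j + 1) * (j + 1) = -x * Ring.multichoose (1 - x) j := by
      rw [mul_comm, succ_mul_multichoose_succ, neg_add_eq_sub]
    rw [PowerSeries.coeff_succ_X_mul, coeff_twist, coeff_twist, coeff_twist,
      sub_add_cancel_right, pderiv_iterate_p_none_mul, map_add, map_mul, map_nsmul, smul_add,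
      mul_smul_comm, ← Nat.cast_smul_eq_nsmul ℂ, smul_smul, smul_smul, Nat.cast_succ, hbinom,
      neg_mul, neg_smul, ← sub_eq_add_neg]

lemma twist_one (x : ℂ) : twist x (1 : HomPoly n) = 1 := by
  ext1 j
  cases j with
  | zero => simp [coeff_twist]
  | succ j =>
    simp [coeff_twist, Function.iterate_succ_apply, iterate_map_zero, PowerSeries.coeff_one]

lemma twist_quadric_mul (x : ℂ) (P : HomPoly n) :
    twist (x + 1) (quadric n * P) = -x • (ħ * twist x P) := by
  have hC : PowerSeries.C (Θ p[none] : PolA n) +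
      ∑ i : Fin n, PowerSeries.C u[i] * PowerSeries.C ξ[i] = 0 := by
    simp only [← map_mul, ← map_sum, ← map_add, dehomogenize_p_none, neg_add_cancel, map_zero]
  rw [quadric, sum_mul, map_sum, Fintype.sum_option]
  simp only [mul_assoc, twist_x_mul, twist_p_some_mul, twist_p_none_mul, dehomogenize_x_none,
    dehomogenize_x_some, map_one, one_mul]
  simp only [← mul_assoc, ← sum_mul]
  rw [sub_add_eq_add_sub, ← add_mul, hC, zero_mul, zero_sub, neg_smul]

lemma pderiv_iterate_comm (v : Option (Fin n) ⊕ Option (Fin n)) (j : ℕ) (P : HomPoly n) :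
    pderiv v ((∂p[none])^[j] P) = (∂p[none])^[j] (pderiv v P) :=
  Function.Commute.iterate_right (fun P ↦ pderiv_comm v (Sum.inr none) P) j P

lemma coeffDerivation_pderiv_u_twist (x : ℂ) (i : Fin n) (P : HomPoly n) :
    coeffDerivation ∂u[i] (twist x P) =
      twist x (∂x[some i] P) - PowerSeries.C ξ[i] * twist x (∂p[none] P) := by
  ext1 j
  rw [map_sub, PowerSeries.coeff_C_mul, coeff_coeffDerivation, coeff_twist, coeff_twist,
    coeff_twist, Derivation.map_smul, pderiv_u_dehomogenize, pderiv_iterate_comm, map_sub, map_mul,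
    dehomogenize_p_some, smul_sub, mul_smul_comm, pderiv_iterate_comm]

end TwistedRestriction

section QuantizationOfHarmonics

lemma eulerX_pderiv_p (P : HomPoly n) : eulerX (∂p[none] P) = ∂p[none] (eulerX P) := by
  simp only [eulerX_apply, map_sum, Derivation.leibniz, smul_eq_mul, pderiv_X_of_ne, ne_eq,
    reduceCtorEq, not_false_eq_true, mul_zero, add_zero, pderiv_comm (Sum.inr none)]

lemma eulerP_pderiv_p (P : HomPoly n) :
    eulerP (∂p[none] P) = ∂p[none] (eulerP P) - ∂p[none] P := by
  simp only [eulerP_apply, map_sum, Derivation.leibniz, smul_eq_mul, pderiv_p_p,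
    pderiv_comm (Sum.inr none), sum_add_distrib, mul_ite, mul_one, mul_zero, sum_ite_eq, mem_univ,
    if_true, add_sub_cancel_right]

lemma eulerX_pderiv_iterate {z : ℂ} {P : HomPoly n} (hP : eulerX P = z • P) (j : ℕ) :
    eulerX ((∂p[none])^[j] P) = z • (∂p[none])^[j] P := by
  induction j with
  | zero => exact hP
  | succ j ih => rw [Function.iterate_succ_apply', eulerX_pderiv_p, ih, Derivation.map_smul]

lemma eulerP_pderiv_iterate {z : ℂ} {P : HomPoly n} (hP : eulerP P = z • P) (j : ℕ) :
    eulerP ((∂p[none])^[j] P) = (z - j) • (∂p[none])^[j] P := by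
  induction j with
  | zero => rwa [Nat.cast_zero, sub_zero]
  | succ j ih =>
    rw [Function.iterate_succ_apply', eulerP_pderiv_p, ih, Derivation.map_smul, Nat.cast_succ]
    module

lemma laplacian_pderiv_p (P : HomPoly n) : laplacian (∂p[none] P) = ∂p[none] (laplacian P) := by
  simp only [laplacian_apply, map_sum, pderiv_comm (Sum.inr none)]

lemma laplacian_pderiv_iterate {P : HomPoly n} (hP : laplacian P = 0) (j : ℕ) :
    laplacian ((∂p[none])^[j] P) = 0 := by
  induction j with
  | zero => exact hP
  | succ j ih => rw [Function.iterate_succ_apply', laplacian_pderiv_p, ih, map_zero]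

lemma Dlin_dehomogenize_pderiv_iterate {m : ℕ} {h : HomPoly n} (hh : h ∈ harmonic n m) (j : ℕ) :
    Dlin n (Θ ((∂p[none])^[j] h)) =
      (-(2 * m + n - 1 - j) : ℂ) • Θ ((∂p[none])^[j + 1] h) := by
  have hX : eulerX h = (m : ℂ) • h := by rw [eulerX_eq_nsmul hh.1, Nat.cast_smul_eq_nsmul]
  have hP : eulerP h = (m : ℂ) • h := by rw [eulerP_eq_nsmul hh.1, Nat.cast_smul_eq_nsmul]
  rw [Dlin_dehomogenize, laplacian_pderiv_iterate hh.2, ← Function.iterate_succ_apply' ∂p[none] j,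
    eulerX_pderiv_iterate hX, eulerP_pderiv_iterate hP, ← map_smul, ← Nat.cast_smul_eq_nsmul ℂ]
  congr 1
  push_cast
  module

lemma Dlin_pow_dehomogenize {m : ℕ} {h : HomPoly n} (hh : h ∈ harmonic n m) (p : ℕ) :
    (Dlin n ^ p) (Θ h) =
      (∏ j ∈ range p, (-(2 * m + n - 1 - j) : ℂ)) • Θ ((∂p[none])^[p] h) := by
  induction p with
  | zero => simp
  | succ p ih =>
    rw [pow_succ', Module.End.mul_apply, ih, map_smul, Dlin_dehomogenize_pderiv_iterate hh,
      smul_smul, prod_range_succ]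

lemma quantize_dehomogenize_of_mem_harmonic (lam : ℂ) {m : ℕ} {h : HomPoly n}
    (hh : h ∈ harmonic n m) : quantize lam (Θ h) = twist (lam * (n + 1) + m) h := by
  have hP : eulerP h = (m : ℂ) • h := by rw [eulerP_eq_nsmul hh.1, Nat.cast_smul_eq_nsmul]
  ext1 p
  have hE : Elin n (Θ ((∂p[none])^[p] h)) = (m - p : ℂ) • Θ ((∂p[none])^[p] h) := by
    rw [Elin_dehomogenize, eulerP_pderiv_iterate hP, map_smul]
  rw [coeff_quantize, coeff_twist, bh, Dop_iterate, Dlin_pow_dehomogenize hh]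
  refine cE_smul_of_Elin_eq_smul hE fun k hk ↦ ?_
  obtain rfl : m = k + p := by exact_mod_cast (eq_sub_iff_add_eq.mp hk).symm
  exact hScal_mul_prod n lam k p

end QuantizationOfHarmonics

section StarProduct

lemma sum_range_ite_eq_sum_antidiagonal {M : Type*} [AddCommMonoid M] (f : ℕ → ℕ → ℕ → ℕ → M)
    (p : ℕ) :
    ∑ i ∈ range (p + 1), ∑ j ∈ range (p + 1), ∑ k ∈ range (p + 1), ∑ m ∈ range (p + 1),
      (if i + j + k + m = p then f i j k m else 0) =
    ∑ x ∈ antidiagonal p, ∑ y ∈ antidiagonal x.2, ∑ z ∈ antidiagonal y.2,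
      f z.1 z.2 y.1 x.1 := by
  simp only [← sum_filter, sum_sigma']
  refine sum_bij' (fun w _ ↦ ⟨(w.2.2.2, w.1 + w.2.1 + w.2.2.1),
      ⟨(w.2.2.1, w.1 + w.2.1), (w.1, w.2.1)⟩⟩)
    (fun s _ ↦ ⟨s.2.2.1, s.2.2.2, s.2.1.1, s.1.1⟩) ?_ ?_ ?_ ?_ ?_
  · simp only [mem_sigma, mem_range, mem_filter, HasAntidiagonal.mem_antidiagonal, and_true]; omega
  · simp only [mem_sigma, mem_range, mem_filter, HasAntidiagonal.mem_antidiagonal]; omega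
  · simp
  · simp only [mem_sigma, HasAntidiagonal.mem_antidiagonal]; grind
  · simp

lemma Nop_eq_contraction (k : ℕ) (φ ψ : PolA n) :
    Nop k φ ψ = contraction (fun i ↦ ∂ξ[i]) (fun i ↦ ∂u[i]) k φ ψ := by
  induction k generalizing φ ψ with
  | zero => simp [Nop, contraction_zero_apply]
  | succ k ih =>
    rw [contraction_succ_apply, Nop, ← (Fin.snocEquiv fun _ ↦ Fin n).sum_comp,
      Fintype.sum_prod_type]
    simp only [← ih, Nop, ← smul_sum, smul_smul]
    congr 1
    · rw [Nat.factorial_succ, Nat.cast_mul, mul_inv]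
    · refine sum_congr rfl fun i _ ↦ sum_congr rfl fun α _ ↦ ?_
      simp only [Fin.snocEquiv, Equiv.coe_fn_mk, List.ofFn_succ', Fin.snoc_castSucc, Fin.snoc_last,
        List.concat_eq_append, List.foldr_append, List.foldr_cons, List.foldr_nil]

lemma LO_C_eq_coeff_dequantize (lam : ℂ) (p : ℕ) (φ ψ : PolA n) :
    LO.C n lam p φ ψ =
      PowerSeries.coeff p (dequantize lam (quantize lam φ ⋆ quantize lam ψ)) := by
  have bg_sum {s : Finset (ℕ × ℕ)} (m : ℕ) (f : ℕ × ℕ → PolA n) :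
      bg lam m (∑ x ∈ s, f x) = ∑ x ∈ s, bg lam m (f x) :=
    map_sum (AddMonoidHom.mk' (bg lam m) (bg_add lam m)) f s
  rw [LO.C, sum_range_ite_eq_sum_antidiagonal (fun i j k m ↦ _), coeff_dequantize]
  simp only [coeff_expStar, coeff_contraction_coeffDerivation, coeff_quantize, bg_sum,
    Nop_eq_contraction]

end StarProduct

section MomentumAction

lemma twist_p_some (x : ℂ) (i : Fin n) : twist x p[some i] = PowerSeries.C ξ[i] := by
  rw [← mul_one p[some i], twist_p_some_mul, twist_one, mul_one]

lemma twist_p_none (c : ℂ) : twist (c + 1) (p[none] : HomPoly n) =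
    -∑ i, PowerSeries.C u[i] * twist (c + 1) p[some i] - c • ħ := by
  rw [← mul_one p[none], twist_p_none_mul, twist_one, twist_one, mul_one, mul_one,
    dehomogenize_p_none]
  simp only [twist_p_some, map_neg, map_sum, map_mul]

lemma C_xi_mul_expStar (i : Fin n) (F G : PowerSeries (PolA n)) :
    (PowerSeries.C ξ[i] * F) ⋆ G =
      PowerSeries.C ξ[i] * (F ⋆ G) + ħ * (F ⋆ coeffDerivation ∂u[i] G) :=
  C_mul_expStar_of_eq_ite (fun j ↦ by classical simp [pderiv_X, Pi.single_apply, eq_comm])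
    (fun j ψ ↦ pderiv_comm _ _ ψ) F G

lemma C_u_mul_expStar (i : Fin n) (F G : PowerSeries (PolA n)) :
    (PowerSeries.C u[i] * F) ⋆ G = PowerSeries.C u[i] * (F ⋆ G) :=
  C_mul_expStar (fun _ ↦ pderiv_X_of_ne Sum.inl_ne_inr) F G

lemma C_dehomogenize_x_mul_expStar (a : Option (Fin n)) (F G : PowerSeries (PolA n)) :
    (PowerSeries.C (Θ x[a]) * F) ⋆ G = PowerSeries.C (Θ x[a]) * (F ⋆ G) := by
  cases a with
  | none => simp only [dehomogenize_x_none, map_one, one_mul]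
  | some i => rw [dehomogenize_x_some, C_u_mul_expStar]

lemma twist_p_some_expStar (x : ℂ) (i : Fin n) (F : PowerSeries (PolA n)) :
    twist x p[some i] ⋆ F = PowerSeries.C ξ[i] * F + ħ * coeffDerivation ∂u[i] F := by
  rw [twist_p_some, ← mul_one (PowerSeries.C ξ[i]), C_xi_mul_expStar, one_expStar, one_expStar,
    mul_one]

lemma twist_p_none_expStar (c : ℂ) (F : PowerSeries (PolA n)) :
    twist (c + 1) p[none] ⋆ F =
      -∑ i, PowerSeries.C u[i] * (twist (c + 1) p[some i] ⋆ F) - c • (ħ * F) := by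
  have hħ : ħ ⋆ F = ħ * F := by rw [← mul_one ħ, X_mul_expStar, one_expStar, mul_one]
  simp only [twist_p_none, map_sub, map_neg, map_sum, map_smul, LinearMap.sub_apply,
    LinearMap.neg_apply, LinearMap.sum_apply, LinearMap.smul_apply, C_u_mul_expStar, hħ]

lemma twist_p_expStar_X_mul (c : ℂ) (b : Option (Fin n)) (F : PowerSeries (PolA n)) :
    twist (c + 1) p[b] ⋆ (ħ * F) = ħ * (twist (c + 1) p[b] ⋆ F) := by
  have hsome (i : Fin n) :
      twist (c + 1) p[some i] ⋆ (ħ * F) = ħ * (twist (c + 1) p[some i] ⋆ F) := by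
    rw [twist_p_some_expStar, twist_p_some_expStar, coeffDerivation_X_mul]
    ring
  cases b with
  | some i => exact hsome i
  | none =>
    simp only [twist_p_none_expStar, hsome, mul_sub, mul_neg, mul_sum, mul_left_comm ħ,
      mul_smul_comm]

lemma twist_p_expStar_assoc (c : ℂ) (b : Option (Fin n)) (F G : PowerSeries (PolA n)) :
    (twist (c + 1) p[b] ⋆ F) ⋆ G = twist (c + 1) p[b] ⋆ (F ⋆ G) := by
  have hsome (i : Fin n) :
      (twist (c + 1) p[some i] ⋆ F) ⋆ G = twist (c + 1) p[some i] ⋆ (F ⋆ G) := by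
    rw [twist_p_some_expStar, twist_p_some_expStar, map_add, LinearMap.add_apply,
      C_xi_mul_expStar, X_mul_expStar,
      coeffDerivation_expStar (fun _ φ ↦ pderiv_comm _ _ φ) (fun _ φ ↦ pderiv_comm _ _ φ)]
    ring
  cases b with
  | some i => exact hsome i
  | none =>
    simp only [twist_p_none_expStar, map_sub, map_neg, map_sum, map_smul, LinearMap.sub_apply,
      LinearMap.neg_apply, LinearMap.sum_apply, LinearMap.smul_apply, C_u_mul_expStar, hsome,
      X_mul_expStar]

lemma twist_p_expStar_twist {c x : ℂ} {P : HomPoly n} (hP : eulerX P = (x - c) • P)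
    (b : Option (Fin n)) :
    twist (c + 1) p[b] ⋆ twist x P = twist (x + 1) (p[b] * P) + ħ * twist x (∂x[b] P) := by
  cases b with
  | some i =>
    rw [twist_p_some_expStar, coeffDerivation_pderiv_u_twist, twist_p_some_mul, twist_add_one]
    ring
  | none =>
    have hE : twist x (∂x[none] P) + ∑ i, PowerSeries.C u[i] * twist x (∂x[some i] P) =
        (x - c) • twist x P := by
      rw [← map_smul, ← hP, eulerX_apply, Fintype.sum_option]
      simp only [map_add, map_sum, twist_x_mul, dehomogenize_x_none, dehomogenize_x_some, map_one,
        one_mul]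
    have hC : PowerSeries.C (Θ p[none] : PolA n) =
        -∑ i : Fin n, PowerSeries.C u[i] * PowerSeries.C ξ[i] := by
      simp only [dehomogenize_p_none, map_neg, map_sum, map_mul]
    have hsum : ∑ i, PowerSeries.C u[i] * (twist (c + 1) p[some i] ⋆ twist x P) =
        ħ * ∑ i, PowerSeries.C u[i] * twist x (∂x[some i] P) -
          PowerSeries.C (Θ p[none]) * twist (x + 1) P := by
      simp only [twist_p_some_expStar, coeffDerivation_pderiv_u_twist, hC, neg_mul, sum_mul,
        mul_sum, sub_neg_eq_add, ← sum_add_distrib, twist_add_one x]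
      exact sum_congr rfl fun i _ ↦ by ring
    rw [twist_p_none_expStar, hsum, twist_p_none_mul, eq_sub_of_add_eq' hE, mul_sub,
      mul_smul_comm]
    module

end MomentumAction

section TwistedBidegreeSpan

/-- The `ħ`-stable span of the restrictions of the bihomogeneous polynomials, those of bidegree
`(m, m)` being twisted by `c + m`. -/
noncomputable def twistedSpan (n : ℕ) (c : ℂ) : Submodule ℂ (PowerSeries (PolA n)) :=
  .span ℂ {F | ∃ k m : ℕ, ∃ P ∈ bidegree n m, ħ ^ k * twist (c + m) P = F}

lemma X_pow_mul_twist_mem_twistedSpan {c : ℂ} (k : ℕ) {m : ℕ} {P : HomPoly n}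
    (hP : P ∈ bidegree n m) : ħ ^ k * twist (c + m) P ∈ twistedSpan n c :=
  Submodule.subset_span ⟨k, m, P, hP, rfl⟩

lemma X_mul_mem_twistedSpan {c : ℂ} {F : PowerSeries (PolA n)} (hF : F ∈ twistedSpan n c) :
    ħ * F ∈ twistedSpan n c := by
  suffices hle : twistedSpan n c ≤ (twistedSpan n c).comap (LinearMap.mulLeft ℂ ħ) from hle hF
  refine Submodule.span_le.mpr ?_
  rintro _ ⟨k, m, P, hP, rfl⟩
  rw [SetLike.mem_coe, Submodule.mem_comap, LinearMap.mulLeft_apply, ← mul_assoc, ← pow_succ']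
  exact X_pow_mul_twist_mem_twistedSpan (k + 1) hP

lemma twist_p_expStar_twist_of_mem_bidegree {c : ℂ} {m : ℕ} {P : HomPoly n}
    (hP : P ∈ bidegree n m) (a b : Option (Fin n)) :
    PowerSeries.C (Θ x[a]) * (twist (c + 1) p[b] ⋆ twist (c + m) P) =
      twist (c + (m + 1 : ℕ)) (x[a] * p[b] * P) + ħ * twist (c + m) (x[a] * ∂x[b] P) := by
  have hE : eulerX P = (c + m - c : ℂ) • P := by
    rw [add_sub_cancel_left, eulerX_eq_nsmul hP, Nat.cast_smul_eq_nsmul]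
  rw [twist_p_expStar_twist hE, mul_assoc x[a], twist_x_mul, twist_x_mul, Nat.cast_succ, add_assoc]
  ring

lemma C_mul_twist_p_expStar_mem_twistedSpan {c : ℂ} {F : PowerSeries (PolA n)}
    (hF : F ∈ twistedSpan n c) (a b : Option (Fin n)) :
    PowerSeries.C (Θ x[a]) * (twist (c + 1) p[b] ⋆ F) ∈ twistedSpan n c := by
  have hpow (k : ℕ) (F : PowerSeries (PolA n)) :
      twist (c + 1) p[b] ⋆ (ħ ^ k * F) = ħ ^ k * (twist (c + 1) p[b] ⋆ F) := by
    induction k with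
    | zero => simp only [pow_zero, one_mul]
    | succ k ih => rw [pow_succ', mul_assoc, twist_p_expStar_X_mul, ih, mul_assoc]
  suffices hle : twistedSpan n c ≤ (twistedSpan n c).comap
      (LinearMap.mulLeft ℂ (PowerSeries.C (Θ x[a])) ∘ₗ
        expStar (fun i ↦ ∂ξ[i]) (fun i ↦ ∂u[i]) (twist (c + 1) p[b])) from hle hF
  refine Submodule.span_le.mpr ?_
  rintro _ ⟨k, m, P, hP, rfl⟩
  rw [SetLike.mem_coe, Submodule.mem_comap, LinearMap.comp_apply, LinearMap.mulLeft_apply, hpow,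
    mul_left_comm, twist_p_expStar_twist_of_mem_bidegree hP, mul_add, ← mul_assoc (ħ ^ k),
    ← pow_succ]
  exact add_mem (X_pow_mul_twist_mem_twistedSpan k (x_mul_p_mul_mem_bidegree a b hP))
    (X_pow_mul_twist_mem_twistedSpan (k + 1) (x_mul_pderiv_x_mem_bidegree a b hP))

lemma twist_expStar_mem_twistedSpan {c : ℂ} {G : PowerSeries (PolA n)}
    (hG : G ∈ twistedSpan n c) {m : ℕ} {P : HomPoly n} (hP : P ∈ bidegree n m) :
    twist (c + m) P ⋆ G ∈ twistedSpan n c := by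
  induction m generalizing P with
  | zero =>
    obtain ⟨z, rfl⟩ := Submodule.mem_one.mp (bidegree_zero (n := n) ▸ hP)
    rw [Algebra.algebraMap_eq_smul_one, map_smul, twist_one, map_smul, LinearMap.smul_apply,
      one_expStar]
    exact Submodule.smul_mem _ z hG
  | succ m ih =>
    suffices hle : bidegree n (m + 1) ≤ (twistedSpan n c).comap
        ((expStar (fun i ↦ ∂ξ[i]) fun i ↦ ∂u[i]).flip G ∘ₗ twist (c + (m + 1 : ℕ))) from hle hP
    refine bidegree_succ_le fun a b P hP ↦ ?_
    rw [Submodule.mem_comap, LinearMap.comp_apply, LinearMap.flip_apply,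
      eq_sub_of_add_eq (twist_p_expStar_twist_of_mem_bidegree hP a b).symm, map_sub,
      LinearMap.sub_apply, C_dehomogenize_x_mul_expStar, twist_p_expStar_assoc, X_mul_expStar]
    exact sub_mem (C_mul_twist_p_expStar_mem_twistedSpan (ih hP) a b)
      (X_mul_mem_twistedSpan (ih (x_mul_pderiv_x_mem_bidegree a b hP)))

lemma expStar_mem_twistedSpan {c : ℂ} {F G : PowerSeries (PolA n)} (hF : F ∈ twistedSpan n c)
    (hG : G ∈ twistedSpan n c) : F ⋆ G ∈ twistedSpan n c := by
  suffices hle : twistedSpan n c ≤ (twistedSpan n c).comap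
      ((expStar (fun i ↦ ∂ξ[i]) fun i ↦ ∂u[i]).flip G) from hle hF
  refine Submodule.span_le.mpr ?_
  rintro _ ⟨k, m, P, hP, rfl⟩
  rw [SetLike.mem_coe, Submodule.mem_comap, LinearMap.flip_apply]
  induction k with
  | zero => simpa only [pow_zero, one_mul] using twist_expStar_mem_twistedSpan hG hP
  | succ k ih =>
    rw [pow_succ', mul_assoc, X_mul_expStar]
    exact X_mul_mem_twistedSpan ih

end TwistedBidegreeSpan

section MomentumAlgebra

lemma adjoin_momSet_eq_iSup (n : ℕ) :
    Subalgebra.toSubmodule (Algebra.adjoin ℂ (momSet n)) =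
      ⨆ m, (bidegree n m).map dehomogenize.toLinearMap := by
  simp only [adjoin_toSubmodule_eq_iSup_span_pow, map_dehomogenize_bidegree, momSpan]

lemma dehomogenize_mem_adjoin_momSet {m : ℕ} {P : HomPoly n} (hP : P ∈ bidegree n m) :
    Θ P ∈ Algebra.adjoin ℂ (momSet n) := by
  rw [← Subalgebra.mem_toSubmodule, adjoin_momSet_eq_iSup]
  exact Submodule.mem_iSup_of_mem m (Submodule.mem_map_of_mem hP)

lemma quantize_mem_twistedSpan (lam : ℂ) {φ : PolA n} (hφ : φ ∈ Algebra.adjoin ℂ (momSet n)) :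
    quantize lam φ ∈ twistedSpan n (lam * (n + 1)) := by
  suffices hle : Subalgebra.toSubmodule (Algebra.adjoin ℂ (momSet n)) ≤
      (twistedSpan n (lam * (n + 1))).comap (quantize lam) from hle hφ
  rw [adjoin_momSet_eq_iSup]
  refine iSup_le fun m ↦ Submodule.map_le_iff_le_comap.mpr
    ((bidegree_le_span_quadricPowMulHarmonic n m).trans (Submodule.span_le.mpr ?_))
  rintro _ ⟨k, l, rfl, h, hh, rfl⟩
  rw [SetLike.mem_coe, Submodule.mem_comap, Submodule.mem_comap, AlgHom.toLinearMap_apply, map_mul,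
    map_pow, dehomogenize_quadric]
  cases k with
  | zero =>
    rw [pow_zero, one_mul, quantize_dehomogenize_of_mem_harmonic lam hh]
    simpa only [pow_zero, one_mul] using X_pow_mul_twist_mem_twistedSpan 0 hh.1
  | succ k =>
    rw [zero_pow k.succ_ne_zero, zero_mul, map_zero]
    exact zero_mem _

lemma exists_twist_quadric_pow_mul_eq_smul (x : ℂ) (k : ℕ) (P : HomPoly n) :
    ∃ z : ℂ, twist (x + k) (quadric n ^ k * P) = z • (ħ ^ k * twist x P) := by
  induction k with
  | zero => exact ⟨1, by simp⟩
  | succ k ih =>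
    obtain ⟨z, hz⟩ := ih
    refine ⟨-(x + k) * z, ?_⟩
    rw [Nat.cast_succ, ← add_assoc, pow_succ', mul_assoc, twist_quadric_mul, hz, mul_smul_comm,
      smul_smul, ← mul_assoc, ← pow_succ']

lemma coeff_dequantize_X_pow_mul_mem_adjoin (lam : ℂ) {m : ℕ} {P : HomPoly n}
    (hP : P ∈ bidegree n m) (j p : ℕ) :
    PowerSeries.coeff p (dequantize lam (ħ ^ j * twist (lam * (n + 1) + m) P)) ∈
      Algebra.adjoin ℂ (momSet n) := by
  suffices hle : bidegree n m ≤ (Subalgebra.toSubmodule (Algebra.adjoin ℂ (momSet n))).comap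
      ((PowerSeries.coeff p).restrictScalars ℂ ∘ₗ dequantize lam ∘ₗ
        LinearMap.mulLeft ℂ (ħ ^ j) ∘ₗ twist (lam * (n + 1) + m)) from hle hP
  refine (bidegree_le_span_quadricPowMulHarmonic n m).trans (Submodule.span_le.mpr ?_)
  rintro _ ⟨k, l, rfl, h, hh, rfl⟩
  obtain ⟨z, hz⟩ := exists_twist_quadric_pow_mul_eq_smul (lam * (n + 1) + l) k h
  have hcoeff : PowerSeries.coeff p (dequantize lam
      (ħ ^ j * twist (lam * (n + 1) + (k + l : ℕ)) (quadric n ^ k * h))) =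
        z • if p = j + k then Θ h else 0 := by
    rw [Nat.cast_add, add_comm (k : ℂ), ← add_assoc, hz, mul_smul_comm, map_smul, ← mul_assoc,
      ← pow_add, ← quantize_dehomogenize_of_mem_harmonic lam hh, dequantize_X_pow_mul_quantize,
      PowerSeries.coeff_smul, mul_comm, PowerSeries.coeff_C_mul_X_pow]
  simp only [SetLike.mem_coe, Submodule.mem_comap, LinearMap.comp_apply,
    LinearMap.restrictScalars_apply, LinearMap.mulLeft_apply, hcoeff, Subalgebra.mem_toSubmodule]
  refine Subalgebra.smul_mem _ ?_ z
  split_ifs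
  exacts [dehomogenize_mem_adjoin_momSet hh.1, zero_mem _]

lemma coeff_dequantize_mem_adjoin (lam : ℂ) {F : PowerSeries (PolA n)}
    (hF : F ∈ twistedSpan n (lam * (n + 1))) (p : ℕ) :
    PowerSeries.coeff p (dequantize lam F) ∈ Algebra.adjoin ℂ (momSet n) := by
  suffices hle : twistedSpan n (lam * (n + 1)) ≤
      (Subalgebra.toSubmodule (Algebra.adjoin ℂ (momSet n))).comap
        ((PowerSeries.coeff p).restrictScalars ℂ ∘ₗ dequantize lam) from hle hF
  refine Submodule.span_le.mpr ?_
  rintro _ ⟨j, m, P, hP, rfl⟩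
  exact coeff_dequantize_X_pow_mul_mem_adjoin lam hP j p

end MomentumAlgebra

end LecomteOvsienko

/-- Proposition 3: `⋆_λ` restricts to the momentum algebra
`R = ℂ⟨momentum functions⟩`: all coefficients `C^λ_p(φ,ψ)` of `φ ⋆_λ ψ` lie in `R`
whenever `φ, ψ ∈ R`. -/
theorem stmt_11 (n : ℕ) (hn : 1 ≤ n) (lam : ℂ) (p : ℕ) (φ ψ : PolA n)
    (hφ : φ ∈ Algebra.adjoin ℂ (LO.momSet n))
    (hψ : ψ ∈ Algebra.adjoin ℂ (LO.momSet n)) :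
    LO.C n lam p φ ψ ∈ Algebra.adjoin ℂ (LO.momSet n) := by
  have hφψ := LecomteOvsienko.expStar_mem_twistedSpan
    (LecomteOvsienko.quantize_mem_twistedSpan lam hφ)
    (LecomteOvsienko.quantize_mem_twistedSpan lam hψ)
  rw [LecomteOvsienko.LO_C_eq_coeff_dequantize]
  exact LecomteOvsienko.coeff_dequantize_mem_adjoin lam hφψ p
end
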